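/- Let n₁, n₂ ≥ 1 be integers and μ ∈ ℝ. Let u be a positive C² function on ℝ^{n₁}×(0,∞)×ℝ^{n₂}×(0,∞) satisfying −(Δ₁ + Δ₂)u = μu, and assume u is minimal, i.e. every C² solution v of −(Δ₁ + Δ₂)v = μv with 0 ≤ v ≤ u is of the form v = C·u for some constant C ∈ [0,1]. Then there exist μ₁, μ₂ ∈ ℝ with μ₁ + μ₂ = μ, μ₁ ≤ n₁²/4 and μ₂ ≤ n₂²/4, and positive minimal C² solutions u₁ of −Δ₁u₁ = μ₁u₁ on ℝ^{n₁}×(0,∞) and u₂ of −Δ₂u₂ = μ₂u₂ on ℝ^{n₂}×(0,∞), such that u(x₁,y₁,x₂,y₂) = u₁(x₁,y₁)·u₂(x₂,y₂). -/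

import Mathlib

open Real Topology

noncomputable def lapX {n : ℕ} (u : EuclideanSpace ℝ (Fin n) → ℝ → ℝ)
    (x : EuclideanSpace ℝ (Fin n)) (y : ℝ) : ℝ :=
  ∑ i : Fin n, iteratedDeriv 2 (fun t : ℝ => u (x + t • EuclideanSpace.single i (1:ℝ)) y) 0

noncomputable def hypLap (n : ℕ) (u : EuclideanSpace ℝ (Fin n) → ℝ → ℝ)
    (x : EuclideanSpace ℝ (Fin n)) (y : ℝ) : ℝ :=
  y ^ 2 * (lapX u x y + iteratedDeriv 2 (u x) y) - ((n : ℝ) - 1) * y * deriv (u x) y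

noncomputable def hypLap1 (n₁ n₂ : ℕ)
    (u : EuclideanSpace ℝ (Fin n₁) → ℝ → EuclideanSpace ℝ (Fin n₂) → ℝ → ℝ)
    (x₁ : EuclideanSpace ℝ (Fin n₁)) (y₁ : ℝ)
    (x₂ : EuclideanSpace ℝ (Fin n₂)) (y₂ : ℝ) : ℝ :=
  hypLap n₁ (fun x y => u x y x₂ y₂) x₁ y₁

noncomputable def hypLap2 (n₁ n₂ : ℕ)
    (u : EuclideanSpace ℝ (Fin n₁) → ℝ → EuclideanSpace ℝ (Fin n₂) → ℝ → ℝ)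
    (x₁ : EuclideanSpace ℝ (Fin n₁)) (y₁ : ℝ)
    (x₂ : EuclideanSpace ℝ (Fin n₂)) (y₂ : ℝ) : ℝ :=
  hypLap n₂ (u x₁ y₁) x₂ y₂

/-- `w` is a positive minimal C² `μ`-harmonic function on the half-space model `ℍ^{n+1}`:
it is positive, C², solves `-Δ w = μ w`, and every C² solution `v` of the same equation
with `0 ≤ v ≤ w` is a constant multiple `C·w`, `C ∈ [0,1]`. -/
def MinimalHarmonic (n : ℕ) (μ : ℝ) (w : EuclideanSpace ℝ (Fin n) → ℝ → ℝ) : Prop :=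
  (∀ x, ∀ y : ℝ, 0 < y → 0 < w x y) ∧
  ContDiffOn ℝ 2 (fun p : EuclideanSpace ℝ (Fin n) × ℝ => w p.1 p.2)
    {p : EuclideanSpace ℝ (Fin n) × ℝ | 0 < p.2} ∧
  (∀ x, ∀ y : ℝ, 0 < y → -(hypLap n w x y) = μ * w x y) ∧
  ∀ v : EuclideanSpace ℝ (Fin n) → ℝ → ℝ,
    ContDiffOn ℝ 2 (fun p : EuclideanSpace ℝ (Fin n) × ℝ => v p.1 p.2)
      {p : EuclideanSpace ℝ (Fin n) × ℝ | 0 < p.2} →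
    (∀ x, ∀ y : ℝ, 0 < y → -(hypLap n v x y) = μ * v x y) →
    (∀ x, ∀ y : ℝ, 0 < y → 0 ≤ v x y ∧ v x y ≤ w x y) →
    ∃ C : ℝ, C ∈ Set.Icc (0:ℝ) 1 ∧ ∀ x, ∀ y : ℝ, 0 < y → v x y = C * w x y

open MeasureTheory Set Filter

abbrev HV (n : ℕ) := EuclideanSpace ℝ (Fin n) × ℝ

noncomputable section HVsec

def exv {n : ℕ} (i : Fin n) : HV n := (EuclideanSpace.single i (1:ℝ), 0)
def eyv {n : ℕ} : HV n := (0, 1)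

/-- iterated directional derivative -/
def dd {n : ℕ} (f : HV n → ℝ) (v p : HV n) : ℝ :=
  lineDeriv ℝ (fun p => lineDeriv ℝ f p v) p v

def lap (n : ℕ) (f : HV n → ℝ) (p : HV n) : ℝ :=
  exp (2 * p.2) * ∑ i, dd f (exv i) p + dd f eyv p - n * lineDeriv ℝ f p eyv

def tt {n : ℕ} (p p' : HV n) : ℝ :=
  ‖p.1 - p'.1‖ ^ 2 * exp (-(p.2 + p'.2)) / 2 + (cosh (p.2 - p'.2) - 1)

def wt (n : ℕ) (p : HV n) : ℝ := exp (-(n * p.2))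

/-- radial part of the Laplacian -/
def Dop (n : ℕ) (k : ℝ → ℝ) (t : ℝ) : ℝ :=
  (t ^ 2 + 2 * t) * deriv (deriv k) t + (n + 1) * (1 + t) * deriv k t

end HVsec

theorem tt_nonneg {n : ℕ} (p p' : HV n) : 0 ≤ tt p p' := by
  unfold tt
  have := one_le_cosh (p.2 - p'.2)
  have h2 : 0 ≤ ‖p.1 - p'.1‖ ^ 2 * exp (-(p.2 + p'.2)) / 2 := by positivity
  linarith

theorem tt_symm {n : ℕ} (p p' : HV n) : tt p p' = tt p' p := by
  unfold tt
  rw [norm_sub_rev, add_comm p.2, ← cosh_neg, neg_sub]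

theorem tt_self {n : ℕ} (p : HV n) : tt p p = 0 := by
  simp [tt]

theorem tt_contDiff {n : ℕ} {m : WithTop ℕ∞} :
    ContDiff ℝ m (fun z : HV n × HV n => tt z.1 z.2) := by
  unfold tt
  have h1 : ContDiff ℝ m (fun z : HV n × HV n => ‖z.1.1 - z.2.1‖ ^ 2) := by
    apply ContDiff.norm_sq ℝ; fun_prop
  fun_prop

theorem tt_continuous {n : ℕ} : Continuous (fun z : HV n × HV n => tt z.1 z.2) :=
  (tt_contDiff (m := 0)).continuous

theorem tt_line_ex {n : ℕ} (p p' : HV n) (i : Fin n) (t : ℝ) :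
    tt (p + t • exv i) p' =
      tt p p' + (t * (p.1 i - p'.1 i) + t ^ 2 / 2) * exp (-(p.2 + p'.2)) := by
  have h : ‖(p + t • exv i).1 - p'.1‖ ^ 2 =
      ‖p.1 - p'.1‖ ^ 2 + 2 * (t * (p.1 i - p'.1 i)) + t ^ 2 := by
    have : (p + t • exv i).1 - p'.1 = (p.1 - p'.1) + t • EuclideanSpace.single i (1:ℝ) := by
      simp [exv]; abel
    rw [this, norm_add_sq_real, inner_smul_right, EuclideanSpace.inner_single_right]
    simp [norm_smul]
  unfold tt
  rw [h]
  simp [exv]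
  ring

theorem tt_line_ey {n : ℕ} (p p' : HV n) (t : ℝ) :
    tt (p + t • eyv) p' =
      ‖p.1 - p'.1‖ ^ 2 * exp (-(p.2 + t + p'.2)) / 2 + (cosh (p.2 + t - p'.2) - 1) := by
  simp [tt, eyv]

theorem tt_hd_ex {n : ℕ} (p p' : HV n) (i : Fin n) :
    HasLineDerivAt ℝ (fun p => tt p p') ((p.1 i - p'.1 i) * exp (-(p.2 + p'.2))) p (exv i) := by
  unfold HasLineDerivAt
  simp only [tt_line_ex]
  have h : HasDerivAt (fun t : ℝ => (t * (p.1 i - p'.1 i) + t ^ 2 / 2)) (p.1 i - p'.1 i) 0 := by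
    have := ((hasDerivAt_id (0:ℝ)).mul_const (p.1 i - p'.1 i)).fun_add
      (((hasDerivAt_id (0:ℝ)).pow 2).div_const 2)
    simpa using this
  exact (h.mul_const _).const_add _

theorem tt_hdd_ex {n : ℕ} (p p' : HV n) (i : Fin n) :
    HasLineDerivAt ℝ (fun p => lineDeriv ℝ (fun p => tt p p') p (exv i))
      (exp (-(p.2 + p'.2))) p (exv i) := by
  have : (fun p => lineDeriv ℝ (fun p => tt p p') p (exv i)) =
      fun p : HV n => ((p.1 i - p'.1 i) * exp (-(p.2 + p'.2))) := by
    ext p; exact (tt_hd_ex p p' i).lineDeriv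
  rw [this]
  unfold HasLineDerivAt
  simp [exv]
  have := (((hasDerivAt_id (0:ℝ)).const_add (p.1 i)).sub_const (p'.1 i)).mul_const
    (exp (-p'.2 + -p.2))
  simpa using this

theorem tt_hd_ey {n : ℕ} (p p' : HV n) :
    HasLineDerivAt ℝ (fun p => tt p p')
      (sinh (p.2 - p'.2) - ‖p.1 - p'.1‖ ^ 2 * exp (-(p.2 + p'.2)) / 2) p eyv := by
  unfold HasLineDerivAt
  simp only [tt_line_ey]
  have h1 : HasDerivAt (fun t : ℝ => -(p.2 + t + p'.2)) (-1) 0 :=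
    (((hasDerivAt_id (0:ℝ)).const_add p.2).add_const p'.2).neg
  have h2 : HasDerivAt (fun t : ℝ => (p.2 + t - p'.2)) 1 0 :=
    (((hasDerivAt_id (0:ℝ)).const_add p.2).sub_const p'.2)
  have := ((h1.exp.const_mul (‖p.1 - p'.1‖ ^ 2)).div_const 2).fun_add ((h2.cosh).sub_const 1)
  convert this using 1
  simp; ring

theorem tt_hdd_ey {n : ℕ} (p p' : HV n) :
    HasLineDerivAt ℝ (fun p => lineDeriv ℝ (fun p => tt p p') p eyv)
      (1 + tt p p') p eyv := by
  have : (fun p => lineDeriv ℝ (fun p => tt p p') p eyv) =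
      fun p : HV n => (sinh (p.2 - p'.2) - ‖p.1 - p'.1‖ ^ 2 * exp (-(p.2 + p'.2)) / 2) := by
    ext p; exact (tt_hd_ey p p').lineDeriv
  rw [this]
  unfold HasLineDerivAt
  have h1 : HasDerivAt (fun t : ℝ => -(p.2 + t + p'.2)) (-1) 0 :=
    (((hasDerivAt_id (0:ℝ)).const_add p.2).add_const p'.2).neg
  have h2 : HasDerivAt (fun t : ℝ => (p.2 + t - p'.2)) 1 0 :=
    (((hasDerivAt_id (0:ℝ)).const_add p.2).sub_const p'.2)
  have := (h2.sinh).fun_sub ((h1.exp.const_mul (‖p.1 - p'.1‖ ^ 2)).div_const 2)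
  convert this using 1
  · ext t; simp [eyv]
  · simp [tt]; ring

theorem hasLineDerivAt_comp_real {n : ℕ} {k : ℝ → ℝ} {k' : ℝ} {f : HV n → ℝ} {f' : ℝ}
    {p v : HV n} (hk : HasDerivAt k k' (f p)) (hf : HasLineDerivAt ℝ f f' p v) :
    HasLineDerivAt ℝ (fun p => k (f p)) (k' * f') p v := by
  unfold HasLineDerivAt at *
  have h0 : f p = f (p + (0:ℝ) • v) := by simp
  rw [h0] at hk
  exact HasDerivAt.comp (0:ℝ) hk hf

theorem hasLineDerivAt_mul {n : ℕ} {f g : HV n → ℝ} {f' g' : ℝ}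
    {p v : HV n} (hf : HasLineDerivAt ℝ f f' p v) (hg : HasLineDerivAt ℝ g g' p v) :
    HasLineDerivAt ℝ (fun p => f p * g p) (f' * g p + f p * g') p v := by
  unfold HasLineDerivAt at *
  have := hf.fun_mul hg
  simpa using this

theorem dd_comp {n : ℕ} {k : ℝ → ℝ} (hk : ContDiff ℝ 2 k) {f : HV n → ℝ} {p v : HV n}
    {a : HV n → ℝ} {b : ℝ}
    (h1 : ∀ p, HasLineDerivAt ℝ f (a p) p v) (h2 : HasLineDerivAt ℝ a b p v) :
    HasLineDerivAt ℝ (fun p => lineDeriv ℝ (fun p => k (f p)) p v)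
     (deriv (deriv k) (f p) * (a p) ^ 2 + deriv k (f p) * b) p v := by
  have hk1 : Differentiable ℝ k := hk.differentiable (by norm_num)
  have hk2 : ContDiff ℝ 1 (deriv k) := by
    have : ContDiff ℝ (1+1) k := by simpa [one_add_one_eq_two] using hk
    exact (contDiff_succ_iff_deriv.1 this).2.2
  have e : (fun p => lineDeriv ℝ (fun p => k (f p)) p v) = fun p => deriv k (f p) * a p := by
    ext p
    exact (hasLineDerivAt_comp_real (hk1 _).hasDerivAt (h1 p)).lineDeriv
  rw [e]
  have := hasLineDerivAt_mul
    (hasLineDerivAt_comp_real ((hk2.differentiable (by norm_num)) (f p)).hasDerivAt (h1 p)) h2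
  convert this using 1
  ring

theorem lap_radial {n : ℕ} {k : ℝ → ℝ} (hk : ContDiff ℝ 2 k) (p p' : HV n) :
    lap n (fun p => k (tt p p')) p = Dop n k (tt p p') := by
  have hk1 : Differentiable ℝ k := hk.differentiable (by norm_num)
  have e1 : ∀ i, dd (fun p => k (tt p p')) (exv i) p = deriv (deriv k) (tt p p') *
      ((p.1 i - p'.1 i) * exp (-(p.2 + p'.2))) ^ 2
        + deriv k (tt p p') * exp (-(p.2 + p'.2)) := by
    intro i
    have := (dd_comp hk (fun p => (tt_hd_ex p p' i).lineDeriv ▸ tt_hd_ex p p' i)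
      (tt_hdd_ex p p' i)).lineDeriv
    rw [(tt_hd_ex p p' i).lineDeriv] at this
    exact this
  have e2 : dd (fun p => k (tt p p')) eyv p = deriv (deriv k) (tt p p') *
      (sinh (p.2 - p'.2) - ‖p.1 - p'.1‖ ^ 2 * exp (-(p.2 + p'.2)) / 2) ^ 2
        + deriv k (tt p p') * (1 + tt p p') := by
    have := (dd_comp hk (fun p => (tt_hd_ey p p').lineDeriv ▸ tt_hd_ey p p')
      (tt_hdd_ey p p')).lineDeriv
    rw [(tt_hd_ey p p').lineDeriv] at this
    exact this
  have e3 : lineDeriv ℝ (fun p => k (tt p p')) p eyv = deriv k (tt p p') *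
      (sinh (p.2 - p'.2) - ‖p.1 - p'.1‖ ^ 2 * exp (-(p.2 + p'.2)) / 2) :=
    (hasLineDerivAt_comp_real (hk1 _).hasDerivAt (tt_hd_ey p p')).lineDeriv
  unfold lap
  simp only [e1, e2, e3]
  rw [Finset.sum_add_distrib, ← Finset.mul_sum]
  simp only [mul_pow, Finset.sum_const, Finset.card_univ, Fintype.card_fin, nsmul_eq_mul]
  rw [← Finset.sum_mul]
  have hn : ∑ i, (p.1 i - p'.1 i) ^ 2 = ‖p.1 - p'.1‖ ^ 2 := by
    rw [EuclideanSpace.real_norm_sq_eq]; simp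
  rw [hn]
  unfold Dop
  have hE : exp (2 * p.2) * exp (-(p.2 + p'.2)) = exp (p.2 - p'.2) := by
    rw [← exp_add]; ring_nf
  have hc : cosh (p.2 - p'.2) + sinh (p.2 - p'.2) = exp (p.2 - p'.2) := cosh_add_sinh _
  have hs := cosh_sq (p.2 - p'.2)
  set E := exp (p.2 - p'.2)
  set A := exp (-(p.2 + p'.2))
  set B := exp (2 * p.2)
  set N := ‖p.1 - p'.1‖ ^ 2
  have ht : tt p p' = N * A / 2 + (cosh (p.2 - p'.2) - 1) := rfl
  rw [ht]
  set c := cosh (p.2 - p'.2)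
  set s := sinh (p.2 - p'.2)
  set k1 := deriv k _
  set k2 := deriv (deriv k) _
  have : B * (k2 * (N * A ^ 2) + n * (k1 * A)) = (B * A) * (k2 * N * A + n * k1) := by ring
  rw [this, hE, ← hc]
  linear_combination (-k2) * hs

attribute [irreducible] tt wt Dop

set_option linter.unusedSectionVars false

/-- kernels with locally uniformly compact support -/
def LocSupp {E F : Type*} [TopologicalSpace E] [TopologicalSpace F] (κ : E × F → ℝ) : Prop :=
  ∀ S : Set E, IsCompact S → ∃ T : Set F, IsCompact T ∧ ∀ z ∈ S, ∀ z' ∉ T, κ (z, z') = 0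

section Generic
variable {E : Type*} [NormedAddCommGroup E] [NormedSpace ℝ E] [FiniteDimensional ℝ E]
  [MeasureSpace E] [BorelSpace E] [IsFiniteMeasureOnCompacts (volume : Measure E)]

theorem kint_contDiff {κ : E × E → ℝ} (hκ : ContDiff ℝ 2 κ) (hs : LocSupp κ)
    {w : E → ℝ} (hw : Continuous w) :
    ContDiff ℝ 2 (fun z => ∫ z', κ (z, z') * w z') := by
  rw [contDiff_iff_contDiffAt]
  intro z0
  obtain ⟨T, hT, hT0⟩ := hs (Metric.closedBall z0 1) (isCompact_closedBall z0 1)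
  have hli : LocallyIntegrable w (volume : Measure E) := hw.locallyIntegrable
  have := contDiffOn_convolution_right_with_param_comp (𝕜 := ℝ) (μ := (volume : Measure E))
    (n := 2) (ContinuousLinearMap.mul ℝ ℝ)
    (s := Metric.ball z0 1) (v := fun _ : E => (0:E)) contDiffOn_const (f := w)
    (g := fun z x => κ (z, -x)) (k := -T) Metric.isOpen_ball hT.neg
    (by
      intro p x hp hx
      apply hT0 p (Metric.ball_subset_closedBall hp)
      simpa using hx) hli
    (by
      apply ContDiff.contDiffOn
      change ContDiff ℝ 2 (fun z : E × E => κ (z.1, - z.2))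
      exact hκ.comp (by fun_prop))
  have h2 := this.contDiffAt (Metric.isOpen_ball.mem_nhds (Metric.mem_ball_self one_pos))
  convert h2 using 2 with z
  · rfl
  · unfold convolution
    simp [mul_comm]

theorem kint_lineDeriv {κ : E × E → ℝ} (hκ : ContDiff ℝ 1 κ) (hs : LocSupp κ)
    {w : E → ℝ} (hw : Continuous w) (z v : E) :
    HasLineDerivAt ℝ (fun z => ∫ z', κ (z, z') * w z')
      (∫ z', lineDeriv ℝ (fun z => κ (z, z')) z v * w z') z v := by
  set S : Set E := (fun t : ℝ => z + t • v) '' Icc (-1) 1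
  have hS : IsCompact S := isCompact_Icc.image (by fun_prop)
  obtain ⟨T, hT, hT0⟩ := hs S hS
  have hd : ∀ z z', HasFDerivAt κ (fderiv ℝ κ (z,z')) (z,z') := fun z z' =>
    (hκ.differentiable (by norm_num) _).hasFDerivAt
  have hline : ∀ z z' (t : ℝ), HasDerivAt (fun t : ℝ => κ (z + t • v, z'))
      (fderiv ℝ κ (z + t • v, z') (v, 0)) t := by
    intro z z' t
    have h1 : HasDerivAt (fun t : ℝ => (z + t • v, z')) (v, (0:E)) t := by
      have := ((hasDerivAt_id t).smul_const v).const_add z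
      simp only [one_smul] at this
      exact this.prodMk (hasDerivAt_const t z')
    exact (hd _ _).comp_hasDerivAt t h1
  have hcont : Continuous (fun q : E × E => fderiv ℝ κ q (v, 0)) :=
    (hκ.continuous_fderiv (by norm_num)).clm_apply continuous_const
  obtain ⟨C, hC⟩ := (hS.prod hT).exists_bound_of_continuousOn hcont.continuousOn
  have hld : ∀ z', lineDeriv ℝ (fun z => κ (z, z')) z v = fderiv ℝ κ (z, z') (v, 0) := by
    intro z'
    have := (hline z z' 0)
    simp only [zero_smul, add_zero] at this
    exact HasLineDerivAt.lineDeriv this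
  simp only [hld]
  unfold HasLineDerivAt
  have hcpt : ∀ t ∈ Icc (-1:ℝ) 1, HasCompactSupport (fun z' => κ (z + t • v, z') * w z') := by
    intro t ht
    apply HasCompactSupport.intro hT
    intro z' hz'
    rw [hT0 _ ⟨t, ht, rfl⟩ z' hz', zero_mul]
  have hcx : ∀ t : ℝ, Continuous (fun z' => κ (z + t • v, z') * w z') := fun t =>
    (hκ.continuous.comp (by fun_prop)).mul hw
  have key := hasDerivAt_integral_of_dominated_loc_of_deriv_le (μ := (volume : Measure E))
    (F := fun (t : ℝ) z' => κ (z + t • v, z') * w z')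
    (F' := fun t z' => fderiv ℝ κ (z + t • v, z') (v, 0) * w z') (x₀ := (0:ℝ))
    (s := Ioo (-1:ℝ) 1) (bound := T.indicator (fun z' => C * |w z'|))
    (Ioo_mem_nhds (by norm_num) (by norm_num))
    (Eventually.of_forall fun t => (hcx t).aestronglyMeasurable)
    ((hcx 0).integrable_of_hasCompactSupport (hcpt 0 (by simp)))
    (by
      apply Continuous.aestronglyMeasurable
      exact (hcont.comp (by fun_prop : Continuous fun z' => (z + (0:ℝ) • v, z'))).mul hw)
    (by
      refine Eventually.of_forall fun z' t ht => ?_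
      by_cases hz : z' ∈ T
      · rw [indicator_of_mem hz, norm_mul]
        apply mul_le_mul_of_nonneg_right _ (norm_nonneg _)
        exact hC (z + t • v, z') ⟨⟨t, ⟨ht.1.le, ht.2.le⟩, rfl⟩, hz⟩
      · rw [indicator_of_notMem hz]
        have h1 : HasDerivAt (fun t : ℝ => κ (z + t • v, z')) 0 t := by
          apply (hasDerivAt_const t (0:ℝ)).congr_of_eventuallyEq
          filter_upwards [Ioo_mem_nhds ht.1 ht.2] with s hs
          exact hT0 _ ⟨s, ⟨hs.1.le, hs.2.le⟩, rfl⟩ z' hz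
        rw [(hline z z' t).unique h1]; simp)
    (by
      rw [integrable_indicator_iff hT.measurableSet]
      exact (continuous_const.mul hw.abs).continuousOn.integrableOn_compact hT)
    (Eventually.of_forall fun z' t _ => (hline z z' t).mul_const _)
  simpa using key.2

/-- directional derivative in the first variable of a kernel -/
noncomputable def dker (v : E) (κ : E × E → ℝ) (q : E × E) : ℝ :=
  lineDeriv ℝ (fun z => κ (z, q.2)) q.1 v

theorem dker_contDiff {κ : E × E → ℝ} (hκ : ContDiff ℝ 2 κ) (v : E) :
    ContDiff ℝ 1 (dker v κ) := by
  have hd : ∀ z z', HasFDerivAt κ (fderiv ℝ κ (z,z')) (z,z') := fun z z' =>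
    (hκ.differentiable (by norm_num) _).hasFDerivAt
  have : dker v κ = fun q => fderiv ℝ κ q (v, 0) := by
    ext ⟨z, z'⟩
    apply HasLineDerivAt.lineDeriv
    have h1 : HasDerivAt (fun t : ℝ => (z + t • v, z')) (v, (0:E)) 0 := by
      have := ((hasDerivAt_id (0:ℝ)).smul_const v).const_add z
      simp only [one_smul] at this
      exact this.prodMk (hasDerivAt_const (0:ℝ) z')
    have h2 : HasFDerivAt κ (fderiv ℝ κ (z,z')) (z + (0:ℝ) • v, z') := by simpa using hd z z'
    exact h2.comp_hasDerivAt (0:ℝ) h1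
  rw [this]
  exact (hκ.fderiv_right (m := 1) (by norm_num)).clm_apply contDiff_const

theorem dker_locSupp {κ : E × E → ℝ} (hs : LocSupp κ) (v : E) :
    LocSupp (dker v κ) := by
  intro S hS
  obtain ⟨T, hT, hT0⟩ := hs (Metric.cthickening 1 S) hS.cthickening
  refine ⟨T, hT, fun z hz z' hz' => ?_⟩
  apply HasLineDerivAt.lineDeriv
  apply (hasDerivAt_const (0:ℝ) (0:ℝ)).congr_of_eventuallyEq
  have : Tendsto (fun t : ℝ => z + t • v) (𝓝 0) (𝓝 z) := by
    have : Continuous (fun t : ℝ => z + t • v) := by fun_prop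
    simpa using this.tendsto 0
  filter_upwards [this (Metric.ball_mem_nhds z one_pos)] with t ht
  exact hT0 _ (Metric.mem_cthickening_of_dist_le _ z 1 S hz (le_of_lt ht)) z' hz'

end Generic

theorem lineDeriv_contDiff {n : ℕ} {m m' : WithTop ℕ∞} {f : HV n → ℝ} (hf : ContDiff ℝ m f) (hm : m' + 1 ≤ m)
    (v : HV n) : ContDiff ℝ m' (fun p => lineDeriv ℝ f p v) := by
  have : (fun p => lineDeriv ℝ f p v) = fun p => fderiv ℝ f p v := by
    ext p
    apply DifferentiableAt.lineDeriv_eq_fderiv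
    exact hf.differentiable (by rintro rfl; simp at hm) p
  rw [this]
  exact (hf.fderiv_right hm).clm_apply contDiff_const

theorem hasLineDerivAt_of_contDiff {n : ℕ} {m : WithTop ℕ∞} {f : HV n → ℝ} (hf : ContDiff ℝ m f)
    (hm : m ≠ 0) (p v : HV n) : HasLineDerivAt ℝ f (lineDeriv ℝ f p v) p v :=
  (hf.differentiable hm p).lineDifferentiableAt.hasLineDerivAt

theorem dd_continuous {n : ℕ} {f : HV n → ℝ} (hf : ContDiff ℝ 2 f) (v : HV n) :
    Continuous (dd f v) :=
  (lineDeriv_contDiff (m' := 0) (lineDeriv_contDiff (m' := 1) hf (by norm_num) v)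
    (by norm_num) v).continuous

theorem lap_continuous {n : ℕ} {f : HV n → ℝ} (hf : ContDiff ℝ 2 f) :
    Continuous (lap n f) := by
  unfold lap
  have h1 := fun i : Fin n => dd_continuous hf (exv i)
  have h2 := dd_continuous hf eyv
  have h3 := (lineDeriv_contDiff (m' := 1) hf (by norm_num) eyv).continuous
  fun_prop

theorem hv_haar (n : ℕ) : (volume : Measure (HV n)).IsAddHaarMeasure :=
  Measure.prod.instIsAddHaarMeasure volume volume

theorem integral_lineDeriv_zero {n : ℕ} {F : HV n → ℝ} (hF : ContDiff ℝ 1 F)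
    (hc : HasCompactSupport F) (v : HV n) : ∫ p, lineDeriv ℝ F p v = 0 := by
  have e : ∀ p, lineDeriv ℝ F p v = fderiv ℝ F p v := fun p =>
    (hF.differentiable (by norm_num) p).lineDeriv_eq_fderiv
  simp only [e]
  have : (volume : Measure (HV n)).IsAddHaarMeasure := hv_haar n
  have := integral_mul_fderiv_eq_neg_fderiv_mul_of_integrable (𝕜 := ℝ) (μ := (volume : Measure (HV n)))
    (f := fun _ => (1:ℝ)) (g := F) (v := v) (by simp) (by
      simp only [one_mul]
      apply Continuous.integrable_of_hasCompactSupport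
      · exact (hF.continuous_fderiv (by norm_num)).clm_apply continuous_const
      · exact (hc.fderiv (𝕜 := ℝ)).comp_left (g := fun L : HV n →L[ℝ] ℝ => L v) (by simp)) (by
      simp only [one_mul]
      exact hF.continuous.integrable_of_hasCompactSupport hc)
      (fun _ _ => by fun_prop) (fun x _ => hF.differentiable (by norm_num) x)
  simpa using this

/-- the divergence integrand along `v` -/
noncomputable def grn {n : ℕ} (ω φ h : HV n → ℝ) (v p : HV n) : ℝ :=
  lineDeriv ℝ ω p v * (lineDeriv ℝ φ p v * h p - φ p * lineDeriv ℝ h p v) +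
    ω p * (dd φ v p * h p - φ p * dd h v p)

theorem grn_spec {n : ℕ} {ω φ h : HV n → ℝ} (hω : ContDiff ℝ 2 ω) (hφ : ContDiff ℝ 2 φ)
    (hc : HasCompactSupport φ) (hh : ContDiff ℝ 2 h) (v : HV n) :
    Integrable (grn ω φ h v) ∧ ∫ p, grn ω φ h v p = 0 := by
  have a1 := (lineDeriv_contDiff (m' := 1) hφ (by norm_num) v)
  have a2 := (lineDeriv_contDiff (m' := 1) hh (by norm_num) v)
  have hw1 : ContDiff ℝ 1 ω := hω.of_le (by norm_num)
  have hh1 : ContDiff ℝ 1 h := hh.of_le (by norm_num)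
  have hφ1 : ContDiff ℝ 1 φ := hφ.of_le (by norm_num)
  set F : HV n → ℝ := fun p => ω p * (lineDeriv ℝ φ p v * h p - φ p * lineDeriv ℝ h p v) with hF
  have hF1 : ContDiff ℝ 1 F := by fun_prop
  have hz : ∀ p ∉ tsupport φ, (lineDeriv ℝ φ p v) = 0 := by
    intro p hp
    have : fderiv ℝ φ p = 0 := by
      have := (support_fderiv_subset ℝ (f := φ))
      by_contra h0
      exact hp (this h0)
    rw [(hφ.differentiable (by norm_num) p).lineDeriv_eq_fderiv, this]; rfl
  have hFc : HasCompactSupport F := by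
    apply HasCompactSupport.intro hc
    intro p hp
    rw [hF]; simp only
    rw [hz p hp, image_eq_zero_of_notMem_tsupport hp]; simp
  have hder : ∀ p, lineDeriv ℝ F p v = grn ω φ h v p := by
    intro p
    apply HasLineDerivAt.lineDeriv
    have b1 := hasLineDerivAt_of_contDiff hw1 (by norm_num) p v
    have b2 := hasLineDerivAt_of_contDiff hh1 (by norm_num) p v
    have b3 := hasLineDerivAt_of_contDiff hφ1 (by norm_num) p v
    have b4 := hasLineDerivAt_of_contDiff a1 (by norm_num) p v
    have b5 := hasLineDerivAt_of_contDiff a2 (by norm_num) p v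
    have c1 : HasLineDerivAt ℝ (fun p => (lineDeriv ℝ φ p v * h p - φ p * lineDeriv ℝ h p v)) _ p v :=
      HasDerivAt.fun_sub (hasLineDerivAt_mul b4 b2) (hasLineDerivAt_mul b3 b5)
    have c2 := hasLineDerivAt_mul b1 c1
    convert c2 using 1
    unfold grn dd; ring
  constructor
  · have : Integrable (fun p => lineDeriv ℝ F p v) := by
      apply Continuous.integrable_of_hasCompactSupport
      · exact (lineDeriv_contDiff (m' := 0) hF1 (by norm_num) v).continuous
      · apply HasCompactSupport.intro hFc
        intro p hp
        have : fderiv ℝ F p = 0 := by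
          have := (support_fderiv_subset ℝ (f := F))
          by_contra h0
          exact hp (this h0)
        rw [(hF1.differentiable (by norm_num) p).lineDeriv_eq_fderiv, this]; rfl
    simpa only [hder] using this
  · simp only [← hder]
    exact integral_lineDeriv_zero hF1 hFc v

theorem green {n : ℕ} {φ h : HV n → ℝ} (hφ : ContDiff ℝ 2 φ)
    (hc : HasCompactSupport φ) (hh : ContDiff ℝ 2 h) :
    ∫ p, lap n φ p * wt n p * h p = ∫ p, φ p * wt n p * lap n h p := by
  have hw : ContDiff ℝ 2 (wt n) := by unfold wt; fun_prop
  have hw' : ContDiff ℝ 2 (fun p : HV n => exp (2 * p.2) * wt n p) := by unfold wt; fun_prop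
  have hwy : ∀ p, lineDeriv ℝ (wt n) p eyv = - n * wt n p := by
    intro p
    apply HasLineDerivAt.lineDeriv
    unfold HasLineDerivAt wt
    have h1 : HasDerivAt (fun t : ℝ => -((n:ℝ) * (p.2 + t))) (-(n * 1)) 0 :=
      (((hasDerivAt_id (0:ℝ)).const_add p.2).const_mul (n:ℝ)).neg
    have := h1.exp
    refine (this.congr_deriv ?_).congr_of_eventuallyEq (Eventually.of_forall fun t => ?_)
    · simp [mul_comm]
    · simp [eyv]
  have hwx : ∀ p i, lineDeriv ℝ (fun p : HV n => exp (2 * p.2) * wt n p) p (exv i) = 0 := by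
    intro p i
    apply HasLineDerivAt.lineDeriv
    unfold HasLineDerivAt wt
    simp [exv]
    apply hasDerivAt_const
  have hid : ∀ p, lap n φ p * wt n p * h p - φ p * wt n p * lap n h p =
      (∑ i, grn (fun p : HV n => exp (2 * p.2) * wt n p) φ h (exv i) p)
        + grn (wt n) φ h eyv p := by
    intro p
    unfold grn lap
    simp only [hwy, hwx]
    simp only [zero_mul, zero_add]
    rw [← Finset.mul_sum, Finset.sum_sub_distrib, ← Finset.sum_mul, ← Finset.mul_sum]
    ring
  have hi := fun i => grn_spec hw' hφ hc hh (exv i)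
  have hy := grn_spec hw hφ hc hh eyv
  have hIntg : ∀ g : HV n → ℝ, Continuous g → Integrable (fun p => φ p * g p) := by
    intro g hg
    exact (hφ.continuous.mul hg).integrable_of_hasCompactSupport hc.mul_right
  have i2 : Integrable (fun p => φ p * wt n p * lap n h p) := by
    have := hIntg _ (hw.continuous.fun_mul (lap_continuous hh))
    simpa only [mul_assoc] using this
  have i12 : Integrable (fun p => lap n φ p * wt n p * h p - φ p * wt n p * lap n h p) := by
    simp only [hid]
    exact (integrable_finsetSum _ fun i _ => (hi i).1).add hy.1
  have i1 : Integrable (fun p => lap n φ p * wt n p * h p) := by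
    have := i12.add i2
    apply this.congr
    filter_upwards with p
    simp
  rw [← sub_eq_zero, ← integral_sub i1 i2]
  simp only [hid]
  rw [integral_add (integrable_finsetSum _ fun i _ => (hi i).1) hy.1,
    integral_finsetSum _ fun i _ => (hi i).1, hy.2]
  simp [(hi _).2]

theorem tt_proper {n : ℕ} (r : ℝ) (S : Set (HV n)) (hS : IsCompact S) :
    ∃ T : Set (HV n), IsCompact T ∧ ∀ p ∈ S, ∀ p' ∉ T, r < tt p p' := by
  obtain ⟨M, hM⟩ := hS.isBounded.exists_norm_le
  set A := M + 2 * (1 + |r|)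
  set B := M + (2 * |r| * exp (M + A) + 1)
  refine ⟨Metric.closedBall 0 (max A B), isCompact_closedBall _ _, fun p hp p' hp' => ?_⟩
  by_contra hlt
  push Not at hlt
  apply hp'
  have h1 : ‖p.1‖ ≤ M := (norm_fst_le p).trans (hM p hp)
  have h2 : ‖p.2‖ ≤ M := (norm_snd_le p).trans (hM p hp)
  have hc := one_le_cosh (p.2 - p'.2)
  have hN : 0 ≤ ‖p.1 - p'.1‖ ^ 2 * exp (-(p.2 + p'.2)) / 2 := by positivity
  have ht : tt p p' = ‖p.1 - p'.1‖ ^ 2 * exp (-(p.2 + p'.2)) / 2 + (cosh (p.2 - p'.2) - 1) := by unfold tt; rfl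
  have hr := le_abs_self r
  have hr0 := abs_nonneg r
  have h3 : |p.2 - p'.2| ≤ 2 * (1 + |r|) := by
    have a1 : |p.2 - p'.2| + 1 ≤ exp |p.2 - p'.2| := add_one_le_exp _
    have a2 : exp |p.2 - p'.2| ≤ 2 * cosh (p.2 - p'.2) := by
      rw [← cosh_abs, cosh_eq]
      have := exp_pos (-|p.2 - p'.2|)
      linarith
    nlinarith
  have h4 : |p'.2| ≤ A := by
    have : |p'.2| ≤ |p.2| + |p.2 - p'.2| := by
      have := abs_sub_abs_le_abs_sub p'.2 p.2
      rw [abs_sub_comm] at this; linarith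
    rw [Real.norm_eq_abs] at h2
    simp only [A]; linarith
  have h5 : ‖p.1 - p'.1‖ ^ 2 ≤ 2 * |r| * exp (M + A) := by
    have b1 : ‖p.1 - p'.1‖ ^ 2 * exp (-(p.2 + p'.2)) ≤ 2 * |r| := by nlinarith
    have b2 : exp (-(M + A)) ≤ exp (-(p.2 + p'.2)) := by
      apply exp_le_exp.2
      have := le_abs_self p.2
      have := le_abs_self p'.2
      rw [Real.norm_eq_abs] at h2
      linarith
    have b3 : ‖p.1 - p'.1‖ ^ 2 * exp (-(M + A)) ≤ 2 * |r| :=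
      (mul_le_mul_of_nonneg_left b2 (by positivity)).trans b1
    rw [exp_neg, ← div_eq_mul_inv, div_le_iff₀ (exp_pos _)] at b3
    exact b3
  have h6 : ‖p.1 - p'.1‖ ≤ 2 * |r| * exp (M + A) + 1 := by nlinarith [sq_nonneg (‖p.1 - p'.1‖ - 1)]
  have h7 : ‖p'.1‖ ≤ B := by
    have : ‖p'.1‖ ≤ ‖p.1‖ + ‖p.1 - p'.1‖ := by
      have := norm_sub_le p.1 (p.1 - p'.1)
      simpa using this
    simp only [B]; linarith
  rw [mem_closedBall_zero_iff, Prod.norm_def]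
  rw [max_comm A B]
  exact max_le_max h7 h4

structure KC (k : ℝ → ℝ) (r : ℝ) : Prop where
  cont : Continuous k
  supp : ∀ t, r < t → k t = 0

structure KN (k : ℝ → ℝ) (r : ℝ) : Prop where
  c2 : ContDiff ℝ 2 k
  supp : ∀ t, r < t → k t = 0

theorem KN.kc {k : ℝ → ℝ} {r : ℝ} (h : KN k r) : KC k r := ⟨h.c2.continuous, h.supp⟩

theorem contDiff_deriv_of_two {k : ℝ → ℝ} (hk : ContDiff ℝ 2 k) : ContDiff ℝ 1 (deriv k) := by
  have : ContDiff ℝ (1+1) k := by simpa [one_add_one_eq_two] using hk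
  exact (contDiff_succ_iff_deriv.1 this).2.2

theorem KN.dop {k : ℝ → ℝ} {r : ℝ} (h : KN k r) (n : ℕ) : KC (Dop n k) r := by
  have h1 := contDiff_deriv_of_two h.c2
  have h2 : Continuous (deriv (deriv k)) := h1.continuous_deriv (by norm_num)
  have h3 := h1.continuous
  have hz : ∀ t, r < t → deriv k t = 0 := by
    intro t ht
    have : k =ᶠ[𝓝 t] fun _ => 0 := by
      filter_upwards [Ioi_mem_nhds ht] with s hs using h.supp s hs
    rw [this.deriv_eq]; simp
  refine ⟨by unfold Dop; fun_prop, fun t ht => ?_⟩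
  have : deriv k =ᶠ[𝓝 t] fun _ => 0 := by
    filter_upwards [Ioi_mem_nhds ht] with s hs using hz s hs
  unfold Dop
  rw [this.deriv_eq, hz t ht]; simp

noncomputable def Kx (n : ℕ) (k : ℝ → ℝ) (w : HV n → ℝ) (p : HV n) : ℝ :=
  ∫ p', k (tt p p') * wt n p' * w p'

theorem wt_contDiff (n : ℕ) {m : WithTop ℕ∞} : ContDiff ℝ m (wt n) := by unfold wt; fun_prop
theorem wt_continuous (n : ℕ) : Continuous (wt n) := by unfold wt; fun_prop
theorem wt_pos (n : ℕ) (p : HV n) : 0 < wt n p := by unfold wt; exact exp_pos _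

theorem KC.locSupp {n : ℕ} {k : ℝ → ℝ} {r : ℝ} (h : KC k r) :
    LocSupp (fun z : HV n × HV n => k (tt z.1 z.2) * wt n z.2) := by
  intro S hS
  obtain ⟨T, hT, hT0⟩ := tt_proper (n := n) r S hS
  exact ⟨T, hT, fun z hz z' hz' => by simp [h.supp _ (hT0 z hz z' hz')]⟩

theorem locSupp_integrable {n : ℕ} {κ : HV n × HV n → ℝ} (hκ : Continuous κ) (hs : LocSupp κ)
    {w : HV n → ℝ} (hw : Continuous w) (z : HV n) : Integrable (fun z' => κ (z, z') * w z') := by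
  obtain ⟨T, hT, hT0⟩ := hs {z} isCompact_singleton
  apply Continuous.integrable_of_hasCompactSupport
  · exact (hκ.comp (by fun_prop)).mul hw
  · apply HasCompactSupport.intro hT
    intro z' hz'
    rw [hT0 z rfl z' hz', zero_mul]

theorem KC.kcont {n : ℕ} {k : ℝ → ℝ} {r : ℝ} (h : KC k r) :
    Continuous (fun z : HV n × HV n => k (tt z.1 z.2) * wt n z.2) :=
  (h.cont.comp tt_continuous).mul ((wt_continuous n).comp continuous_snd)

theorem KC.integrable {n : ℕ} {k : ℝ → ℝ} {r : ℝ} (h : KC k r)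
    {w : HV n → ℝ} (hw : Continuous w) (p : HV n) :
    Integrable (fun p' => k (tt p p') * wt n p' * w p') :=
  locSupp_integrable h.kcont h.locSupp hw p

theorem KN.kcd {n : ℕ} {k : ℝ → ℝ} {r : ℝ} (h : KN k r) :
    ContDiff ℝ 2 (fun z : HV n × HV n => k (tt z.1 z.2) * wt n z.2) :=
  (h.c2.comp tt_contDiff).mul ((wt_contDiff n).comp contDiff_snd)

theorem Kx_contDiff {n : ℕ} {k : ℝ → ℝ} {r : ℝ} (h : KN k r)
    {w : HV n → ℝ} (hw : Continuous w) : ContDiff ℝ 2 (Kx n k w) :=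
  kint_contDiff h.kcd h.kc.locSupp hw

theorem lineDeriv_mul_const' {n : ℕ} (f : HV n → ℝ) (c : ℝ) (p v : HV n) :
    lineDeriv ℝ (fun p => f p * c) p v = lineDeriv ℝ f p v * c := by
  unfold lineDeriv
  simp

theorem lap_mul_const {n : ℕ} (f : HV n → ℝ) (c : ℝ) (p : HV n) :
    lap n (fun p => f p * c) p = lap n f p * c := by
  unfold lap dd
  simp only [lineDeriv_mul_const']
  rw [← Finset.sum_mul]
  ring

theorem lap_Kx {n : ℕ} {k : ℝ → ℝ} {r : ℝ} (h : KN k r)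
    {w : HV n → ℝ} (hw : Continuous w) (p : HV n) :
    lap n (Kx n k w) p = Kx n (Dop n k) w p := by
  set κ := (fun z : HV n × HV n => k (tt z.1 z.2) * wt n z.2) with hκ
  have hc : ContDiff ℝ 2 κ := h.kcd
  have hs : LocSupp κ := h.kc.locSupp
  have c1 : ∀ v, ContDiff ℝ 1 (dker v κ) := dker_contDiff hc
  have s1 : ∀ v, LocSupp (dker v κ) := dker_locSupp hs
  have e1 : ∀ p v, lineDeriv ℝ (Kx n k w) p v = ∫ z', dker v κ (p, z') * w z' := fun p v =>
    (kint_lineDeriv (hc.of_le (by norm_num)) hs hw p v).lineDeriv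
  have e2 : ∀ p v, dd (Kx n k w) v p = ∫ z', dker v (dker v κ) (p, z') * w z' := by
    intro p v
    unfold dd
    simp only [e1]
    exact (kint_lineDeriv (c1 v) (s1 v) hw p v).lineDeriv
  have i1 : ∀ p v, Integrable (fun z' => dker v κ (p, z') * w z') := fun p v =>
    locSupp_integrable (c1 v).continuous (s1 v) hw p
  have i2 : ∀ p v, Integrable (fun z' => dker v (dker v κ) (p, z') * w z') := by
    intro p v
    apply locSupp_integrable _ (dker_locSupp (s1 v) v) hw p
    have hfd : dker v (dker v κ) = fun q => fderiv ℝ (dker v κ) q (v, 0) := by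
      ext ⟨z, z'⟩
      apply HasLineDerivAt.lineDeriv
      have h1 : HasDerivAt (fun t : ℝ => (z + t • v, z')) (v, (0:HV n)) 0 := by
        have := ((hasDerivAt_id (0:ℝ)).smul_const v).const_add z
        simp only [one_smul] at this
        exact this.prodMk (hasDerivAt_const (0:ℝ) z')
      have h2 : HasFDerivAt (dker v κ) (fderiv ℝ (dker v κ) (z,z')) (z + (0:ℝ) • v, z') := by
        simpa using ((c1 v).differentiable (by norm_num) (z, z')).hasFDerivAt
      exact h2.comp_hasDerivAt (0:ℝ) h1
    rw [hfd]
    exact ((c1 v).continuous_fderiv (by norm_num)).clm_apply continuous_const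
  have i3 : Integrable (fun a => exp (2 * p.2) * ∑ i, dker (exv i) (dker (exv i) κ) (p, a) * w a
      + dker eyv (dker eyv κ) (p, a) * w a) :=
    ((integrable_finsetSum _ fun i _ => i2 p (exv i)).const_mul _).add (i2 p eyv)
  unfold lap
  simp only [e1, e2]
  rw [← integral_finsetSum _ fun i _ => i2 p (exv i), ← integral_const_mul, ← integral_const_mul,
    ← integral_add ((integrable_finsetSum _ fun i _ => i2 p (exv i)).const_mul _) (i2 p eyv),
    ← integral_sub i3 ((i1 p eyv).const_mul _)]
  unfold Kx
  congr 1
  ext z'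
  have := lap_mul_const (fun p => k (tt p z')) (wt n z') p
  rw [lap_radial h.c2] at this
  rw [← this, ← Finset.sum_mul]
  unfold lap dd dker
  simp only [hκ]
  ring

theorem tt_contDiff_right {n : ℕ} (p : HV n) {m : WithTop ℕ∞} :
    ContDiff ℝ m (fun p' : HV n => tt p p') := by
  unfold tt
  have h1 : ContDiff ℝ m (fun z : HV n => ‖p.1 - z.1‖ ^ 2) := by
    apply ContDiff.norm_sq ℝ; fun_prop
  fun_prop

theorem Kx_add_mul {n : ℕ} {k : ℝ → ℝ} {r : ℝ} (h : KC k r) (C : ℝ)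
    {f g : HV n → ℝ} (hf : Continuous f) (hg : Continuous g) (p : HV n) :
    Kx n k (fun p => f p + C * g p) p = Kx n k f p + C * Kx n k g p := by
  unfold Kx
  rw [← integral_const_mul, ← integral_add (h.integrable hf p) ((h.integrable hg p).const_mul _)]
  congr 1; ext p'; ring

theorem Kx_green {n : ℕ} {k : ℝ → ℝ} {r : ℝ} (h : KN k r)
    {w : HV n → ℝ} (hw : ContDiff ℝ 2 w) (p : HV n) :
    Kx n (Dop n k) w p = Kx n k (lap n w) p := by
  have hsym : (fun p' => k (tt p p')) = fun p' => k (tt p' p) := by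
    ext p'; rw [tt_symm]
  have := green (n := n) (φ := fun p' => k (tt p p')) (h := w)
    (h.c2.comp (tt_contDiff_right p))
    (by
      obtain ⟨T, hT, hT0⟩ := tt_proper (n := n) r {p} isCompact_singleton
      exact HasCompactSupport.intro hT fun p' hp' => h.supp _ (hT0 p rfl p' hp')) hw
  rw [hsym] at this
  simp only [lap_radial h.c2] at this
  unfold Kx
  simp only [tt_symm p] at this ⊢
  exact this

theorem Kx_comm {n : ℕ} {k b : ℝ → ℝ} {r C : ℝ} (h : KN k r) 
    (hbk : ∀ t, b t = Dop n k t + C * k t) {w : HV n → ℝ} (hw : Continuous w) (p : HV n) :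
    Kx n k (Kx n b w) p = Kx n b (Kx n k w) p := by
  have hadd : ∀ {w : HV n → ℝ}, Continuous w → ∀ p, Kx n b w p = Kx n (Dop n k) w p + C * Kx n k w p := by
    intro w hw p
    unfold Kx
    rw [← integral_const_mul, ← integral_add ((h.dop n).integrable hw p) ((h.kc.integrable hw p).const_mul _)]
    congr 1; ext p'; rw [hbk]; ring
  have hg : ContDiff ℝ 2 (Kx n k w) := Kx_contDiff h hw
  rw [hadd hg.continuous, Kx_green h hg]
  have e : Kx n b w = fun p => lap n (Kx n k w) p + C * Kx n k w p := by
    ext p; rw [hadd hw, lap_Kx h hw]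
  rw [e, Kx_add_mul h.kc C (lap_continuous hg) hg.continuous]

theorem cont_param_int {Z X : Type*} [NormedAddCommGroup Z] [NormedSpace ℝ Z] [FiniteDimensional ℝ Z]
    [NormedAddCommGroup X] [MeasureSpace X] [BorelSpace X] [IsFiniteMeasureOnCompacts (volume : Measure X)]
    {F : Z × X → ℝ} (hF : Continuous F) (hs : LocSupp F) :
    Continuous (fun z => ∫ x, F (z, x)) := by
  have hp : ProperSpace Z := FiniteDimensional.proper ℝ Z
  rw [continuous_iff_continuousAt]
  intro z0
  obtain ⟨T, hT, hT0⟩ := hs (Metric.closedBall z0 1) (isCompact_closedBall z0 1)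
  have := continuousOn_integral_of_compact_support (μ := (volume : Measure X)) (f := fun z x => F (z, x))
    (s := Metric.closedBall z0 1) hT
    (by exact (hF.continuousOn)) (fun z x hz hx => hT0 z hz x hx)
  exact this.continuousAt (Metric.closedBall_mem_nhds z0 one_pos)

noncomputable section
variable {n₁ n₂ : ℕ}

def K1 (k : ℝ → ℝ) (w : HV n₁ × HV n₂ → ℝ) (z : HV n₁ × HV n₂) : ℝ :=
  Kx n₁ k (fun p => w (p, z.2)) z.1

def K2 (k : ℝ → ℝ) (w : HV n₁ × HV n₂ → ℝ) (z : HV n₁ × HV n₂) : ℝ :=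
  Kx n₂ k (fun q => w (z.1, q)) z.2

/-- product kernel -/
def KP (k₁ k₂ : ℝ → ℝ) (y : (HV n₁ × HV n₂) × (HV n₁ × HV n₂)) : ℝ :=
  (k₁ (tt y.1.1 y.2.1) * wt n₁ y.2.1) * (k₂ (tt y.1.2 y.2.2) * wt n₂ y.2.2)

theorem K1_continuous {k : ℝ → ℝ} {r : ℝ} (h : KC k r) {w : HV n₁ × HV n₂ → ℝ} (hw : Continuous w) :
    Continuous (K1 k w) := by
  unfold K1 Kx
  apply cont_param_int (F := fun y : (HV n₁ × HV n₂) × HV n₁ =>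
    k (tt y.1.1 y.2) * wt n₁ y.2 * w (y.2, y.1.2))
  · exact (h.kcont.comp (by fun_prop : Continuous
      fun y : (HV n₁ × HV n₂) × HV n₁ => (y.1.1, y.2))).mul (hw.comp (by fun_prop))
  · intro S hS
    obtain ⟨T, hT, hT0⟩ := h.locSupp (n := n₁) (Prod.fst '' S) (hS.image continuous_fst)
    exact ⟨T, hT, fun z hz x hx => by
      have := hT0 z.1 ⟨z, hz, rfl⟩ x hx
      simp only at this
      simp only [this, zero_mul]⟩

theorem K2_continuous {k : ℝ → ℝ} {r : ℝ} (h : KC k r) {w : HV n₁ × HV n₂ → ℝ} (hw : Continuous w) :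
    Continuous (K2 k w) := by
  unfold K2 Kx
  apply cont_param_int (F := fun y : (HV n₁ × HV n₂) × HV n₂ =>
    k (tt y.1.2 y.2) * wt n₂ y.2 * w (y.1.1, y.2))
  · exact (h.kcont.comp (by fun_prop : Continuous
      fun y : (HV n₁ × HV n₂) × HV n₂ => (y.1.2, y.2))).mul (hw.comp (by fun_prop))
  · intro S hS
    obtain ⟨T, hT, hT0⟩ := h.locSupp (n := n₂) (Prod.snd '' S) (hS.image continuous_snd)
    exact ⟨T, hT, fun z hz x hx => by
      have := hT0 z.2 ⟨z, hz, rfl⟩ x hx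
      simp only at this
      simp only [this, zero_mul]⟩

theorem KP_locSupp {k₁ k₂ : ℝ → ℝ} {r₁ r₂ : ℝ} (h1 : KC k₁ r₁) (h2 : KC k₂ r₂) :
    LocSupp (KP (n₁ := n₁) (n₂ := n₂) k₁ k₂) := by
  intro S hS
  obtain ⟨T, hT, hT0⟩ := h1.locSupp (n := n₁) (Prod.fst '' S) (hS.image continuous_fst)
  obtain ⟨T', hT', hT0'⟩ := h2.locSupp (n := n₂) (Prod.snd '' S) (hS.image continuous_snd)
  refine ⟨T ×ˢ T', hT.prod hT', fun z hz x hx => ?_⟩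
  rw [mem_prod, not_and_or] at hx
  unfold KP
  rcases hx with hx | hx
  · have := hT0 z.1 ⟨z, hz, rfl⟩ x.1 hx
    simp only at this
    simp only [this, zero_mul]
  · have := hT0' z.2 ⟨z, hz, rfl⟩ x.2 hx
    simp only at this
    simp only [this, mul_zero]

theorem KP_continuous {k₁ k₂ : ℝ → ℝ} {r₁ r₂ : ℝ} (h1 : KC k₁ r₁) (h2 : KC k₂ r₂) :
    Continuous (KP (n₁ := n₁) (n₂ := n₂) k₁ k₂) := by
  unfold KP
  exact (h1.kcont.comp (by fun_prop : Continuous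
      fun y : (HV n₁ × HV n₂) × (HV n₁ × HV n₂) => (y.1.1, y.2.1))).mul
    (h2.kcont.comp (by fun_prop : Continuous
      fun y : (HV n₁ × HV n₂) × (HV n₁ × HV n₂) => (y.1.2, y.2.2)))

theorem KP_contDiff {k₁ k₂ : ℝ → ℝ} {r₁ r₂ : ℝ} (h1 : KN k₁ r₁) (h2 : KN k₂ r₂) :
    ContDiff ℝ 2 (KP (n₁ := n₁) (n₂ := n₂) k₁ k₂) := by
  unfold KP
  exact (h1.kcd.comp (by fun_prop : ContDiff ℝ 2
      fun y : (HV n₁ × HV n₂) × (HV n₁ × HV n₂) => (y.1.1, y.2.1))).mul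
    (h2.kcd.comp (by fun_prop : ContDiff ℝ 2
      fun y : (HV n₁ × HV n₂) × (HV n₁ × HV n₂) => (y.1.2, y.2.2)))

theorem KP_integrable {k₁ k₂ : ℝ → ℝ} {r₁ r₂ : ℝ} (h1 : KC k₁ r₁) (h2 : KC k₂ r₂)
    {w : HV n₁ × HV n₂ → ℝ} (hw : Continuous w) (z : HV n₁ × HV n₂) :
    Integrable (fun z' => KP k₁ k₂ (z, z') * w z') := by
  obtain ⟨T, hT, hT0⟩ := KP_locSupp h1 h2 {z} isCompact_singleton
  apply Continuous.integrable_of_hasCompactSupport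
  · exact ((KP_continuous h1 h2).comp (by fun_prop)).mul hw
  · apply HasCompactSupport.intro hT
    intro z' hz'
    rw [hT0 z rfl z' hz', zero_mul]

theorem K12_eq {k₁ k₂ : ℝ → ℝ} {r₁ r₂ : ℝ} (h1 : KC k₁ r₁) (h2 : KC k₂ r₂)
    {w : HV n₁ × HV n₂ → ℝ} (hw : Continuous w) (z : HV n₁ × HV n₂) :
    K1 k₁ (K2 k₂ w) z = ∫ z', KP k₁ k₂ (z, z') * w z' := by
  rw [Measure.volume_eq_prod, integral_prod _ (KP_integrable h1 h2 hw z)]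
  unfold K1 K2 Kx
  congr 1; ext p'
  rw [← integral_const_mul]
  congr 1; ext q'
  simp only [KP]; ring

theorem K21_eq {k₁ k₂ : ℝ → ℝ} {r₁ r₂ : ℝ} (h1 : KC k₁ r₁) (h2 : KC k₂ r₂)
    {w : HV n₁ × HV n₂ → ℝ} (hw : Continuous w) (z : HV n₁ × HV n₂) :
    K2 k₂ (K1 k₁ w) z = ∫ z', KP k₁ k₂ (z, z') * w z' := by
  rw [Measure.volume_eq_prod, integral_prod_symm _ (KP_integrable h1 h2 hw z)]
  unfold K1 K2 Kx
  congr 1; ext p'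
  rw [← integral_const_mul]
  congr 1; ext q'
  simp only [KP]; ring

theorem K12_contDiff {k₁ k₂ : ℝ → ℝ} {r₁ r₂ : ℝ} (h1 : KN k₁ r₁) (h2 : KN k₂ r₂)
    {w : HV n₁ × HV n₂ → ℝ} (hw : Continuous w) : ContDiff ℝ 2 (K1 k₁ (K2 k₂ w)) := by
  have : K1 k₁ (K2 k₂ w) = fun z => ∫ z', KP k₁ k₂ (z, z') * w z' := by
    ext z; exact K12_eq h1.kc h2.kc hw z
  rw [this]
  exact kint_contDiff (KP_contDiff h1 h2) (KP_locSupp h1.kc h2.kc) hw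

def lap1 (w : HV n₁ × HV n₂ → ℝ) (z : HV n₁ × HV n₂) : ℝ := lap n₁ (fun p => w (p, z.2)) z.1
def lap2 (w : HV n₁ × HV n₂ → ℝ) (z : HV n₁ × HV n₂) : ℝ := lap n₂ (fun q => w (z.1, q)) z.2

theorem lap1_K1 {k : ℝ → ℝ} {r : ℝ} (h : KN k r) {w : HV n₁ × HV n₂ → ℝ} (hw : Continuous w)
    (z : HV n₁ × HV n₂) : lap1 (K1 k w) z = K1 (Dop n₁ k) w z := by
  unfold lap1 K1
  exact lap_Kx (w := fun p => w (p, z.2)) h (hw.comp (by fun_prop)) z.1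

theorem lap2_K2 {k : ℝ → ℝ} {r : ℝ} (h : KN k r) {w : HV n₁ × HV n₂ → ℝ} (hw : Continuous w)
    (z : HV n₁ × HV n₂) : lap2 (K2 k w) z = K2 (Dop n₂ k) w z := by
  unfold lap2 K2
  exact lap_Kx (w := fun q => w (z.1, q)) h (hw.comp (by fun_prop)) z.2

theorem K1_green {k : ℝ → ℝ} {r : ℝ} (h : KN k r) {w : HV n₁ × HV n₂ → ℝ} (hw : ContDiff ℝ 2 w)
    (z : HV n₁ × HV n₂) : K1 (Dop n₁ k) w z = K1 k (lap1 w) z :=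
  Kx_green h (hw.comp (by fun_prop)) z.1

theorem K2_green {k : ℝ → ℝ} {r : ℝ} (h : KN k r) {w : HV n₁ × HV n₂ → ℝ} (hw : ContDiff ℝ 2 w)
    (z : HV n₁ × HV n₂) : K2 (Dop n₂ k) w z = K2 k (lap2 w) z :=
  Kx_green h (hw.comp (by fun_prop)) z.2

/-- linear maps embedding the factors -/
theorem lineDeriv_slice1 (w : HV n₁ × HV n₂ → ℝ) (p : HV n₁) (q : HV n₂) (v : HV n₁) :
    lineDeriv ℝ (fun p => w (p, q)) p v = lineDeriv ℝ w (p, q) (v, 0) := by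
  unfold lineDeriv; simp

theorem lineDeriv_slice2 (w : HV n₁ × HV n₂ → ℝ) (p : HV n₁) (q : HV n₂) (v : HV n₂) :
    lineDeriv ℝ (fun q => w (p, q)) q v = lineDeriv ℝ w (p, q) (0, v) := by
  unfold lineDeriv; simp

theorem lineDeriv_contDiff' {E : Type*} [NormedAddCommGroup E] [NormedSpace ℝ E]
    {m m' : WithTop ℕ∞} {f : E → ℝ} (hf : ContDiff ℝ m f) (hm : m' + 1 ≤ m)
    (v : E) : ContDiff ℝ m' (fun p => lineDeriv ℝ f p v) := by
  have : (fun p => lineDeriv ℝ f p v) = fun p => fderiv ℝ f p v := by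
    ext p
    apply DifferentiableAt.lineDeriv_eq_fderiv
    exact hf.differentiable (by rintro rfl; simp at hm) p
  rw [this]
  exact (hf.fderiv_right hm).clm_apply contDiff_const

theorem lap1_continuous {w : HV n₁ × HV n₂ → ℝ} (hw : ContDiff ℝ 2 w) : Continuous (lap1 w) := by
  unfold lap1 lap dd
  simp only [lineDeriv_slice1]
  have h1 : ∀ v, ContDiff ℝ 1 (fun z => lineDeriv ℝ w z v) := fun v =>
    lineDeriv_contDiff' hw (by norm_num) v
  have h2 : ∀ v : HV n₁, Continuous (fun z : HV n₁ × HV n₂ =>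
      lineDeriv ℝ (fun p => lineDeriv ℝ w (p, z.2) (v, 0)) z.1 v) := by
    intro v
    have e := fun z : HV n₁ × HV n₂ => lineDeriv_slice1 (fun z => lineDeriv ℝ w z (v, 0)) z.1 z.2 v
    simp only [e]
    exact (lineDeriv_contDiff' (m' := 0) (h1 (v,0)) (by norm_num) (v,0)).continuous
  have h3 := fun v => (h1 v).continuous
  fun_prop

theorem lap2_continuous {w : HV n₁ × HV n₂ → ℝ} (hw : ContDiff ℝ 2 w) : Continuous (lap2 w) := by
  unfold lap2 lap dd
  simp only [lineDeriv_slice2]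
  have h1 : ∀ v, ContDiff ℝ 1 (fun z => lineDeriv ℝ w z v) := fun v =>
    lineDeriv_contDiff' hw (by norm_num) v
  have h2 : ∀ v : HV n₂, Continuous (fun z : HV n₁ × HV n₂ =>
      lineDeriv ℝ (fun p => lineDeriv ℝ w (z.1, p) (0, v)) z.2 v) := by
    intro v
    have e := fun z : HV n₁ × HV n₂ => lineDeriv_slice2 (fun z => lineDeriv ℝ w z (0, v)) z.1 z.2 v
    simp only [e]
    exact (lineDeriv_contDiff' (m' := 0) (h1 (0,v)) (by norm_num) (0,v)).continuous
  have h3 := fun v => (h1 v).continuous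
  fun_prop

end

theorem glue_deriv {a x : ℝ} {f g f' g' : ℝ → ℝ} (h1 : x ≤ a → HasDerivAt f (f' x) x)
    (h2 : a ≤ x → HasDerivAt g (g' x) x) (e : f a = g a) (e' : f' a = g' a) :
    HasDerivAt (fun x => if x < a then f x else g x) (if x < a then f' x else g' x) x := by
  rcases lt_trichotomy x a with hx | hx | hx
  · rw [if_pos hx]
    apply (h1 hx.le).congr_of_eventuallyEq
    filter_upwards [Iio_mem_nhds hx] with y hy
    exact if_pos hy
  · subst hx
    rw [if_neg (lt_irrefl _)]
    have l := (h1 le_rfl).hasDerivWithinAt (s := Iic x)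
    have r := (h2 le_rfl).hasDerivWithinAt (s := Ici x)
    rw [e'] at l
    have l' : HasDerivWithinAt (fun y => if y < x then f y else g y) (g' x) (Iic x) x := by
      apply l.congr
      · intro y hy
        rcases (mem_Iic.1 hy).lt_or_eq with h | h
        · exact if_pos h
        · rw [h, if_neg (lt_irrefl _), e]
      · rw [if_neg (lt_irrefl _), e]
    have r' : HasDerivWithinAt (fun y => if y < x then f y else g y) (g' x) (Ici x) x := by
      apply r.congr
      · intro y hy
        exact if_neg (not_lt.2 hy)
      · rw [if_neg (lt_irrefl _)]
    have := l'.union r'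
    rwa [Iic_union_Ici, hasDerivWithinAt_univ] at this
  · rw [if_neg (not_lt.2 hx.le)]
    apply (h2 hx.le).congr_of_eventuallyEq
    filter_upwards [Ioi_mem_nhds hx] with y hy
    exact if_neg (not_lt.2 (le_of_lt hy))

theorem glue_cont {a x : ℝ} {f g : ℝ → ℝ} (h1 : x ≤ a → ContinuousAt f x)
    (h2 : a ≤ x → ContinuousAt g x) (e : f a = g a) :
    ContinuousAt (fun x => if x < a then f x else g x) x := by
  rcases lt_trichotomy x a with hx | hx | hx
  · apply (h1 hx.le).congr
    filter_upwards [Iio_mem_nhds hx] with y hy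
    exact (if_pos hy).symm
  · subst hx
    have l := (h1 le_rfl).continuousWithinAt (s := Iic x)
    have r := (h2 le_rfl).continuousWithinAt (s := Ici x)
    have l' : ContinuousWithinAt (fun y => if y < x then f y else g y) (Iic x) x := by
      apply l.congr
      · intro y hy
        rcases (mem_Iic.1 hy).lt_or_eq with h | h
        · exact if_pos h
        · rw [h, if_neg (lt_irrefl _), e]
      · rw [if_neg (lt_irrefl _), e]
    have r' : ContinuousWithinAt (fun y => if y < x then f y else g y) (Ici x) x := by
      apply r.congr
      · intro y hy
        exact if_neg (not_lt.2 hy)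
      · rw [if_neg (lt_irrefl _)]
    have := l'.union r'
    rwa [Iic_union_Ici, continuousWithinAt_univ] at this
  · apply (h2 hx.le).congr
    filter_upwards [Ioi_mem_nhds hx] with y hy
    exact (if_neg (not_lt.2 (le_of_lt hy))).symm

noncomputable section
/-- the parametrix profile and its derivatives, in terms of `s = sqrt ρ` -/
def pG (m : ℕ) (R s : ℝ) : ℝ := (s ^ m)⁻¹ * (1 - s / R) ^ 3
def pG1 (m : ℕ) (R s : ℝ) : ℝ :=
  -(m / 2) * ((s ^ (m + 2))⁻¹ * (1 - s / R) ^ 3) - 3 / (2 * R) * ((s ^ (m + 1))⁻¹ * (1 - s / R) ^ 2)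
def pG2 (m : ℕ) (R s : ℝ) : ℝ :=
  m * (m + 2) / 4 * ((s ^ (m + 4))⁻¹ * (1 - s / R) ^ 3)
    + 3 * (2 * m + 1) / (4 * R) * ((s ^ (m + 3))⁻¹ * (1 - s / R) ^ 2)
    + 3 / (2 * R ^ 2) * ((s ^ (m + 2))⁻¹ * (1 - s / R))
end

theorem hasDerivAt_invpow {s : ℝ} (hs : s ≠ 0) (j : ℕ) :
    HasDerivAt (fun s : ℝ => (s ^ j)⁻¹) (-(j * (s ^ (j + 1))⁻¹)) s := by
  have := (hasDerivAt_pow j s).inv (pow_ne_zero j hs)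
  refine this.congr_deriv ?_
  rcases j with _ | j
  · simp
  · field_simp
    simp; ring

theorem hasDerivAt_bpow {s R : ℝ} (j : ℕ) :
    HasDerivAt (fun s : ℝ => (1 - s / R) ^ (j + 1)) (-((j + 1) / R * (1 - s / R) ^ j)) s := by
  have h : HasDerivAt (fun s : ℝ => 1 - s / R) (-(1 / R)) s :=
    ((hasDerivAt_id s).div_const R).const_sub 1
  refine (h.pow (j + 1)).congr_deriv ?_
  simp; ring

theorem hasDerivAt_pG {ρ R : ℝ} (m : ℕ) (hρ : 0 < ρ) (hR : R ≠ 0) :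
    HasDerivAt (fun ρ => pG m R (√ρ)) (pG1 m R (√ρ)) ρ := by
  have hs : 0 < √ρ := sqrt_pos.2 hρ
  have h0 := hasDerivAt_sqrt hρ.ne'
  have h1 := (hasDerivAt_invpow hs.ne' m).fun_mul (hasDerivAt_bpow (s := √ρ) (R := R) 2)
  have := h1.comp ρ h0
  refine this.congr_deriv ?_
  unfold pG1
  generalize 1 - √ρ / R = b
  field_simp
  push_cast
  ring

theorem hasDerivAt_pG1 {ρ R : ℝ} (m : ℕ) (hρ : 0 < ρ) (hR : R ≠ 0) :
    HasDerivAt (fun ρ => pG1 m R (√ρ)) (pG2 m R (√ρ)) ρ := by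
  have hs : 0 < √ρ := sqrt_pos.2 hρ
  have h0 := hasDerivAt_sqrt hρ.ne'
  have h1 := (hasDerivAt_invpow hs.ne' (m+2)).fun_mul (hasDerivAt_bpow (s := √ρ) (R := R) 2)
  have h2 := (hasDerivAt_invpow hs.ne' (m+1)).fun_mul (hasDerivAt_bpow (s := √ρ) (R := R) 1)
  have h3 := (h1.const_mul (-(m/2:ℝ))).fun_sub (h2.const_mul (3 / (2 * R)))
  have := h3.comp ρ h0
  refine this.congr_deriv ?_
  unfold pG2
  generalize 1 - √ρ / R = b
  field_simp
  push_cast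
  ring

theorem continuousAt_pG2 {ρ R : ℝ} (m : ℕ) (hρ : 0 < ρ) :
    ContinuousAt (fun ρ => pG2 m R (√ρ)) ρ := by
  have hs : 0 < √ρ := sqrt_pos.2 hρ
  unfold pG2
  have h : ∀ j, √ρ ^ j ≠ 0 := fun j => pow_ne_zero j hs.ne'
  have := h (m+2); have := h (m+3); have := h (m+4)
  have hc : ContinuousAt (fun ρ : ℝ => √ρ) ρ := continuous_sqrt.continuousAt
  fun_prop (disch := assumption)

theorem pG_main {m : ℕ} (hm : 1 ≤ m) {R s μ : ℝ} (hs : 0 < s) (hsR : s ≤ R) (hR1 : R ≤ 1)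
    (hK : ((m:ℝ) + 2) * m / 2 + 3 * (m + 2) / 2 + |μ| ≤ 3 / (2 * R ^ 2)) :
    3 / (2 * R ^ 2) * ((s ^ m)⁻¹ * (1 - s / R)) ≤
      2 * s ^ 2 * pG2 m R s + ((m:ℝ) + 2) * (1 + s ^ 2) * pG1 m R s + μ * pG m R s := by
  have hR : 0 < R := hs.trans_le hsR
  have hb0 : 0 ≤ 1 - s / R := by rw [sub_nonneg, div_le_one hR]; exact hsR
  have hb1 : 1 - s / R ≤ 1 := by have : 0 ≤ s / R := by positivity
                                 linarith
  have hP : 0 < (s ^ m)⁻¹ := by positivity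
  have hm' : (1:ℝ) ≤ m := by exact_mod_cast hm
  have id : 2 * s ^ 2 * pG2 m R s + ((m:ℝ) + 2) * (1 + s ^ 2) * pG1 m R s + μ * pG m R s =
      (s ^ m)⁻¹ * (3 * (m - 1) / (2 * R) * s⁻¹ * (1 - s / R) ^ 2 + 3 / R ^ 2 * (1 - s / R)
        - ((m:ℝ) + 2) * m / 2 * (1 - s / R) ^ 3 - 3 * (m + 2) / 2 * (s / R) * (1 - s / R) ^ 2
        + μ * (1 - s / R) ^ 3) := by
    unfold pG pG1 pG2
    generalize 1 - s / R = b
    field_simp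
    ring
  rw [id]
  have hsR' : s / R ≤ 1 := by rw [div_le_one hR]; exact hsR
  have hsR0 : 0 ≤ s / R := by positivity
  set b := 1 - s / R
  have e1 : 3 / (2 * R ^ 2) * ((s ^ m)⁻¹ * b) = (s ^ m)⁻¹ * (3 / (2 * R ^ 2) * b) := by ring
  rw [e1]
  apply mul_le_mul_of_nonneg_left _ hP.le
  have t1 : 0 ≤ 3 * ((m:ℝ) - 1) / (2 * R) * s⁻¹ * b ^ 2 := by
    have : 0 ≤ (m:ℝ) - 1 := by linarith
    positivity
  have hb3 : b ^ 3 ≤ b := by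
    calc b ^ 3 ≤ b ^ 1 := pow_le_pow_of_le_one hb0 hb1 (by norm_num)
      _ = b := pow_one b
  have hb2 : b ^ 2 ≤ b := by
    calc b ^ 2 ≤ b ^ 1 := pow_le_pow_of_le_one hb0 hb1 (by norm_num)
      _ = b := pow_one b
  have hb30 : 0 ≤ b ^ 3 := by positivity
  have hb20 : 0 ≤ b ^ 2 := by positivity
  have t2 : ((m:ℝ) + 2) * m / 2 * b ^ 3 ≤ ((m:ℝ) + 2) * m / 2 * b :=
    mul_le_mul_of_nonneg_left hb3 (by positivity)
  have t3 : 3 * ((m:ℝ) + 2) / 2 * (s / R) * b ^ 2 ≤ 3 * ((m:ℝ) + 2) / 2 * b := by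
    have : (s / R) * b ^ 2 ≤ b := by nlinarith
    calc 3 * ((m:ℝ) + 2) / 2 * (s / R) * b ^ 2 = 3 * ((m:ℝ) + 2) / 2 * ((s / R) * b ^ 2) := by ring
      _ ≤ _ := mul_le_mul_of_nonneg_left this (by positivity)
  have t4 : -(|μ| * b) ≤ μ * b ^ 3 := by
    have h1 : |μ * b ^ 3| ≤ |μ| * b := by
      rw [abs_mul, abs_of_nonneg hb30]
      exact mul_le_mul_of_nonneg_left hb3 (abs_nonneg _)
    exact (abs_le.1 h1).1
  have t5 := mul_le_mul_of_nonneg_right hK hb0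
  have t6 : 3 / R ^ 2 * b = 2 * (3 / (2 * R ^ 2) * b) := by field_simp
  rw [t6]
  linarith

/-- crude bounds near the singularity -/
theorem pG_bounds {m : ℕ} {R s : ℝ} (hs : 0 < s) (hsR : s ≤ R) (hR1 : R ≤ 1) :
    0 ≤ pG2 m R s ∧ pG1 m R s ≤ 0 ∧ 0 ≤ pG m R s ∧
    pG m R s ≤ (s ^ (m + 2))⁻¹ ∧ -pG1 m R s ≤ (m + 3 / R) * (s ^ (m + 2))⁻¹ ∧
    s ^ 2 * pG2 m R s ≤ (m * (m + 2) + 3 * (2 * m + 1) / R + 3 / R ^ 2) * (s ^ (m + 2))⁻¹ := by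
  have hR : 0 < R := hs.trans_le hsR
  have hs1 : s ≤ 1 := hsR.trans hR1
  have hb0 : 0 ≤ 1 - s / R := by rw [sub_nonneg, div_le_one hR]; exact hsR
  have hb1 : 1 - s / R ≤ 1 := by have : 0 ≤ s / R := by positivity
                                 linarith
  have hQ : 0 < (s ^ (m + 2))⁻¹ := by positivity
  have e0 : (s ^ m)⁻¹ = (s ^ (m + 2))⁻¹ * s ^ 2 := by field_simp; ring
  have e1 : (s ^ (m + 1))⁻¹ = (s ^ (m + 2))⁻¹ * s := by field_simp; ring
  have e3 : (s ^ (m + 3))⁻¹ = (s ^ (m + 2))⁻¹ * s⁻¹ := by field_simp; ring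
  have e4 : (s ^ (m + 4))⁻¹ = (s ^ (m + 2))⁻¹ * (s⁻¹) ^ 2 := by field_simp; ring
  unfold pG pG1 pG2
  rw [e0, e1, e3, e4]
  set b := 1 - s / R
  set Q := (s ^ (m + 2))⁻¹
  have hb3 : b ^ 3 ≤ 1 := pow_le_one₀ hb0 hb1
  have hb2 : b ^ 2 ≤ 1 := pow_le_one₀ hb0 hb1
  have hs2 : s ^ 2 ≤ 1 := pow_le_one₀ hs.le hs1
  refine ⟨by positivity, ?_, by positivity, ?_, ?_, ?_⟩
  · have : 0 ≤ (m / 2 : ℝ) * (Q * b ^ 3) + 3 / (2 * R) * (Q * s * b ^ 2) := by positivity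
    linarith
  · calc Q * s ^ 2 * b ^ 3 ≤ Q * 1 * 1 := by gcongr
      _ = Q := by ring
  · calc -(-(m / 2 : ℝ) * (Q * b ^ 3) - 3 / (2 * R) * (Q * s * b ^ 2))
        = m / 2 * (Q * b ^ 3) + 3 / (2 * R) * (Q * s * b ^ 2) := by ring
      _ ≤ m / 2 * (Q * 1) + 3 / (2 * R) * (Q * 1 * 1) := by gcongr
      _ ≤ m / 2 * (Q * 1) + 3 / (2 * R) * (Q * 1 * 1) + (m / 2 * (Q * 1) + 3 / (2 * R) * (Q * 1 * 1)) :=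
          le_add_of_nonneg_right (by positivity)
      _ = (m + 3 / R) * Q := by field_simp; ring
  · calc s ^ 2 * (m * (m + 2) / 4 * (Q * s⁻¹ ^ 2 * b ^ 3) + 3 * (2 * m + 1) / (4 * R) * (Q * s⁻¹ * b ^ 2)
          + 3 / (2 * R ^ 2) * (Q * b))
        = m * (m + 2) / 4 * (Q * b ^ 3) + 3 * (2 * m + 1) / (4 * R) * (Q * s * b ^ 2)
          + 3 / (2 * R ^ 2) * (Q * s ^ 2 * b) := by field_simp
      _ ≤ m * (m + 2) / 4 * (Q * 1) + 3 * (2 * m + 1) / (4 * R) * (Q * 1 * 1)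
          + 3 / (2 * R ^ 2) * (Q * 1 * 1) := by gcongr
      _ ≤ m * (m + 2) / 1 * (Q * 1) + 3 * (2 * m + 1) / (1 * R) * (Q * 1 * 1)
          + 3 / (1 * R ^ 2) * (Q * 1 * 1) := by gcongr <;> norm_num
      _ = _ := by ring

theorem near_bounds {g0 g1 g2 ρ ε C1 C2 Q : ℝ} (b2 : 0 ≤ g2) (b1 : g1 ≤ 0) (b0 : 0 ≤ g0)
    (B0 : g0 ≤ Q) (B1 : -g1 ≤ C1 * Q) (B2 : ε * g2 ≤ C2 * Q) (hρ0 : 0 ≤ ρ) (hρε : ρ < ε)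
    (hε1 : ε ≤ 1) :
    g1 + g2 * (ρ - ε) ≤ 0 ∧ -((C1 + C2) * Q) ≤ g1 + g2 * (ρ - ε) ∧
    |g0 + g1 * (ρ - ε) + g2 / 2 * (ρ - ε) ^ 2| ≤ (1 + C1 + C2) * Q := by
  have p1 : g2 * (ρ - ε) ≤ 0 := mul_nonpos_of_nonneg_of_nonpos b2 (by linarith)
  have p2 : 0 ≤ g2 * ρ := mul_nonneg b2 hρ0
  have p3 : (C1 + C2) * Q = C1 * Q + C2 * Q := by ring
  have p4 : (1 + C1 + C2) * Q = Q + C1 * Q + C2 * Q := by ring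
  have a1 : 0 ≤ g1 * (ρ - ε) := mul_nonneg_of_nonpos_of_nonpos b1 (by linarith)
  have a2 : 0 ≤ (-g1) * (1 - (ε - ρ)) := mul_nonneg (by linarith) (by linarith)
  have a2' : g1 * (ρ - ε) ≤ -g1 := by linarith [(by ring : (-g1) * (1 - (ε - ρ)) = -g1 - g1 * (ρ - ε))]
  have h2 : (ρ - ε) ^ 2 ≤ ε := by
    have q1 : 0 ≤ (ε - (ε - ρ)) * 1 := by linarith
    have q2 : 0 ≤ (ε - ρ) * (1 - (ε - ρ)) := mul_nonneg (by linarith) (by linarith)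
    linarith [(by ring : (ε - ρ) * (1 - (ε - ρ)) = (ε - ρ) - (ρ - ε) ^ 2)]
  have a3 : 0 ≤ g2 * (ε - (ρ - ε) ^ 2) := mul_nonneg b2 (by linarith)
  have a3' : g2 * (ρ - ε) ^ 2 ≤ ε * g2 := by
    linarith [(by ring : g2 * (ε - (ρ - ε) ^ 2) = ε * g2 - g2 * (ρ - ε) ^ 2)]
  have a4 : 0 ≤ g2 * (ρ - ε) ^ 2 := by positivity
  have a5 : g2 / 2 * (ρ - ε) ^ 2 = (g2 * (ρ - ε) ^ 2) / 2 := by ring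
  have a6 : g2 * (ρ - ε) = g2 * ρ - ε * g2 := by ring
  refine ⟨by linarith, by linarith, ?_⟩
  rw [a5, abs_of_nonneg (by linarith)]
  linarith

set_option maxHeartbeats 1000000 in
theorem parametrix (n₁ n₂ : ℕ) (hn₁ : 1 ≤ n₁) (μ : ℝ) :
    ∃ R : ℝ, 0 < R ∧ R ≤ 1 ∧ ∃ c : ℝ, 0 < c ∧ ∃ C : ℝ, 0 < C ∧ ∀ ε : ℝ, 0 < ε → ε < R ^ 2 →
    ∃ f f1 f2 : ℝ → ℝ, (∀ x, HasDerivAt f (f1 x) x) ∧ (∀ x, HasDerivAt f1 (f2 x) x) ∧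
      Continuous f2 ∧ (∀ x, R ^ 2 < x → f x = 0) ∧
      ∀ t₁ t₂ : ℝ, 0 ≤ t₁ → 0 ≤ t₂ →
        c * (if t₁ + t₂ ≤ R ^ 2 / 4 then 1 else 0)
          - C * (√ε ^ (n₁ + n₂ + 2))⁻¹ * (if t₁ + t₂ < ε then 1 else 0) ≤
        (t₁ ^ 2 + t₂ ^ 2 + 2 * (t₁ + t₂)) * f2 (t₁ + t₂) +
          (((n₁ + n₂ + 2 : ℕ) : ℝ) + (n₁ + 1) * t₁ + (n₂ + 1) * t₂) * f1 (t₁ + t₂)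
          + μ * f (t₁ + t₂) := by
  set m := n₁ + n₂ with hmdef
  have hm : 1 ≤ m := by omega
  set K : ℝ := ((m:ℝ) + 2) * m / 2 + 3 * (m + 2) / 2 + |μ| with hKdef
  have hK0 : 1 ≤ K := by
    have : (1:ℝ) ≤ m := by exact_mod_cast hm
    have := abs_nonneg μ
    nlinarith
  set R : ℝ := K⁻¹ with hRdef
  have hR : 0 < R := by positivity
  have hR1 : R ≤ 1 := inv_le_one_of_one_le₀ hK0
  have hKR : K ≤ 3 / (2 * R ^ 2) := by
    rw [hRdef]; field_simp; nlinarith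
  set c : ℝ := 3 / (4 * R ^ 2) with hc
  set C1 : ℝ := (m + 3 / R) with hC1
  set C2 : ℝ := (m * (m + 2) + 3 * (2 * m + 1) / R + 3 / R ^ 2) with hC2
  have hC1p : 0 ≤ C1 := by positivity
  have hC2p : 0 ≤ C2 := by positivity
  set C : ℝ := 2 * (m + 2) * (C1 + C2) + |μ| * (1 + C1 + C2) + c with hCdef
  have hcp : 0 < c := by positivity
  have hCp : 0 < C := by positivity
  refine ⟨R, hR, hR1, c, hcp, C, hCp, fun ε hε hεR => ?_⟩
  have hσ : 0 < √ε := sqrt_pos.2 hε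
  have hσR : √ε ≤ R := by rw [sqrt_le_left hR.le]; exact hεR.le
  have hsq : √ε ^ 2 = ε := sq_sqrt hε.le
  obtain ⟨b2, b1, b0, B0, B1, B2⟩ := pG_bounds (m := m) hσ hσR hR1
  set g0 := pG m R √ε with hg0
  set g1 := pG1 m R √ε with hg1
  set g2 := pG2 m R √ε with hg2
  have hR2 : √(R ^ 2) = R := sqrt_sq hR.le
  have z0 : pG m R √(R ^ 2) = 0 := by rw [hR2]; unfold pG; rw [div_self hR.ne']; simp
  have z1 : pG1 m R √(R ^ 2) = 0 := by rw [hR2]; unfold pG1; rw [div_self hR.ne']; simp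
  have z2 : pG2 m R √(R ^ 2) = 0 := by rw [hR2]; unfold pG2; rw [div_self hR.ne']; simp
  set h0 : ℝ → ℝ := fun x => if x < R ^ 2 then pG m R √x else 0
  set h1 : ℝ → ℝ := fun x => if x < R ^ 2 then pG1 m R √x else 0
  set h2 : ℝ → ℝ := fun x => if x < R ^ 2 then pG2 m R √x else 0
  have dh0 : ∀ x, 0 < x → HasDerivAt h0 (h1 x) x := fun x hx =>
    glue_deriv (f := fun x => pG m R √x) (f' := fun x => pG1 m R √x) (g := fun _ => 0)
      (g' := fun _ => 0) (fun _ => hasDerivAt_pG m hx hR.ne') (fun _ => hasDerivAt_const x 0) z0 z1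
  have dh1 : ∀ x, 0 < x → HasDerivAt h1 (h2 x) x := fun x hx =>
    glue_deriv (f := fun x => pG1 m R √x) (f' := fun x => pG2 m R √x) (g := fun _ => 0)
      (g' := fun _ => 0) (fun _ => hasDerivAt_pG1 m hx hR.ne') (fun _ => hasDerivAt_const x 0) z1 z2
  have ch2 : ∀ x, 0 < x → ContinuousAt h2 x := fun x hx =>
    glue_cont (f := fun x => pG2 m R √x) (g := fun _ => 0)
      (fun _ => continuousAt_pG2 m hx) (fun _ => continuousAt_const) z2
  have eh0 : h0 ε = g0 := if_pos hεR
  have eh1 : h1 ε = g1 := if_pos hεR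
  have eh2 : h2 ε = g2 := if_pos hεR
  refine ⟨fun x => if x < ε then g0 + g1 * (x - ε) + g2 / 2 * (x - ε) ^ 2 else h0 x,
    fun x => if x < ε then g1 + g2 * (x - ε) else h1 x,
    fun x => if x < ε then g2 else h2 x, ?_, ?_, ?_, ?_, ?_⟩
  · intro x
    apply glue_deriv (f := fun x => g0 + g1 * (x - ε) + g2 / 2 * (x - ε) ^ 2)
      (f' := fun x => g1 + g2 * (x - ε)) (g := h0) (g' := h1)
    · intro _
      have a := (hasDerivAt_id x).sub_const ε
      have := ((a.const_mul g1).const_add g0).fun_add ((a.fun_pow 2).const_mul (g2 / 2))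
      refine this.congr_deriv ?_
      simp; ring
    · intro hx; exact dh0 x (hε.trans_le hx)
    · simp [eh0]
    · simp [eh1]
  · intro x
    apply glue_deriv (f := fun x => g1 + g2 * (x - ε))
      (f' := fun x => g2) (g := h1) (g' := h2)
    · intro _
      have a := (hasDerivAt_id x).sub_const ε
      have := ((a.const_mul g2).const_add g1)
      refine this.congr_deriv ?_
      simp
    · intro hx; exact dh1 x (hε.trans_le hx)
    · simp [eh1]
    · simp [eh2]
  · rw [continuous_iff_continuousAt]
    intro x
    exact glue_cont (f := fun _ => g2) (g := h2) (fun _ => continuousAt_const)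
      (fun hx => ch2 x (hε.trans_le hx)) eh2.symm
  · intro x hx
    have hx' : ¬ x < ε := not_lt.2 (hεR.trans hx).le
    simp only [if_neg hx']
    exact if_neg (not_lt.2 hx.le)
  · intro t₁ t₂ ht1 ht2
    set ρ := t₁ + t₂ with hρ
    have hρ0 : 0 ≤ ρ := add_nonneg ht1 ht2
    have hcoef : (n₁ + 1) * t₁ + (n₂ + 1) * t₂ ≤ ((m:ℝ) + 2) * ρ := by
      rw [hρ, hmdef]; push_cast
      have := mul_nonneg (Nat.cast_nonneg (α := ℝ) n₁) ht2
      have := mul_nonneg (Nat.cast_nonneg (α := ℝ) n₂) ht1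
      nlinarith
    have hcoef0 : 0 ≤ (n₁ + 1) * t₁ + (n₂ + 1) * t₂ := by positivity
    have hN : ((m + 2 : ℕ) : ℝ) = (m:ℝ) + 2 := by push_cast; ring
    by_cases hρε : ρ < ε
    · simp only [if_pos hρε]
      have hε1 : ε ≤ 1 := by
        have : R ^ 2 ≤ 1 := pow_le_one₀ hR.le hR1
        linarith
      set Q := (√ε ^ (m + 2))⁻¹ with hQ
      have hQ1 : 1 ≤ Q := by
        rw [hQ]
        apply (one_le_inv₀ (by positivity)).2
        exact pow_le_one₀ hσ.le (hσR.trans hR1)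
      rw [hsq] at B2
      obtain ⟨F1a, F1b, F0⟩ := near_bounds b2 b1 b0 B0 B1 B2 hρ0 hρε hε1
      have F0' : -(|μ| * ((1 + C1 + C2) * Q)) ≤ μ * (g0 + g1 * (ρ - ε) + g2 / 2 * (ρ - ε) ^ 2) := by
        have : |μ * (g0 + g1 * (ρ - ε) + g2 / 2 * (ρ - ε) ^ 2)| ≤ |μ| * ((1 + C1 + C2) * Q) := by
          rw [abs_mul]; exact mul_le_mul_of_nonneg_left F0 (abs_nonneg _)
        exact (abs_le.1 this).1
      have F2 : 0 ≤ (t₁ ^ 2 + t₂ ^ 2 + 2 * ρ) * g2 := by positivity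
      have F1' : -(2 * (m + 2) * ((C1 + C2) * Q)) ≤
          (((m + 2 : ℕ) : ℝ) + (n₁ + 1) * t₁ + (n₂ + 1) * t₂) * (g1 + g2 * (ρ - ε)) := by
        rw [hN]
        set A := (m:ℝ) + 2 + (n₁ + 1) * t₁ + (n₂ + 1) * t₂ with hA
        have hA0 : 0 ≤ A := by positivity
        have hA1 : A ≤ 2 * (m + 2) := by
          have : ((m:ℝ) + 2) * ρ ≤ (m + 2) * 1 := by
            apply mul_le_mul_of_nonneg_left _ (by positivity); linarith
          linarith
        have c1 : A * -((C1 + C2) * Q) ≤ A * (g1 + g2 * (ρ - ε)) := mul_le_mul_of_nonneg_left F1b hA0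
        have c2 : A * ((C1 + C2) * Q) ≤ (2 * (m + 2)) * ((C1 + C2) * Q) :=
          mul_le_mul_of_nonneg_right hA1 (by positivity)
        linarith
      have hcC : c * (if ρ ≤ R ^ 2 / 4 then 1 else 0) ≤ c * Q := by
        apply mul_le_mul_of_nonneg_left _ hcp.le
        split_ifs <;> linarith
      have : C * Q = (2 * (m + 2) * ((C1 + C2) * Q)) + (|μ| * ((1 + C1 + C2) * Q)) + c * Q := by
        rw [hCdef]; ring
      rw [mul_one]
      linarith
    · simp only [if_neg hρε, mul_zero, sub_zero]
      push Not at hρε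
      have hρp : 0 < ρ := hε.trans_le hρε
      by_cases hρR : ρ < R ^ 2
      · simp only [h0, h1, h2, if_pos hρR]
        have hs : 0 < √ρ := sqrt_pos.2 hρp
        have hsR : √ρ ≤ R := by rw [sqrt_le_left hR.le]; exact hρR.le
        have hsq' : √ρ ^ 2 = ρ := sq_sqrt hρ0
        have main := pG_main hm hs hsR hR1 hKR
        obtain ⟨d2, d1, d0, -⟩ := pG_bounds (m := m) hs hsR hR1
        rw [hsq'] at main
        have l1 : 2 * ρ * pG2 m R √ρ ≤ (t₁ ^ 2 + t₂ ^ 2 + 2 * ρ) * pG2 m R √ρ := by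
          apply mul_le_mul_of_nonneg_right _ d2
          linarith [sq_nonneg t₁, sq_nonneg t₂]
        have l2 : ((m:ℝ) + 2) * (1 + ρ) * pG1 m R √ρ ≤
            (((m + 2 : ℕ) : ℝ) + (n₁ + 1) * t₁ + (n₂ + 1) * t₂) * pG1 m R √ρ := by
          apply mul_le_mul_of_nonpos_right _ d1
          rw [hN]; linarith
        have hb0 : 0 ≤ 1 - √ρ / R := by rw [sub_nonneg, div_le_one hR]; exact hsR
        have l3 : c * (if ρ ≤ R ^ 2 / 4 then 1 else 0) ≤ 3 / (2 * R ^ 2) * ((√ρ ^ m)⁻¹ * (1 - √ρ / R)) := by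
          split_ifs with hq
          · have hq1 : √ρ ≤ R / 2 := by
              rw [sqrt_le_left (by positivity)]; linarith [hq, (by ring : (R/2)^2 = R^2/4)]
            have hq2 : 1 / 2 ≤ 1 - √ρ / R := by
              have : √ρ / R ≤ 1 / 2 := by rw [div_le_iff₀ hR]; linarith
              linarith
            have hq3 : 1 ≤ (√ρ ^ m)⁻¹ := by
              apply (one_le_inv₀ (by positivity)).2
              exact pow_le_one₀ hs.le (hsR.trans hR1)
            have : 1 / 2 ≤ (√ρ ^ m)⁻¹ * (1 - √ρ / R) := hq2.trans (le_mul_of_one_le_left hb0 hq3)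
            calc c * 1 = 3 / (2 * R ^ 2) * (1 / 2) := by rw [hc]; field_simp; norm_num
              _ ≤ _ := mul_le_mul_of_nonneg_left this (by positivity)
          · rw [mul_zero]; positivity
        linarith
      · simp only [h0, h1, h2, if_neg hρR]
        have : ¬ ρ ≤ R ^ 2 / 4 := by
          push Not at hρR ⊢
          have : 0 < R ^ 2 := by positivity
          linarith
        rw [if_neg this]; simp

theorem sq_half_le_cosh (x : ℝ) : x ^ 2 / 2 ≤ cosh x - 1 := by
  have h1 : cosh x = 1 + 2 * sinh (x / 2) ^ 2 := by
    have := cosh_two_mul (x / 2)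
    rw [cosh_sq, (by ring : 2 * (x / 2) = x)] at this
    linarith
  have h2 : (x / 2) ^ 2 ≤ sinh (x / 2) ^ 2 := by
    rw [sq_le_sq]
    rcases le_total 0 (x / 2) with h | h
    · rw [abs_of_nonneg h, abs_of_nonneg (sinh_nonneg_iff.2 h)]; exact self_le_sinh_iff.2 h
    · rw [abs_of_nonpos h, abs_of_nonpos (sinh_nonpos_iff.2 h)]
      have := sinh_le_self_iff.2 h
      linarith
  have h3 : x ^ 2 = 4 * (x / 2) ^ 2 := by ring
  linarith

theorem tt_bounds {n : ℕ} {p p' : HV n} {r : ℝ} (h : tt p p' ≤ r) :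
    (p.2 - p'.2) ^ 2 ≤ 2 * r ∧ ‖p.1 - p'.1‖ ^ 2 ≤ 2 * r * exp (p.2 + p'.2) := by
  have e : tt p p' = ‖p.1 - p'.1‖ ^ 2 * exp (-(p.2 + p'.2)) / 2 + (cosh (p.2 - p'.2) - 1) := by
    unfold tt; rfl
  have h1 := sq_half_le_cosh (p.2 - p'.2)
  have h2 : 0 ≤ ‖p.1 - p'.1‖ ^ 2 * exp (-(p.2 + p'.2)) / 2 := by positivity
  have h3 : 0 ≤ (p.2 - p'.2) ^ 2 := sq_nonneg _
  refine ⟨by linarith, ?_⟩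
  have h4 : ‖p.1 - p'.1‖ ^ 2 * exp (-(p.2 + p'.2)) ≤ 2 * r := by linarith
  rw [exp_neg, mul_inv_le_iff₀ (exp_pos _)] at h4
  exact h4

theorem tt_eq_zero {n : ℕ} {p p' : HV n} (h : tt p p' = 0) : p = p' := by
  obtain ⟨h1, h2⟩ := tt_bounds h.le
  simp only [mul_zero, zero_mul] at h1 h2
  have a := pow_eq_zero_iff (two_ne_zero) |>.1 (le_antisymm h1 (sq_nonneg _))
  have b := pow_eq_zero_iff (two_ne_zero) |>.1 (le_antisymm h2 (sq_nonneg _))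
  exact Prod.ext (sub_eq_zero.1 (norm_eq_zero.1 b)) (sub_eq_zero.1 a)

theorem tt_small {n : ℕ} (p : HV n) {U : Set (HV n)} (hU : U ∈ 𝓝 p) :
    ∃ ε > 0, ∀ p', tt p p' ≤ ε → p' ∈ U := by
  obtain ⟨T, hT, hT'⟩ := tt_proper 1 {p} isCompact_singleton
  have hc : IsCompact (T \ interior U) := hT.diff isOpen_interior
  have hcont : Continuous (fun p' : HV n => tt p p') := (tt_contDiff_right p (m := 0)).continuous
  by_cases hne : (T \ interior U).Nonempty
  · obtain ⟨q, hq, hmin⟩ := hc.exists_isMinOn hne hcont.continuousOn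
    have hq0 : 0 < tt p q := by
      refine lt_of_le_of_ne (tt_nonneg p q) fun h => ?_
      have := tt_eq_zero h.symm
      subst this
      exact hq.2 (mem_interior_iff_mem_nhds.2 hU)
    refine ⟨min 1 (tt p q / 2), by positivity, fun p' hp' => ?_⟩
    by_contra hcon
    have h1 : p' ∈ T := by
      by_contra h
      have := hT' p rfl p' h
      have := hp'.trans (min_le_left _ _)
      linarith
    have h2 : tt p q ≤ tt p p' := hmin ⟨h1, fun h => hcon (interior_subset h)⟩
    have := hp'.trans (min_le_right _ _)
    linarith
  · refine ⟨1, one_pos, fun p' hp' => ?_⟩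
    by_contra hcon
    apply hne
    refine ⟨p', ?_, fun h => hcon (interior_subset h)⟩
    by_contra h
    have := hT' p rfl p' h
    linarith

theorem mass_inv {n : ℕ} {k : ℝ → ℝ} {r : ℝ} (h : KC k r) (p : HV n) :
    Kx n k (fun _ => 1) p = Kx n k (fun _ => 1) 0 := by
  have hi : ∀ p, Integrable (fun p' : HV n => k (tt p p') * wt n p' * 1) :=
    fun p => h.integrable continuous_const p
  have key : ∀ p : HV n, Kx n k (fun _ => 1) p =
      ∫ s : ℝ, ∫ x : EuclideanSpace ℝ (Fin n), k (tt p (x, s)) * wt n (x, s) * 1 := by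
    intro p
    unfold Kx
    rw [Measure.volume_eq_prod]
    exact integral_prod_symm _ (by rw [← Measure.volume_eq_prod]; exact hi p)
  rw [key, key]
  set H : ℝ → ℝ := fun s => ∫ x : EuclideanSpace ℝ (Fin n), k (tt 0 (x, s)) * wt n (x, s) * 1
  have step : ∀ s : ℝ, (∫ x : EuclideanSpace ℝ (Fin n), k (tt p (x, s)) * wt n (x, s) * 1) = H (s - p.2) := by
    intro s
    set g : EuclideanSpace ℝ (Fin n) → ℝ := fun x => k (tt p (x, s)) * wt n (x, s) * 1
    have h1 : ∫ x, g (p.1 + x) = ∫ x, g x := integral_add_left_eq_self g p.1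
    have h2 := Measure.integral_comp_smul_of_nonneg (volume : Measure (EuclideanSpace ℝ (Fin n)))
      (fun x => g (p.1 + x)) (exp p.2) (hR := (exp_pos _).le)
    rw [finrank_euclideanSpace_fin, h1] at h2
    have h3 : ∫ x, g x = exp p.2 ^ n * ∫ x, g (p.1 + exp p.2 • x) := by
      rw [h2, smul_eq_mul, ← mul_assoc, mul_inv_cancel₀ (by positivity), one_mul]
    change ∫ x, g x = _
    rw [h3, ← integral_const_mul]
    congr 1; ext x
    simp only [g]
    have e1 : tt p (p.1 + exp p.2 • x, s) = tt 0 (x, s - p.2) := by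
      unfold tt
      simp only [sub_add_cancel_left, norm_neg, norm_smul, Prod.fst_zero, Prod.snd_zero, zero_sub, neg_sub, zero_add]
      rw [norm_of_nonneg (exp_pos _).le, mul_pow, ← exp_nat_mul]
      have : exp ((2:ℕ) * p.2) * exp (-(p.2 + s)) = exp (p.2 - s) := by
        rw [← exp_add]; congr 1; push_cast; ring
      rw [← this]; ring
    have e2 : exp p.2 ^ n * wt n (p.1 + exp p.2 • x, s) = wt n (x, s - p.2) := by
      unfold wt
      simp only
      rw [← exp_nat_mul, ← exp_add]; congr 1; ring
    rw [e1, ← e2]; ring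
  simp_rw [step]
  exact integral_sub_right_eq_self H p.2

noncomputable def chi (ε t : ℝ) : ℝ := max 0 (2 - t / ε)

theorem chi_kc {ε : ℝ} (hε : 0 < ε) : KC (chi ε) (2 * ε) := by
  constructor
  · unfold chi; fun_prop
  · intro t ht
    unfold chi
    apply max_eq_left
    rw [sub_nonpos, le_div_iff₀ hε]; exact ht.le

theorem chi_nonneg (ε t : ℝ) : 0 ≤ chi ε t := le_max_left _ _

theorem one_le_chi {ε t : ℝ} (hε : 0 < ε) (h : t ≤ ε) : 1 ≤ chi ε t := by
  unfold chi
  apply le_max_of_le_right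
  have : t / ε ≤ 1 := (div_le_one hε).2 h
  linarith

theorem chi_le {ε t : ℝ} (hε : 0 < ε) (h : 0 ≤ t) : chi ε t ≤ 2 := by
  unfold chi
  have : 0 ≤ t / ε := by positivity
  apply max_le <;> linarith

theorem chi_mass (n : ℕ) : ∃ C > 0, ∀ ε, 0 < ε → ε ≤ 1 → 
    Kx n (chi ε) (fun _ => 1) 0 ≤ C * √ε ^ (n + 1) := by
  haveI := hv_haar n
  set V : ℝ := (volume : Measure (HV n)).real (Metric.ball 0 1)
  refine ⟨2 * exp (2 * n) * (2 * exp 1) ^ (n + 1) * V + 1, by positivity, fun ε hε hε1 => ?_⟩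
  have hs0 : 0 < √ε := sqrt_pos.2 hε
  have hs1 : √ε ≤ 1 := by rw [sqrt_le_left zero_le_one]; simpa using hε1
  have hsq : √ε ^ 2 = ε := sq_sqrt hε.le
  set B := Metric.closedBall (0 : HV n) (2 * exp 1 * √ε) with hB
  have e1 : (1:ℝ) ≤ exp 1 := one_le_exp zero_le_one
  have pt : ∀ p' : HV n, chi ε (tt 0 p') * wt n p' * 1 ≤ B.indicator (fun _ => 2 * exp (2 * n)) p' := by
    intro p'
    by_cases hc : tt 0 p' ≤ 2 * ε
    · obtain ⟨h1, h2⟩ := tt_bounds hc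
      simp only [Prod.fst_zero, Prod.snd_zero, zero_sub, norm_neg, zero_add] at h1 h2
      have h1' : |p'.2| ≤ 2 * √ε := by
        apply abs_le_of_sq_le_sq _ (by positivity)
        rw [mul_pow, hsq]; linarith [neg_sq p'.2]
      have h3 : |p'.2| ≤ 2 := by linarith
      have h4 : exp p'.2 ≤ exp 2 := exp_le_exp.2 ((le_abs_self _).trans h3)
      have h5 : ‖p'.1‖ ≤ 2 * exp 1 * √ε := by
        apply le_of_sq_le_sq _ (by positivity)
        rw [mul_pow, mul_pow, hsq, ← exp_nat_mul]
        calc ‖p'.1‖ ^ 2 ≤ 2 * (2 * ε) * exp p'.2 := h2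
          _ ≤ 2 * (2 * ε) * exp 2 := by gcongr
          _ = _ := by norm_num; ring
      have hmem : p' ∈ B := by
        rw [hB, Metric.mem_closedBall, dist_zero_right, Prod.norm_def]
        apply max_le h5
        rw [norm_eq_abs]
        nlinarith
      rw [indicator_of_mem hmem]
      have hw : wt n p' ≤ exp (2 * n) := by
        unfold wt
        apply exp_le_exp.2
        have := (abs_le.1 h3).1
        have hn : (0:ℝ) ≤ n := n.cast_nonneg
        nlinarith
      rw [mul_one]
      exact mul_le_mul (chi_le hε (tt_nonneg _ _)) hw (wt_pos _ _).le (by norm_num)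
    · rw [(chi_kc hε).supp _ (not_le.1 hc)]
      simp only [zero_mul]
      exact indicator_nonneg (fun _ _ => by positivity) _
  have hBm : MeasurableSet B := Metric.isClosed_closedBall.measurableSet
  have hBfin : volume B < ⊤ := (isCompact_closedBall _ _).measure_lt_top
  have hIntg : Integrable (B.indicator (fun _ => 2 * exp (2 * n)) : HV n → ℝ) := by
    rw [integrable_indicator_iff hBm]
    exact integrableOn_const hBfin.ne
  have : Kx n (chi ε) (fun _ => 1) 0 ≤ ∫ p', B.indicator (fun _ => 2 * exp (2 * n)) p' :=
    integral_mono ((chi_kc hε).integrable continuous_const 0) hIntg pt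
  refine this.trans ?_
  rw [integral_indicator hBm, setIntegral_const, smul_eq_mul, hB, Measure.addHaar_real_closedBall _ _ (by positivity)]
  have hf : Module.finrank ℝ (HV n) = n + 1 := by simp [HV]
  rw [hf, mul_pow]
  have : 0 ≤ √ε ^ (n + 1) := by positivity
  calc _ = (2 * exp (2 * n) * (2 * exp 1) ^ (n + 1) * V) * √ε ^ (n + 1) := by ring
    _ ≤ _ := by
      apply mul_le_mul_of_nonneg_right _ this; linarith

theorem contDiff_two_of {f f1 f2 : ℝ → ℝ} (h1 : ∀ x, HasDerivAt f (f1 x) x)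
    (h2 : ∀ x, HasDerivAt f1 (f2 x) x) (hc : Continuous f2) :
    ContDiff ℝ 2 f ∧ deriv f = f1 ∧ deriv (deriv f) = f2 := by
  have e1 : deriv f = f1 := funext fun x => (h1 x).deriv
  have e2 : deriv f1 = f2 := funext fun x => (h2 x).deriv
  refine ⟨?_, e1, by rw [e1, e2]⟩
  have : ContDiff ℝ (1 + 1) f := by
    rw [contDiff_succ_iff_deriv]
    refine ⟨fun x => (h1 x).differentiableAt, by simp, ?_⟩
    rw [e1, contDiff_one_iff_deriv]
    exact ⟨fun x => (h2 x).differentiableAt, by rw [e2]; exact hc⟩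
  simpa [one_add_one_eq_two] using this

section harn
variable {n₁ n₂ : ℕ}

noncomputable def WW (z' : HV n₁ × HV n₂) : ℝ := wt n₁ z'.1 * wt n₂ z'.2

theorem WW_cont : Continuous (WW (n₁ := n₁) (n₂ := n₂)) :=
  ((wt_continuous n₁).comp continuous_fst).mul ((wt_continuous n₂).comp continuous_snd)

theorem WW_pos (z' : HV n₁ × HV n₂) : 0 < WW z' := mul_pos (wt_pos _ _) (wt_pos _ _)

theorem prod_ker_integrable {G : ℝ → ℝ → ℝ} (hG : Continuous (fun a : ℝ × ℝ => G a.1 a.2)) {r : ℝ}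
    (hs : ∀ a b, 0 ≤ a → 0 ≤ b → r < a + b → G a b = 0) {g : HV n₁ × HV n₂ → ℝ}
    (hg : Continuous g) (z : HV n₁ × HV n₂) :
    Integrable (fun z' => G (tt z.1 z'.1) (tt z.2 z'.2) * WW z' * g z') := by
  obtain ⟨T1, hT1, hT1'⟩ := tt_proper r {z.1} isCompact_singleton
  obtain ⟨T2, hT2, hT2'⟩ := tt_proper r {z.2} isCompact_singleton
  have c1 : Continuous (fun p' : HV n₁ => tt z.1 p') := (tt_contDiff_right z.1 (m := 0)).continuous
  have c2 : Continuous (fun p' : HV n₂ => tt z.2 p') := (tt_contDiff_right z.2 (m := 0)).continuous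
  have c3 : Continuous (fun z' : HV n₁ × HV n₂ => G (tt z.1 z'.1) (tt z.2 z'.2)) :=
    hG.comp ((c1.comp continuous_fst).prodMk (c2.comp continuous_snd))
  apply Continuous.integrable_of_hasCompactSupport ((c3.mul WW_cont).mul hg)
  apply HasCompactSupport.intro (hT1.prod hT2)
  intro z' hz'
  have : G (tt z.1 z'.1) (tt z.2 z'.2) = 0 := by
    apply hs _ _ (tt_nonneg _ _) (tt_nonneg _ _)
    have a1 := tt_nonneg z.1 z'.1
    have a2 := tt_nonneg z.2 z'.2
    by_cases h1 : z'.1 ∈ T1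
    · have h2 : z'.2 ∉ T2 := fun h => hz' ⟨h1, h⟩
      have := hT2' z.2 rfl _ h2
      linarith
    · have := hT1' z.1 rfl _ h1
      linarith
  simp [this]

theorem Dop_shift {n : ℕ} {f f1 f2 : ℝ → ℝ} (h1 : ∀ x, HasDerivAt f (f1 x) x)
    (h2 : ∀ x, HasDerivAt f1 (f2 x) x) (hc : Continuous f2) {r : ℝ} (hs : ∀ x, r < x → f x = 0)
    {c : ℝ} (hc0 : 0 ≤ c) : KN (fun t => f (t + c)) r ∧
    ∀ t, Dop n (fun t => f (t + c)) t = (t ^ 2 + 2 * t) * f2 (t + c) + (n + 1) * (1 + t) * f1 (t + c) := by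
  obtain ⟨a, b, d⟩ := contDiff_two_of (f := fun t => f (t + c)) (f1 := fun t => f1 (t + c))
    (f2 := fun t => f2 (t + c)) (fun x => (h1 (x + c)).comp_add_const x c)
    (fun x => (h2 (x + c)).comp_add_const x c) (by fun_prop)
  refine ⟨⟨a, fun t ht => hs _ (by linarith)⟩, fun t => ?_⟩
  unfold Dop
  rw [b]
  have d' : deriv (fun t => f1 (t + c)) = fun t => f2 (t + c) := by rw [← b]; exact d
  rw [d']

theorem green1 {f f1 f2 : ℝ → ℝ} (h1 : ∀ x, HasDerivAt f (f1 x) x)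
    (h2 : ∀ x, HasDerivAt f1 (f2 x) x) (hc : Continuous f2) {r : ℝ} (hs : ∀ x, r < x → f x = 0)
    (hs1 : ∀ x, r < x → f1 x = 0) (hs2 : ∀ x, r < x → f2 x = 0)
    {u : HV n₁ × HV n₂ → ℝ} (hu : ContDiff ℝ 2 u) (z : HV n₁ × HV n₂) :
    ∫ z', ((tt z.1 z'.1 ^ 2 + 2 * tt z.1 z'.1) * f2 (tt z.1 z'.1 + tt z.2 z'.2) +
        (n₁ + 1) * (1 + tt z.1 z'.1) * f1 (tt z.1 z'.1 + tt z.2 z'.2)) * WW z' * u z'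
      = ∫ z', f (tt z.1 z'.1 + tt z.2 z'.2) * WW z' * lap1 u z' := by
  have hf : Continuous f := continuous_iff_continuousAt.2 fun x => (h1 x).continuousAt
  have hf1 : Continuous f1 := continuous_iff_continuousAt.2 fun x => (h2 x).continuousAt
  have i1 := prod_ker_integrable (n₁ := n₁) (n₂ := n₂)
    (G := fun a b => (a ^ 2 + 2 * a) * f2 (a + b) + (n₁ + 1) * (1 + a) * f1 (a + b))
    (by fun_prop) (r := r) (fun a b _ _ hab => by simp [hs1 _ hab, hs2 _ hab]) hu.continuous z
  have i2 := prod_ker_integrable (n₁ := n₁) (n₂ := n₂)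
    (G := fun a b => f (a + b))
    (by fun_prop) (r := r) (fun a b _ _ hab => hs _ hab) (lap1_continuous hu) z
  rw [Measure.volume_eq_prod] at i1 i2 ⊢
  rw [integral_prod_symm _ i1, integral_prod_symm _ i2]
  congr 1; ext q
  obtain ⟨kn, kd⟩ := Dop_shift (n := n₁) h1 h2 hc hs (tt_nonneg z.2 q)
  have hsl : ContDiff ℝ 2 (fun p => u (p, q)) := hu.comp (contDiff_id.prodMk contDiff_const)
  have := Kx_green (n := n₁) kn hsl z.1
  unfold Kx at this
  calc _ = wt n₂ q * ∫ p', Dop n₁ (fun t => f (t + tt z.2 q)) (tt z.1 p') * wt n₁ p' * u (p', q) := by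
        rw [← integral_const_mul]
        congr 1; ext p'
        rw [kd]; unfold WW; ring
    _ = _ := by
        rw [this, ← integral_const_mul]
        congr 1; ext p'
        unfold WW lap1; ring

theorem green2 {f f1 f2 : ℝ → ℝ} (h1 : ∀ x, HasDerivAt f (f1 x) x)
    (h2 : ∀ x, HasDerivAt f1 (f2 x) x) (hc : Continuous f2) {r : ℝ} (hs : ∀ x, r < x → f x = 0)
    (hs1 : ∀ x, r < x → f1 x = 0) (hs2 : ∀ x, r < x → f2 x = 0)
    {u : HV n₁ × HV n₂ → ℝ} (hu : ContDiff ℝ 2 u) (z : HV n₁ × HV n₂) :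
    ∫ z', ((tt z.2 z'.2 ^ 2 + 2 * tt z.2 z'.2) * f2 (tt z.1 z'.1 + tt z.2 z'.2) +
        (n₂ + 1) * (1 + tt z.2 z'.2) * f1 (tt z.1 z'.1 + tt z.2 z'.2)) * WW z' * u z'
      = ∫ z', f (tt z.1 z'.1 + tt z.2 z'.2) * WW z' * lap2 u z' := by
  have hf : Continuous f := continuous_iff_continuousAt.2 fun x => (h1 x).continuousAt
  have hf1 : Continuous f1 := continuous_iff_continuousAt.2 fun x => (h2 x).continuousAt
  have i1 := prod_ker_integrable (n₁ := n₁) (n₂ := n₂)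
    (G := fun a b => (b ^ 2 + 2 * b) * f2 (a + b) + (n₂ + 1) * (1 + b) * f1 (a + b))
    (by fun_prop) (r := r) (fun a b _ _ hab => by simp [hs1 _ hab, hs2 _ hab]) hu.continuous z
  have i2 := prod_ker_integrable (n₁ := n₁) (n₂ := n₂)
    (G := fun a b => f (a + b))
    (by fun_prop) (r := r) (fun a b _ _ hab => hs _ hab) (lap2_continuous hu) z
  rw [Measure.volume_eq_prod] at i1 i2 ⊢
  rw [integral_prod _ i1, integral_prod _ i2]
  congr 1; ext p
  obtain ⟨kn, kd⟩ := Dop_shift (n := n₂) h1 h2 hc hs (tt_nonneg z.1 p)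
  have hsl : ContDiff ℝ 2 (fun q => u (p, q)) := hu.comp (contDiff_const.prodMk contDiff_id)
  have := Kx_green (n := n₂) kn hsl z.2
  unfold Kx at this
  calc _ = wt n₁ p * ∫ p', Dop n₂ (fun t => f (t + tt z.1 p)) (tt z.2 p') * wt n₂ p' * u (p, p') := by
        rw [← integral_const_mul]
        congr 1; ext p'
        rw [kd, add_comm (tt z.1 p)]; unfold WW; ring
    _ = _ := by
        rw [this, ← integral_const_mul]
        congr 1; ext p'
        rw [add_comm (tt z.1 p)]
        unfold WW lap2; ring

theorem param_zero {f f1 f2 : ℝ → ℝ} (h1 : ∀ x, HasDerivAt f (f1 x) x)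
    (h2 : ∀ x, HasDerivAt f1 (f2 x) x) (hc : Continuous f2) {r : ℝ} (hs : ∀ x, r < x → f x = 0)
    (hs1 : ∀ x, r < x → f1 x = 0) (hs2 : ∀ x, r < x → f2 x = 0) {μ : ℝ}
    {u : HV n₁ × HV n₂ → ℝ} (hu : ContDiff ℝ 2 u) (heq : ∀ z, lap1 u z + lap2 u z = -μ * u z)
    (z : HV n₁ × HV n₂) :
    ∫ z', ((tt z.1 z'.1 ^ 2 + tt z.2 z'.2 ^ 2 + 2 * (tt z.1 z'.1 + tt z.2 z'.2)) *
         f2 (tt z.1 z'.1 + tt z.2 z'.2) +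
        (((n₁ + n₂ + 2 : ℕ) : ℝ) + (n₁ + 1) * tt z.1 z'.1 + (n₂ + 1) * tt z.2 z'.2) *
          f1 (tt z.1 z'.1 + tt z.2 z'.2) + μ * f (tt z.1 z'.1 + tt z.2 z'.2)) * WW z' * u z' = 0 := by
  have hf : Continuous f := continuous_iff_continuousAt.2 fun x => (h1 x).continuousAt
  have hf1 : Continuous f1 := continuous_iff_continuousAt.2 fun x => (h2 x).continuousAt
  have i1 := prod_ker_integrable (n₁ := n₁) (n₂ := n₂)
    (G := fun a b => (a ^ 2 + 2 * a) * f2 (a + b) + (n₁ + 1) * (1 + a) * f1 (a + b))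
    (by fun_prop) (r := r) (fun a b _ _ hab => by simp [hs1 _ hab, hs2 _ hab]) hu.continuous z
  have i2 := prod_ker_integrable (n₁ := n₁) (n₂ := n₂)
    (G := fun a b => (b ^ 2 + 2 * b) * f2 (a + b) + (n₂ + 1) * (1 + b) * f1 (a + b))
    (by fun_prop) (r := r) (fun a b _ _ hab => by simp [hs1 _ hab, hs2 _ hab]) hu.continuous z
  have i3 := prod_ker_integrable (n₁ := n₁) (n₂ := n₂)
    (G := fun a b => f (a + b))
    (by fun_prop) (r := r) (fun a b _ _ hab => hs _ hab) hu.continuous z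
  have j1 := prod_ker_integrable (n₁ := n₁) (n₂ := n₂)
    (G := fun a b => f (a + b))
    (by fun_prop) (r := r) (fun a b _ _ hab => hs _ hab) (lap1_continuous hu) z
  have j2 := prod_ker_integrable (n₁ := n₁) (n₂ := n₂)
    (G := fun a b => f (a + b))
    (by fun_prop) (r := r) (fun a b _ _ hab => hs _ hab) (lap2_continuous hu) z
  have g1 := green1 h1 h2 hc hs hs1 hs2 hu z
  have g2 := green2 h1 h2 hc hs hs1 hs2 hu z
  have g3 : ∫ z', f (tt z.1 z'.1 + tt z.2 z'.2) * WW z' * lap1 u z' +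
      f (tt z.1 z'.1 + tt z.2 z'.2) * WW z' * lap2 u z' =
      -μ * ∫ z', f (tt z.1 z'.1 + tt z.2 z'.2) * WW z' * u z' := by
    rw [← integral_const_mul]
    congr 1; ext z'
    rw [← mul_add, heq]; ring
  rw [integral_add j1 j2, ← g1, ← g2] at g3
  have g4 := integral_add (i1.add i2) (i3.const_mul μ)
  rw [integral_const_mul] at g4
  simp only [Pi.add_apply] at g4
  rw [integral_add i1 i2] at g4
  rw [g3] at g4
  rw [neg_mul, neg_add_cancel] at g4
  rw [← g4]
  congr 1; ext z'
  push_cast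
  ring

theorem deriv_zero_of {f f1 : ℝ → ℝ} {r : ℝ} (h1 : ∀ x, HasDerivAt f (f1 x) x)
    (hs : ∀ x, r < x → f x = 0) : ∀ x, r < x → f1 x = 0 := by
  intro x hx
  have : f =ᶠ[𝓝 x] fun _ => 0 := by
    filter_upwards [Ioi_mem_nhds hx] with y hy using hs y hy
  exact (h1 x).unique ((hasDerivAt_const x (0:ℝ)).congr_of_eventuallyEq this)

theorem kc_bound {k : ℝ → ℝ} {r : ℝ} (h : KC k r) : ∃ M, 0 < M ∧ ∀ t, 0 ≤ t → k t ≤ M := by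
  obtain ⟨M, hM⟩ := (isCompact_Icc (a := (0:ℝ)) (b := r)).exists_bound_of_continuousOn h.cont.continuousOn
  refine ⟨|M| + 1, by positivity, fun t ht => ?_⟩
  by_cases htr : t ≤ r
  · have := hM t ⟨ht, htr⟩
    have := (le_abs_self _).trans this
    linarith [le_abs_self M]
  · rw [h.supp t (not_le.1 htr)]; positivity

theorem K1_mono {k : ℝ → ℝ} {r : ℝ} (h : KC k r) (h0 : ∀ t, 0 ≤ t → 0 ≤ k t) {v w : HV n₁ × HV n₂ → ℝ}
    (hv : Continuous v) (hw : Continuous w) (hvw : ∀ z, v z ≤ w z) (z : HV n₁ × HV n₂) :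
    K1 k v z ≤ K1 k w z := by
  unfold K1 Kx
  apply integral_mono (h.integrable (by fun_prop) _) (h.integrable (by fun_prop) _)
  intro p
  exact mul_le_mul_of_nonneg_left (hvw _) (mul_nonneg (h0 _ (tt_nonneg _ _)) (wt_pos _ _).le)

theorem K2_mono {k : ℝ → ℝ} {r : ℝ} (h : KC k r) (h0 : ∀ t, 0 ≤ t → 0 ≤ k t) {v w : HV n₁ × HV n₂ → ℝ}
    (hv : Continuous v) (hw : Continuous w) (hvw : ∀ z, v z ≤ w z) (z : HV n₁ × HV n₂) :
    K2 k v z ≤ K2 k w z := by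
  unfold K2 Kx
  apply integral_mono (h.integrable (by fun_prop) _) (h.integrable (by fun_prop) _)
  intro p
  exact mul_le_mul_of_nonneg_left (hvw _) (mul_nonneg (h0 _ (tt_nonneg _ _)) (wt_pos _ _).le)

/-- mass of the product kernel -/
theorem KP_mass {k₁ k₂ : ℝ → ℝ} {r₁ r₂ : ℝ} (h1 : KC k₁ r₁) (h2 : KC k₂ r₂) (z : HV n₁ × HV n₂) :
    ∫ z', KP k₁ k₂ (z, z') * 1 = Kx n₁ k₁ (fun _ => 1) 0 * Kx n₂ k₂ (fun _ => 1) 0 := by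
  rw [← K12_eq h1 h2 (w := fun _ => 1) continuous_const z]
  have e : K2 k₂ (fun _ : HV n₁ × HV n₂ => (1:ℝ)) = fun _ => Kx n₂ k₂ (fun _ => 1) 0 := by
    ext y; unfold K2; exact mass_inv h2 y.2
  rw [e, ← mass_inv h1 z.1]
  unfold K1
  unfold Kx
  rw [← integral_mul_const]
  congr 1; ext p; ring

theorem weak_harnack (hn₁ : 1 ≤ n₁) (μ : ℝ) : ∃ r0 : ℝ, 0 < r0 ∧ r0 ≤ 1 ∧ ∀ k₁ k₂ : ℝ → ℝ,
    KC k₁ r0 → KC k₂ r0 → (∀ t, 0 ≤ t → 0 ≤ k₁ t) → (∀ t, 0 ≤ t → 0 ≤ k₂ t) →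
    ∃ C : ℝ, 0 < C ∧ ∀ u : HV n₁ × HV n₂ → ℝ, ContDiff ℝ 2 u → (∀ z, 0 < u z) →
      (∀ z, lap1 u z + lap2 u z = -μ * u z) → ∀ z, K1 k₁ (K2 k₂ u) z ≤ C * u z := by
  obtain ⟨R, hR, hR1, c, hc, C, hC, par⟩ := parametrix n₁ n₂ hn₁ μ
  have hR2 : R ^ 2 ≤ 1 := pow_le_one₀ hR.le hR1
  refine ⟨R ^ 2 / 8, by positivity, by linarith, fun k₁ k₂ kc1 kc2 k10 k20 => ?_⟩
  obtain ⟨M1, hM1, hM1'⟩ := kc_bound kc1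
  obtain ⟨M2, hM2, hM2'⟩ := kc_bound kc2
  obtain ⟨C1, hC1, hm1⟩ := chi_mass n₁
  obtain ⟨C2, hC2, hm2⟩ := chi_mass n₂
  refine ⟨c⁻¹ * (M1 * M2) * (C * (2 * (C1 * C2))), by positivity, fun u hu hu0 heq z => ?_⟩
  -- choose ε
  obtain ⟨V1, hV1, V2, hV2, hV⟩ : ∃ V1 ∈ 𝓝 z.1, ∃ V2 ∈ 𝓝 z.2, ∀ z' : HV n₁ × HV n₂, z'.1 ∈ V1 → z'.2 ∈ V2 →
      u z' ≤ 2 * u z := by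
    have : {z' | u z' < 2 * u z} ∈ 𝓝 (z.1, z.2) :=
      hu.continuous.continuousAt.eventually_lt continuousAt_const (by have := hu0 z; simp; linarith)
    obtain ⟨V1, hV1, V2, hV2, h⟩ := mem_nhds_prod_iff.1 this
    exact ⟨V1, hV1, V2, hV2, fun z' h1 h2 => (h ⟨h1, h2⟩ : u z' < 2 * u z).le⟩
  obtain ⟨e1, he1, he1'⟩ := tt_small z.1 hV1
  obtain ⟨e2, he2, he2'⟩ := tt_small z.2 hV2
  set ε := min (R ^ 2 / 2) (min (e1 / 2) (e2 / 2)) with hεdef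
  have hε : 0 < ε := by positivity
  have hεR : ε < R ^ 2 := (min_le_left _ _).trans_lt (half_lt_self (by positivity))
  have hε1 : ε ≤ 1 := by linarith
  have hee1 : 2 * ε ≤ e1 := by
    have : ε ≤ e1 / 2 := (min_le_right _ _).trans (min_le_left _ _)
    linarith
  have hee2 : 2 * ε ≤ e2 := by
    have : ε ≤ e2 / 2 := (min_le_right _ _).trans (min_le_right _ _)
    linarith
  obtain ⟨f, f1, f2, d1, d2, cf2, hs, ineq⟩ := par ε hε hεR
  have hs1 := deriv_zero_of d1 hs
  have hs2 := deriv_zero_of d2 hs1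
  have hf : Continuous f := continuous_iff_continuousAt.2 fun x => (d1 x).continuousAt
  have hf1 : Continuous f1 := continuous_iff_continuousAt.2 fun x => (d2 x).continuousAt
  set G : ℝ → ℝ → ℝ := fun a b => (a ^ 2 + b ^ 2 + 2 * (a + b)) * f2 (a + b) +
    (((n₁ + n₂ + 2 : ℕ) : ℝ) + (n₁ + 1) * a + (n₂ + 1) * b) * f1 (a + b) + μ * f (a + b) with hG
  have pz : ∫ z', G (tt z.1 z'.1) (tt z.2 z'.2) * WW z' * u z' = 0 :=
    param_zero d1 d2 cf2 hs hs1 hs2 hu heq z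
  have iG := prod_ker_integrable (n₁ := n₁) (n₂ := n₂) (G := G) (by simp only [hG]; fun_prop) (r := R ^ 2)
    (fun a b _ _ hab => by simp [hG, hs _ hab, hs1 _ hab, hs2 _ hab]) hu.continuous z
  have ichi := KP_integrable (n₁ := n₁) (n₂ := n₂) (chi_kc hε) (chi_kc hε) hu.continuous z
  have ichi1 := KP_integrable (n₁ := n₁) (n₂ := n₂) (chi_kc hε) (chi_kc hε) (w := fun _ => 1) continuous_const z
  have ik := KP_integrable (n₁ := n₁) (n₂ := n₂) kc1 kc2 hu.continuous z
  set Q := (√ε ^ (n₁ + n₂ + 2))⁻¹ with hQ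
  have hQ0 : 0 < Q := by positivity
  -- pointwise inequality
  have pt : ∀ z' : HV n₁ × HV n₂, KP k₁ k₂ (z, z') * u z' ≤
      c⁻¹ * (M1 * M2) * (G (tt z.1 z'.1) (tt z.2 z'.2) * WW z' * u z' +
        C * Q * (KP (chi ε) (chi ε) (z, z') * u z')) := by
    intro z'
    have e : ∀ a b : ℝ → ℝ, KP a b (z, z') = a (tt z.1 z'.1) * b (tt z.2 z'.2) * WW z' := by
      intro a b; unfold KP WW; ring
    rw [e, e]
    set t₁ := tt z.1 z'.1
    set t₂ := tt z.2 z'.2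
    have ht1 : 0 ≤ t₁ := tt_nonneg _ _
    have ht2 : 0 ≤ t₂ := tt_nonneg _ _
    have b := ineq t₁ t₂ ht1 ht2
    have hx : (if t₁ + t₂ < ε then (1:ℝ) else 0) ≤ chi ε t₁ * chi ε t₂ := by
      split_ifs with h
      · exact one_le_mul_of_one_le_of_one_le (one_le_chi hε (by linarith)) (one_le_chi hε (by linarith))
      · exact mul_nonneg (chi_nonneg _ _) (chi_nonneg _ _)
    have hy : k₁ t₁ * k₂ t₂ ≤ M1 * M2 * (if t₁ + t₂ ≤ R ^ 2 / 4 then (1:ℝ) else 0) := by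
      split_ifs with h
      · rw [mul_one]
        exact mul_le_mul (hM1' _ ht1) (hM2' _ ht2) (k20 _ ht2) hM1.le
      · rw [mul_zero]
        by_cases h1 : t₁ ≤ R ^ 2 / 8
        · rw [kc2.supp t₂ (by linarith), mul_zero]
        · rw [kc1.supp t₁ (not_le.1 h1), zero_mul]
    have hz : c * (if t₁ + t₂ ≤ R ^ 2 / 4 then (1:ℝ) else 0) ≤ G t₁ t₂ + C * Q * (chi ε t₁ * chi ε t₂) := by
      have := mul_le_mul_of_nonneg_left hx (show 0 ≤ C * Q by positivity)
      simp only [hG]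
      linarith
    have hfin : k₁ t₁ * k₂ t₂ ≤ c⁻¹ * (M1 * M2) * (G t₁ t₂ + C * Q * (chi ε t₁ * chi ε t₂)) := by
      refine hy.trans ?_
      have := mul_le_mul_of_nonneg_left hz (show 0 ≤ c⁻¹ * (M1 * M2) by positivity)
      refine le_trans (le_of_eq ?_) this
      field_simp
    have hwu : 0 ≤ WW z' * u z' := mul_nonneg (WW_pos _).le (hu0 _).le
    have := mul_le_mul_of_nonneg_right hfin hwu
    linarith
  rw [K12_eq kc1 kc2 hu.continuous]
  have I1 : ∫ z', KP k₁ k₂ (z, z') * u z' ≤ ∫ z', c⁻¹ * (M1 * M2) * (G (tt z.1 z'.1) (tt z.2 z'.2) * WW z' * u z' +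
        C * Q * (KP (chi ε) (chi ε) (z, z') * u z')) :=
    integral_mono ik ((iG.add (ichi.const_mul _)).const_mul _) pt
  rw [integral_const_mul, integral_add iG (ichi.const_mul _), pz, integral_const_mul, zero_add] at I1
  have I2 : ∫ z', KP (chi ε) (chi ε) (z, z') * u z' ≤ ∫ z', (2 * u z) * (KP (chi ε) (chi ε) (z, z') * 1) := by
    apply integral_mono ichi (ichi1.const_mul _)
    intro z'
    have k0 : 0 ≤ KP (chi ε) (chi ε) (z, z') :=
      mul_nonneg (mul_nonneg (chi_nonneg _ _) (wt_pos _ _).le) (mul_nonneg (chi_nonneg _ _) (wt_pos _ _).le)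
    simp only
    by_cases h : tt z.1 z'.1 ≤ 2 * ε ∧ tt z.2 z'.2 ≤ 2 * ε
    · have := hV z' (he1' _ (h.1.trans hee1)) (he2' _ (h.2.trans hee2))
      have := mul_le_mul_of_nonneg_left this k0
      linarith
    · have : KP (chi ε) (chi ε) (z, z') = 0 := by
        unfold KP
        by_cases h1 : tt z.1 z'.1 ≤ 2 * ε
        · have h2 : 2 * ε < tt z.2 z'.2 := not_le.1 fun h2 => h ⟨h1, h2⟩
          simp [(chi_kc hε).supp _ h2]
        · simp [(chi_kc hε).supp _ (not_le.1 h1)]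
      rw [this]; simp
  rw [integral_const_mul, KP_mass (chi_kc hε) (chi_kc hε)] at I2
  have m1 := hm1 ε hε hε1
  have m2 := hm2 ε hε hε1
  have m20 : 0 ≤ Kx n₂ (chi ε) (fun _ => 1) 0 := by
    unfold Kx
    exact integral_nonneg fun p => by
      have := chi_nonneg ε (tt 0 p)
      have := wt_pos n₂ p
      positivity
  have mm : Kx n₁ (chi ε) (fun _ => 1) 0 * Kx n₂ (chi ε) (fun _ => 1) 0 ≤ C1 * C2 * Q⁻¹ := by
    refine (mul_le_mul m1 m2 m20 (by positivity)).trans (le_of_eq ?_)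
    rw [hQ, inv_inv]; ring
  refine I1.trans ?_
  have huz := (hu0 z).le
  have I3 : ∫ z', KP (chi ε) (chi ε) (z, z') * u z' ≤ 2 * u z * (C1 * C2 * Q⁻¹) :=
    I2.trans (mul_le_mul_of_nonneg_left mm (by positivity))
  calc c⁻¹ * (M1 * M2) * (C * Q * ∫ z', KP (chi ε) (chi ε) (z, z') * u z')
      ≤ c⁻¹ * (M1 * M2) * (C * Q * (2 * u z * (C1 * C2 * Q⁻¹))) := by gcongr
    _ = _ := by field_simp
end harn

noncomputable def bp (r : ℝ) (m : ℕ) (t : ℝ) : ℝ := (max (r - t) 0) ^ m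

theorem bp_nonneg (r : ℝ) (m : ℕ) (t : ℝ) : 0 ≤ bp r m t := pow_nonneg (le_max_right _ _) _

theorem bp_cont (r : ℝ) (m : ℕ) : Continuous (bp r m) := by unfold bp; fun_prop

theorem bp_supp {r : ℝ} {m : ℕ} {t : ℝ} (h : r < t) : bp r (m + 1) t = 0 := by
  unfold bp; rw [max_eq_right (by linarith)]; simp

theorem bp_ite (r : ℝ) (m : ℕ) : bp r (m + 1) = fun t => if t < r then (r - t) ^ (m + 1) else 0 := by
  ext t
  unfold bp
  split_ifs with h
  · rw [max_eq_left (by linarith)]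
  · rw [max_eq_right (by linarith)]; simp

theorem bp_deriv (r : ℝ) (m : ℕ) (t : ℝ) :
    HasDerivAt (bp r (m + 2)) (-(m + 2) * bp r (m + 1) t) t := by
  rw [bp_ite r (m + 1), bp_ite r m]
  have : (-((m:ℝ) + 2) * (fun t => if t < r then (r - t) ^ (m + 1) else 0) t) =
      if t < r then -((m:ℝ) + 2) * (r - t) ^ (m + 1) else 0 := by
    split_ifs <;> simp [*]
  rw [this]
  apply glue_deriv (f := fun t => (r - t) ^ (m + 2)) (f' := fun t => -((m:ℝ) + 2) * (r - t) ^ (m + 1))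
    (g := fun _ => 0) (g' := fun _ => 0)
  · intro _
    have := ((hasDerivAt_id t).const_sub r).fun_pow (m + 2)
    refine this.congr_deriv ?_
    simp
    ring
  · intro _; exact hasDerivAt_const t 0
  · simp
  · simp

theorem bp_two (r : ℝ) (m : ℕ) : ContDiff ℝ 2 (bp r (m + 3)) ∧
    deriv (bp r (m + 3)) = (fun t => -(m + 3) * bp r (m + 2) t) ∧
    deriv (deriv (bp r (m + 3))) = (fun t => (m + 3) * (m + 2) * bp r (m + 1) t) := by
  apply contDiff_two_of
  · intro x
    refine (bp_deriv r (m + 1) x).congr_deriv ?_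
    push_cast; ring
  · intro x
    refine ((bp_deriv r m x).const_mul (-((m:ℝ) + 3))).congr_deriv ?_
    ring
  · have := bp_cont r (m + 1); fun_prop

noncomputable def kk (r t : ℝ) : ℝ := bp r 6 t
noncomputable def cb (n : ℕ) (r : ℝ) : ℝ := 30 * (n + 1) ^ 2 / r
noncomputable def bb (n : ℕ) (r t : ℝ) : ℝ := Dop n (kk r) t + cb n r * kk r t

theorem kk_kn (r : ℝ) : KN (kk r) r := ⟨(bp_two r 3).1, fun _ h => bp_supp h⟩

theorem kk_nonneg (r t : ℝ) : 0 ≤ kk r t := bp_nonneg _ _ _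

theorem kk_zero {r : ℝ} (hr : 0 < r) : 0 < kk r 0 := by
  unfold kk bp; rw [max_eq_left (by linarith)]; simp; positivity

theorem bb_eq (n : ℕ) (r t : ℝ) : bb n r t = 30 * (t ^ 2 + 2 * t) * bp r 4 t
    - 6 * (n + 1) * (1 + t) * bp r 5 t + cb n r * bp r 6 t := by
  unfold bb Dop kk
  have h := bp_two r 3
  have e1 : deriv (fun t => bp r 6 t) = deriv (bp r 6) := rfl
  have := h.2.1
  have := h.2.2
  simp only [Nat.reduceAdd, Nat.cast_ofNat] at *
  rw [h.2.2, h.2.1]; ring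

theorem bb_kn (n : ℕ) (r : ℝ) : KN (bb n r) r := by
  constructor
  · have : bb n r = fun t => 30 * (t ^ 2 + 2 * t) * bp r 4 t
      - 6 * (n + 1) * (1 + t) * bp r 5 t + cb n r * bp r 6 t := funext (bb_eq n r)
    rw [this]
    have h4 : ContDiff ℝ 2 (bp r 4) := (bp_two r 1).1
    have h5 : ContDiff ℝ 2 (bp r 5) := (bp_two r 2).1
    have h6 : ContDiff ℝ 2 (bp r 6) := (bp_two r 3).1
    fun_prop
  · intro t ht
    rw [bb_eq, bp_supp ht, bp_supp ht, bp_supp ht]; simp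

theorem bb_nonneg (n : ℕ) {r : ℝ} (hr : 0 < r) (hr1 : r ≤ 1) (t : ℝ) (ht : 0 ≤ t) : 0 ≤ bb n r t := by
  by_cases htr : r < t
  · rw [(bb_kn n r).supp t htr]
  push Not at htr
  rw [bb_eq]
  unfold bp cb
  rw [max_eq_left (by linarith)]
  set b := r - t with hb
  have hb0 : 0 ≤ b := by linarith
  set N : ℝ := n + 1 with hN
  have hN1 : 1 ≤ N := by simp [hN]
  have key : 0 ≤ 60 * r - 72 * N * b + 30 * N ^ 2 / r * b ^ 2 := by
    have : 60 * r - 72 * N * b + 30 * N ^ 2 / r * b ^ 2 = (60 * r ^ 2 - 72 * N * b * r + 30 * N ^ 2 * b ^ 2) / r := by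
      field_simp
    rw [this]
    apply div_nonneg _ hr.le
    nlinarith [sq_nonneg (5 * N * b - 6 * r), sq_nonneg (N * b), sq_nonneg r]
  have k2 : 60 * r - 72 * N * b + 30 * N ^ 2 / r * b ^ 2 ≤
      30 * (t ^ 2 + 2 * t) - 6 * N * (1 + t) * b + 30 * N ^ 2 / r * b ^ 2 := by
    have q1 : 6 * N * (1 + t) * b ≤ 6 * N * 2 * b := by
      gcongr; linarith
    have q2 : 0 ≤ (N - 1) * b := mul_nonneg (by linarith) hb0
    nlinarith [sq_nonneg t]
  calc 0 ≤ b ^ 4 * (30 * (t ^ 2 + 2 * t) - 6 * N * (1 + t) * b + 30 * N ^ 2 / r * b ^ 2) :=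
      mul_nonneg (by positivity) (key.trans k2)
    _ = _ := by ring

theorem bb_zero (n : ℕ) {r : ℝ} (hr : 0 < r) : 0 < bb n r 0 := by
  rw [bb_eq]
  unfold bp cb
  rw [max_eq_left (by linarith)]
  have : 30 * ((0:ℝ) ^ 2 + 2 * 0) * (r - 0) ^ 4 - 6 * (n + 1) * (1 + 0) * (r - 0) ^ 5 + 30 * (n + 1) ^ 2 / r * (r - 0) ^ 6
     = r ^ 5 * ((n + 1) * (30 * n + 24)) := by field_simp; ring
  rw [this]; positivity

theorem Kx_pos {n : ℕ} {k : ℝ → ℝ} {r : ℝ} (h : KC k r) (h0 : ∀ t, 0 ≤ t → 0 ≤ k t) (h1 : 0 < k 0)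
    {w : HV n → ℝ} (hw : Continuous w) (hw0 : ∀ p, 0 < w p) (p : HV n) : 0 < Kx n k w p := by
  haveI := hv_haar n
  unfold Kx
  have hc : Continuous (fun p' : HV n => k (tt p p') * wt n p' * w p') := by
    have c1 : Continuous (fun p' : HV n => tt p p') := (tt_contDiff_right p (m := 0)).continuous
    exact ((h.cont.comp c1).mul (wt_continuous n)).mul hw
  apply Continuous.integral_pos_of_hasCompactSupport_nonneg_nonzero hc _ _ (x := p) _
  · obtain ⟨T, hT, hT'⟩ := tt_proper r {p} isCompact_singleton
    apply HasCompactSupport.intro hT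
    intro p' hp'
    simp [h.supp _ (hT' p rfl p' hp')]
  · intro p'
    exact mul_nonneg (mul_nonneg (h0 _ (tt_nonneg _ _)) (wt_pos _ _).le) (hw0 _).le
  · rw [tt_self]
    exact (mul_pos (mul_pos h1 (wt_pos _ _)) (hw0 _)).ne'

theorem Kx_approx {n : ℕ} {h : HV n → ℝ} (hh : Continuous h) (p : HV n) :
    Tendsto (fun ε => Kx n (kk ε) h p / Kx n (kk ε) (fun _ => 1) 0) (𝓝[>] 0) (𝓝 (h p)) := by
  rw [Metric.tendsto_nhds]
  intro η hη
  have hU : {p' | |h p' - h p| < η / 2} ∈ 𝓝 p := by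
    have : Continuous (fun p' => |h p' - h p|) := by fun_prop
    exact this.continuousAt.eventually_lt continuousAt_const (by simpa using hη)
  obtain ⟨e, he, he'⟩ := tt_small p hU
  have : Ioc (0:ℝ) e ∈ 𝓝[>] (0:ℝ) := Ioc_mem_nhdsGT he
  filter_upwards [this] with ε hε
  have kc := (kk_kn ε).kc
  have m0 : 0 < Kx n (kk ε) (fun _ => 1) 0 := Kx_pos kc (fun t _ => kk_nonneg _ t) (kk_zero hε.1)
    continuous_const (fun _ => one_pos) 0
  rw [dist_eq, ← mass_inv kc p] at *
  set m := Kx n (kk ε) (fun _ => 1) p with hm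
  have e1 : Kx n (kk ε) h p / m - h p = (Kx n (kk ε) h p - h p * m) / m := by
    field_simp
  rw [e1, abs_div, abs_of_pos m0, div_lt_iff₀ m0]
  have e2 : Kx n (kk ε) h p - h p * m = ∫ p', kk ε (tt p p') * wt n p' * h p' - h p * (kk ε (tt p p') * wt n p' * 1) := by
    rw [integral_sub (kc.integrable hh p) ((kc.integrable continuous_const p).const_mul _), integral_const_mul]
    rfl
  rw [e2]
  refine (abs_integral_le_integral_abs).trans_lt ?_
  have : ∫ p', |kk ε (tt p p') * wt n p' * h p' - h p * (kk ε (tt p p') * wt n p' * 1)| ≤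
      ∫ p', η / 2 * (kk ε (tt p p') * wt n p' * 1) := by
    apply integral_mono
    · exact ((kc.integrable hh p).sub ((kc.integrable continuous_const p).const_mul _)).abs
    · exact (kc.integrable continuous_const p).const_mul _
    intro p'
    simp only
    have k0 : 0 ≤ kk ε (tt p p') * wt n p' := mul_nonneg (kk_nonneg _ _) (wt_pos _ _).le
    have : kk ε (tt p p') * wt n p' * h p' - h p * (kk ε (tt p p') * wt n p' * 1) =
      kk ε (tt p p') * wt n p' * (h p' - h p) := by ring
    rw [this, abs_mul, abs_of_nonneg k0, mul_one, mul_comm (η / 2)]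
    by_cases hc : tt p p' ≤ e
    · exact mul_le_mul_of_nonneg_left (he' p' hc).le k0
    · rw [(kk_kn ε).supp _ (hε.2.trans_lt (not_le.1 hc))]; simp
  refine this.trans_lt ?_
  rw [integral_const_mul]
  have : ∫ p', kk ε (tt p p') * wt n p' * 1 = m := rfl
  rw [this]
  nlinarith

theorem Kx_bb {n : ℕ} {r : ℝ} {w : HV n → ℝ} (hw : Continuous w) (p : HV n) :
    Kx n (bb n r) w p = Kx n (Dop n (kk r)) w p + cb n r * Kx n (kk r) w p := by
  have i1 := ((kk_kn r).dop n).integrable hw p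
  have i2 := (kk_kn r).kc.integrable hw p
  unfold Kx
  rw [← integral_const_mul, ← integral_add i1 (i2.const_mul _)]
  congr 1; ext p'
  unfold bb; ring

section eig
variable {n₁ n₂ : ℕ}

structure MinU (μ : ℝ) (u : HV n₁ × HV n₂ → ℝ) : Prop where
  c2 : ContDiff ℝ 2 u
  pos : ∀ z, 0 < u z
  eq : ∀ z, lap1 u z + lap2 u z = -μ * u z
  min : ∀ v : HV n₁ × HV n₂ → ℝ, ContDiff ℝ 2 v → (∀ z, lap1 v z + lap2 v z = -μ * v z) →
    (∀ z, 0 ≤ v z ∧ v z ≤ u z) → ∃ C : ℝ, ∀ z, v z = C * u z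

theorem K12_comm {k₁ k₂ : ℝ → ℝ} {r₁ r₂ : ℝ} (h1 : KC k₁ r₁) (h2 : KC k₂ r₂)
    {w : HV n₁ × HV n₂ → ℝ} (hw : Continuous w) : K1 k₁ (K2 k₂ w) = K2 k₂ (K1 k₁ w) := by
  ext z; rw [K12_eq h1 h2 hw, K21_eq h1 h2 hw]

theorem lap1_smul (w : HV n₁ × HV n₂ → ℝ) (c : ℝ) (z : HV n₁ × HV n₂) :
    lap1 (fun z => w z * c) z = lap1 w z * c := by
  unfold lap1; exact lap_mul_const _ _ _

theorem lap2_smul (w : HV n₁ × HV n₂ → ℝ) (c : ℝ) (z : HV n₁ × HV n₂) :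
    lap2 (fun z => w z * c) z = lap2 w z * c := by
  unfold lap2; exact lap_mul_const _ _ _

theorem K12_solves {μ : ℝ} {u : HV n₁ × HV n₂ → ℝ} (hu : ContDiff ℝ 2 u)
    (heq : ∀ z, lap1 u z + lap2 u z = -μ * u z) {k₁ k₂ : ℝ → ℝ} {r₁ r₂ : ℝ} (h1 : KN k₁ r₁) (h2 : KN k₂ r₂)
    (z : HV n₁ × HV n₂) :
    lap1 (K1 k₁ (K2 k₂ u)) z + lap2 (K1 k₁ (K2 k₂ u)) z = -μ * K1 k₁ (K2 k₂ u) z := by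
  have hc := hu.continuous
  have a1 : lap1 (K1 k₁ (K2 k₂ u)) z = ∫ z', KP k₁ k₂ (z, z') * lap1 u z' := by
    rw [lap1_K1 h1 (K2_continuous h2.kc hc), K12_comm (h1.dop n₁) h2.kc hc,
      (funext (K1_green h1 hu) : K1 (Dop n₁ k₁) u = _), K21_eq h1.kc h2.kc (lap1_continuous hu)]
  have a2 : lap2 (K1 k₁ (K2 k₂ u)) z = ∫ z', KP k₁ k₂ (z, z') * lap2 u z' := by
    rw [K12_comm h1.kc h2.kc hc, lap2_K2 h2 (K1_continuous h1.kc hc), ← K12_comm h1.kc (h2.dop n₂) hc,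
      (funext (K2_green h2 hu) : K2 (Dop n₂ k₂) u = _), K12_eq h1.kc h2.kc (lap2_continuous hu)]
  rw [a1, a2, K12_eq h1.kc h2.kc hc, ← integral_const_mul,
    ← integral_add (KP_integrable h1.kc h2.kc (lap1_continuous hu) z)
      (KP_integrable h1.kc h2.kc (lap2_continuous hu) z)]
  congr 1; ext z'
  rw [← mul_add, heq]; ring

theorem K12_eigen (hn₁ : 1 ≤ n₁) (μ : ℝ) : ∃ r0 : ℝ, 0 < r0 ∧ r0 ≤ 1 ∧
    ∀ u : HV n₁ × HV n₂ → ℝ, MinU μ u → ∀ k₁ k₂ : ℝ → ℝ,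
    KN k₁ r0 → KN k₂ r0 → (∀ t, 0 ≤ t → 0 ≤ k₁ t) → (∀ t, 0 ≤ t → 0 ≤ k₂ t) →
    ∃ c : ℝ, ∀ z, K1 k₁ (K2 k₂ u) z = c * u z := by
  obtain ⟨r0, h0, h1, H⟩ := weak_harnack (n₁ := n₁) (n₂ := n₂) hn₁ μ
  refine ⟨r0, h0, h1, fun u hu k₁ k₂ kn1 kn2 k10 k20 => ?_⟩
  obtain ⟨C, hC, hC'⟩ := H k₁ k₂ kn1.kc kn2.kc k10 k20
  have hle := hC' u hu.c2 hu.pos hu.eq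
  have hc := hu.c2.continuous
  obtain ⟨c, hc'⟩ := hu.min (fun z => K1 k₁ (K2 k₂ u) z * C⁻¹) ((K12_contDiff kn1 kn2 hc).mul contDiff_const)
    (fun z => by
      rw [lap1_smul, lap2_smul, ← add_mul, K12_solves hu.c2 hu.eq kn1 kn2]; ring)
    (fun z => by
      constructor
      · apply mul_nonneg _ (by positivity)
        rw [K12_eq kn1.kc kn2.kc hc]
        apply integral_nonneg
        intro z'
        exact mul_nonneg (mul_nonneg (mul_nonneg (k10 _ (tt_nonneg _ _)) (wt_pos _ _).le)
          (mul_nonneg (k20 _ (tt_nonneg _ _)) (wt_pos _ _).le)) (hu.pos _).le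
      · rw [mul_inv_le_iff₀ hC, mul_comm]; exact hle z)
  refine ⟨c * C, fun z => ?_⟩
  have := hc' z
  field_simp at this
  linarith

theorem KN.mono {k : ℝ → ℝ} {r r' : ℝ} (h : KN k r) (hr : r ≤ r') : KN k r' :=
  ⟨h.c2, fun t ht => h.supp t (hr.trans_lt ht)⟩

theorem eigen_each (hn₁ : 1 ≤ n₁) (μ : ℝ) : ∃ r0 : ℝ, 0 < r0 ∧ r0 ≤ 1 ∧
    ∀ u : HV n₁ × HV n₂ → ℝ, MinU μ u → ∀ k : ℝ → ℝ,
    KN k r0 → (∀ t, 0 ≤ t → 0 ≤ k t) → 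
    (∃ c : ℝ, ∀ z, K1 k u z = c * u z) ∧ (∃ c : ℝ, ∀ z, K2 k u z = c * u z) := by
  obtain ⟨r0, h0, h1, H⟩ := K12_eigen (n₁ := n₁) (n₂ := n₂) hn₁ μ
  refine ⟨r0, h0, h1, fun u hu k kn k0 => ?_⟩
  have hc := hu.c2.continuous
  have hsmall : Ioc (0:ℝ) r0 ∈ 𝓝[>] (0:ℝ) := Ioc_mem_nhdsGT h0
  constructor
  · have hg := K1_continuous (n₁ := n₁) (n₂ := n₂) kn.kc hc
    have key : ∀ z z', K1 k u z / u z = K1 k u z' / u z' := by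
      intro z z'
      have lim : ∀ z : HV n₁ × HV n₂, Tendsto (fun ε => K2 (kk ε) (K1 k u) z / u z / Kx n₂ (kk ε) (fun _ => 1) 0) (𝓝[>] 0)
          (𝓝 (K1 k u z / u z)) := by
        intro z
        have := (Kx_approx (h := fun q => K1 k u (z.1, q)) (by fun_prop) z.2).div_const (u z)
        refine this.congr fun ε => ?_
        unfold K2
        rw [div_right_comm]
      refine tendsto_nhds_unique_of_eventuallyEq (lim z) (lim z') ?_
      filter_upwards [hsmall] with ε hε
      obtain ⟨c, hc'⟩ := H u hu k (kk ε) kn ((kk_kn ε).mono hε.2) k0 (fun t _ => kk_nonneg _ _)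
      have e : ∀ z, K2 (kk ε) (K1 k u) z / u z = c := by
        intro z
        rw [← K12_comm kn.kc (kk_kn ε).kc hc, hc', mul_div_cancel_right₀ _ (hu.pos z).ne']
      rw [e, e]
    refine ⟨K1 k u 0 / u 0, fun z => ?_⟩
    rw [key 0 z, div_mul_cancel₀ _ (hu.pos z).ne']
  · have hg := K2_continuous (n₁ := n₁) (n₂ := n₂) kn.kc hc
    have key : ∀ z z', K2 k u z / u z = K2 k u z' / u z' := by
      intro z z'
      have lim : ∀ z : HV n₁ × HV n₂, Tendsto (fun ε => K1 (kk ε) (K2 k u) z / u z / Kx n₁ (kk ε) (fun _ => 1) 0) (𝓝[>] 0)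
          (𝓝 (K2 k u z / u z)) := by
        intro z
        have := (Kx_approx (h := fun q => K2 k u (q, z.2)) (by fun_prop) z.1).div_const (u z)
        refine this.congr fun ε => ?_
        unfold K1
        rw [div_right_comm]
      refine tendsto_nhds_unique_of_eventuallyEq (lim z) (lim z') ?_
      filter_upwards [hsmall] with ε hε
      obtain ⟨c, hc'⟩ := H u hu (kk ε) k ((kk_kn ε).mono hε.2) kn (fun t _ => kk_nonneg _ _) k0
      have e : ∀ z, K1 (kk ε) (K2 k u) z / u z = c := by
        intro z
        rw [hc', mul_div_cancel_right₀ _ (hu.pos z).ne']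
      rw [e, e]
    refine ⟨K2 k u 0 / u 0, fun z => ?_⟩
    rw [key 0 z, div_mul_cancel₀ _ (hu.pos z).ne']

/-- kernel data: everything needed for the averaging argument -/
theorem eigen_data (hn₁ : 1 ≤ n₁) (μ : ℝ) {u : HV n₁ × HV n₂ → ℝ} (hu : MinU μ u) :
    ∃ r : ℝ, 0 < r ∧ r ≤ 1 ∧ ∃ a b c d : ℝ, 0 < a ∧ 0 < b ∧ 0 < c ∧ 0 < d ∧
      (∀ z, K1 (kk r) u z = a * u z) ∧ (∀ z, K1 (bb n₁ r) u z = b * u z) ∧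
      (∀ z, K2 (kk r) u z = c * u z) ∧ (∀ z, K2 (bb n₂ r) u z = d * u z) := by
  obtain ⟨r, h0, h1, H⟩ := eigen_each (n₁ := n₁) (n₂ := n₂) hn₁ μ
  have hc := hu.c2.continuous
  obtain ⟨⟨a, ha⟩, ⟨c, hc'⟩⟩ := H u hu (kk r) (kk_kn r) (fun t _ => kk_nonneg _ _)
  obtain ⟨⟨b, hb⟩, -⟩ := H u hu (bb n₁ r) (bb_kn n₁ r) (bb_nonneg n₁ h0 h1)
  obtain ⟨-, ⟨d, hd⟩⟩ := H u hu (bb n₂ r) (bb_kn n₂ r) (bb_nonneg n₂ h0 h1)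
  have P : ∀ {x y : ℝ}, 0 < y → 0 < x * y → 0 < x := fun hy hxy => (pos_iff_pos_of_mul_pos hxy).2 hy
  refine ⟨r, h0, h1, a, b, c, d, P (hu.pos 0) ?_, P (hu.pos 0) ?_, P (hu.pos 0) ?_, P (hu.pos 0) ?_, ha, hb, hc', hd⟩
  · rw [← ha]; exact Kx_pos (kk_kn r).kc (fun t _ => kk_nonneg _ _) (kk_zero h0) (by fun_prop) (fun _ => hu.pos _) _
  · rw [← hb]; exact Kx_pos (bb_kn _ r).kc (bb_nonneg _ h0 h1) (bb_zero _ h0) (by fun_prop) (fun _ => hu.pos _) _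
  · rw [← hc']; exact Kx_pos (kk_kn r).kc (fun t _ => kk_nonneg _ _) (kk_zero h0) (by fun_prop) (fun _ => hu.pos _) _
  · rw [← hd]; exact Kx_pos (bb_kn _ r).kc (bb_nonneg _ h0 h1) (bb_zero _ h0) (by fun_prop) (fun _ => hu.pos _) _

theorem lap1_of_eigen {r a b : ℝ} (ha : 0 < a) {w : HV n₁ × HV n₂ → ℝ} (hw : Continuous w)
    (h1 : ∀ z, K1 (kk r) w z = a * w z) (h2 : ∀ z, K1 (bb n₁ r) w z = b * w z) (z : HV n₁ × HV n₂) :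
    lap1 w z = (b / a - cb n₁ r) * w z := by
  have e : w = fun z => K1 (kk r) w z * a⁻¹ := by
    ext z; rw [h1]; field_simp
  have e2 : K1 (bb n₁ r) w z = K1 (Dop n₁ (kk r)) w z + cb n₁ r * K1 (kk r) w z :=
    Kx_bb (by fun_prop) _
  rw [h1, h2] at e2
  have e3 := lap1_K1 (kk_kn r) hw z
  calc lap1 w z = lap1 (fun z => K1 (kk r) w z * a⁻¹) z := by rw [← e]
    _ = (b * w z - cb n₁ r * (a * w z)) * a⁻¹ := by rw [lap1_smul, e3, e2]; ring
    _ = _ := by field_simp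

theorem lap2_of_eigen {r a b : ℝ} (ha : 0 < a) {w : HV n₁ × HV n₂ → ℝ} (hw : Continuous w)
    (h1 : ∀ z, K2 (kk r) w z = a * w z) (h2 : ∀ z, K2 (bb n₂ r) w z = b * w z) (z : HV n₁ × HV n₂) :
    lap2 w z = (b / a - cb n₂ r) * w z := by
  have e : w = fun z => K2 (kk r) w z * a⁻¹ := by
    ext z; rw [h1]; field_simp
  have e2 : K2 (bb n₂ r) w z = K2 (Dop n₂ (kk r)) w z + cb n₂ r * K2 (kk r) w z :=
    Kx_bb (by fun_prop) _
  rw [h1, h2] at e2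
  have e3 := lap2_K2 (kk_kn r) hw z
  calc lap2 w z = lap2 (fun z => K2 (kk r) w z * a⁻¹) z := by rw [← e]
    _ = (b * w z - cb n₂ r * (a * w z)) * a⁻¹ := by rw [lap2_smul, e3, e2]; ring
    _ = _ := by field_simp

end eig

theorem ultra_limit {Z : Type*} [TopologicalSpace Z] {v : ℕ → Z → ℝ} {u : Z → ℝ}
    (h0 : ∀ K z, 0 ≤ v K z) (h1 : ∀ K z, v K z ≤ u z) (he : Equicontinuous v) :
    ∃ F : Filter ℕ, F.NeBot ∧ F ≤ atTop ∧ ∃ w : Z → ℝ, Continuous w ∧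
      (∀ z, Tendsto (fun K => v K z) F (𝓝 (w z))) ∧
      ∀ T : Set Z, IsCompact T → TendstoUniformlyOn v w F T := by
  have hF : (hyperfilter ℕ : Filter ℕ) ≤ atTop := by
    rw [← Nat.cofinite_eq_atTop]; exact hyperfilter_le_cofinite
  have hx : ∀ z, ∃ x : ℝ, Tendsto (fun K => v K z) (hyperfilter ℕ) (𝓝 x) := by
    intro z
    have hc : IsCompact (Icc 0 (u z)) := isCompact_Icc
    obtain ⟨x, -, hx⟩ := hc.ultrafilter_le_nhds ((hyperfilter ℕ).map (fun K => v K z)) (by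
      rw [le_principal_iff]
      exact Filter.mem_map.2 (Eventually.of_forall fun K => ⟨h0 K z, h1 K z⟩))
    exact ⟨x, hx⟩
  choose w hw using hx
  have hpi : Tendsto v (hyperfilter ℕ) (𝓝 w) := tendsto_pi_nhds.2 hw
  refine ⟨hyperfilter ℕ, inferInstance, hF, w, hpi.continuous_of_equicontinuous he, hw, ?_⟩
  intro T hT
  have := (EquicontinuousOn.tendsto_uniformOnFun_iff_pi (F := v) (𝔖 := {K : Set Z | IsCompact K}) (fun K hK => hK)
    (by rw [eq_univ_iff_forall]; intro z; exact ⟨{z}, isCompact_singleton, rfl⟩)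
    (fun K _ => he.equicontinuousOn K) (hyperfilter ℕ) w).2 hpi
  exact UniformOnFun.tendsto_iff_tendstoUniformlyOn.1 this T hT

theorem int_tendsto {X : Type*} [TopologicalSpace X] [T2Space X] [MeasurableSpace X] [BorelSpace X] {m : Measure X}
    [IsFiniteMeasureOnCompacts m] {κ : X → ℝ} (hκ : Continuous κ) {T : Set X} (hT : IsCompact T)
    (hs : ∀ x ∉ T, κ x = 0) {v : ℕ → X → ℝ} {w : X → ℝ} (hv : ∀ K, Continuous (v K)) (hw : Continuous w)
    {F : Filter ℕ} (h : TendstoUniformlyOn v w F T) :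
    Tendsto (fun K => ∫ x, κ x * v K x ∂m) F (𝓝 (∫ x, κ x * w x ∂m)) := by
  have hcs : HasCompactSupport κ := HasCompactSupport.intro hT hs
  have hIntg : ∀ g : X → ℝ, Continuous g → Integrable (fun x => κ x * g x) m := fun g hg =>
    (hκ.mul hg).integrable_of_hasCompactSupport hcs.mul_right
  have hκi : Integrable (fun x => |κ x|) m := (hκ.integrable_of_hasCompactSupport hcs).abs
  set M := ∫ x, |κ x| ∂m with hM
  have hM0 : 0 ≤ M := integral_nonneg fun x => abs_nonneg _
  rw [Metric.tendsto_nhds]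
  intro ε hε
  have := Metric.tendstoUniformlyOn_iff.1 h (ε / (M + 1)) (by positivity)
  filter_upwards [this] with K hK
  rw [dist_eq_norm, ← integral_sub (hIntg _ (hv K)) (hIntg _ hw)]
  calc ‖∫ x, κ x * v K x - κ x * w x ∂m‖ ≤ ∫ x, |κ x| * (ε / (M + 1)) ∂m := by
        apply norm_integral_le_of_norm_le (hκi.mul_const _)
        refine Eventually.of_forall fun x => ?_
        rw [← mul_sub, norm_mul, Real.norm_eq_abs]
        by_cases hx : x ∈ T
        · have := (hK x hx).le
          rw [dist_comm, dist_eq_norm] at this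
          gcongr
        · simp [hs x hx]
    _ = M * (ε / (M + 1)) := by rw [integral_mul_const]
    _ < ε := by
        rw [mul_div_assoc', div_lt_iff₀ (by positivity)]; nlinarith

section lims
variable {n₁ n₂ : ℕ}

theorem Kx_tendsto {n : ℕ} {k : ℝ → ℝ} {r : ℝ} (h : KC k r) {v : ℕ → HV n → ℝ} {w : HV n → ℝ}
    (hv : ∀ K, Continuous (v K)) (hw : Continuous w) {F : Filter ℕ}
    (hu : ∀ T, IsCompact T → TendstoUniformlyOn v w F T) (p : HV n) :
    Tendsto (fun K => Kx n k (v K) p) F (𝓝 (Kx n k w p)) := by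
  obtain ⟨T, hT, hT0⟩ := (h.locSupp (n := n)) {p} isCompact_singleton
  have hc := (h.kcont (n := n))
  exact int_tendsto (κ := fun p' => k (tt p p') * wt n p')
    (hc.comp (by fun_prop : Continuous fun p' : HV n => (p, p'))) hT
    (fun x hx => hT0 p rfl x hx) hv hw (hu T hT)

theorem K1_tendsto {k : ℝ → ℝ} {r : ℝ} (h : KC k r) {v : ℕ → HV n₁ × HV n₂ → ℝ} {w : HV n₁ × HV n₂ → ℝ}
    (hv : ∀ K, Continuous (v K)) (hw : Continuous w) {F : Filter ℕ}
    (hu : ∀ T, IsCompact T → TendstoUniformlyOn v w F T) (z : HV n₁ × HV n₂) :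
    Tendsto (fun K => K1 k (v K) z) F (𝓝 (K1 k w z)) := by
  unfold K1
  refine Kx_tendsto h (v := fun K p => v K (p, z.2)) (fun K => (hv K).comp (by fun_prop)) (hw.comp (by fun_prop)) (fun T hT => ?_) z.1
  have := (hu ((fun p => (p, z.2)) '' T) (hT.image (by fun_prop))).comp (fun p => (p, z.2))
  exact this.mono (subset_preimage_image _ _)

theorem K2_tendsto {k : ℝ → ℝ} {r : ℝ} (h : KC k r) {v : ℕ → HV n₁ × HV n₂ → ℝ} {w : HV n₁ × HV n₂ → ℝ}
    (hv : ∀ K, Continuous (v K)) (hw : Continuous w) {F : Filter ℕ}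
    (hu : ∀ T, IsCompact T → TendstoUniformlyOn v w F T) (z : HV n₁ × HV n₂) :
    Tendsto (fun K => K2 k (v K) z) F (𝓝 (K2 k w z)) := by
  unfold K2
  refine Kx_tendsto h (v := fun K p => v K (z.1, p)) (fun K => (hv K).comp (by fun_prop)) (hw.comp (by fun_prop)) (fun T hT => ?_) z.2
  have := (hu ((fun p => (z.1, p)) '' T) (hT.image (by fun_prop))).comp (fun p => (z.1, p))
  exact this.mono (subset_preimage_image _ _)

theorem K12_equicont {k₁ k₂ : ℝ → ℝ} {r₁ r₂ : ℝ} (h1 : KC k₁ r₁) (h2 : KC k₂ r₂)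
    {u : HV n₁ × HV n₂ → ℝ} (hu : Continuous u) {h : ℕ → HV n₁ × HV n₂ → ℝ} (hc : ∀ K, Continuous (h K))
    (h0 : ∀ K z, 0 ≤ h K z) (hle : ∀ K z, h K z ≤ u z) :
    Equicontinuous (fun K => K1 k₁ (K2 k₂ (h K))) := by
  intro z
  have kc := KP_continuous (n₁ := n₁) (n₂ := n₂) h1 h2
  have ks := KP_locSupp (n₁ := n₁) (n₂ := n₂) h1 h2
  have lsF : LocSupp (fun y : (HV n₁ × HV n₂) × (HV n₁ × HV n₂) => |KP k₁ k₂ (z, y.2) - KP k₁ k₂ y| * u y.2) := by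
    intro S hS
    obtain ⟨T, hT, hT0⟩ := ks (insert z S) (hS.insert z)
    refine ⟨T, hT, fun y hy y' hy' => ?_⟩
    simp [hT0 z (mem_insert _ _) y' hy', hT0 y (mem_insert_of_mem _ hy) y' hy']
  have cF : Continuous (fun y : (HV n₁ × HV n₂) × (HV n₁ × HV n₂) => |KP k₁ k₂ (z, y.2) - KP k₁ k₂ y| * u y.2) := by
    have : Continuous (fun y : (HV n₁ × HV n₂) × (HV n₁ × HV n₂) => KP k₁ k₂ (z, y.2)) :=
      kc.comp (by fun_prop)
    fun_prop
  have cI := cont_param_int cF lsF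
  have hb := cI.tendsto z
  simp only [sub_self, abs_zero, zero_mul, integral_zero] at hb
  apply Metric.equicontinuousAt_of_continuity_modulus _ hb
  filter_upwards with z' K
  rw [K12_eq h1 h2 (hc K), K12_eq h1 h2 (hc K), dist_eq_norm,
    ← integral_sub (KP_integrable h1 h2 (hc K) z) (KP_integrable h1 h2 (hc K) z')]
  apply norm_integral_le_of_norm_le
  · obtain ⟨T, hT, hT0⟩ := lsF {z'} isCompact_singleton
    refine (cF.comp (by fun_prop : Continuous fun x => (z', x))).integrable_of_hasCompactSupport
      (HasCompactSupport.intro hT fun x hx => hT0 z' rfl x hx)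
  · refine Eventually.of_forall fun x => ?_
    rw [← sub_mul, norm_mul, Real.norm_eq_abs, Real.norm_eq_abs, abs_of_nonneg (h0 K x)]
    exact mul_le_mul_of_nonneg_left (hle K x) (abs_nonneg _)

theorem K1_add_mul {k : ℝ → ℝ} {r : ℝ} (h : KC k r) (C : ℝ) {f g : HV n₁ × HV n₂ → ℝ}
    (hf : Continuous f) (hg : Continuous g) (z : HV n₁ × HV n₂) :
    K1 k (fun z => f z + C * g z) z = K1 k f z + C * K1 k g z :=
  Kx_add_mul h C (f := fun p => f (p, z.2)) (g := fun p => g (p, z.2)) (hf.comp (by fun_prop)) (hg.comp (by fun_prop)) z.1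

theorem K2_add_mul {k : ℝ → ℝ} {r : ℝ} (h : KC k r) (C : ℝ) {f g : HV n₁ × HV n₂ → ℝ}
    (hf : Continuous f) (hg : Continuous g) (z : HV n₁ × HV n₂) :
    K2 k (fun z => f z + C * g z) z = K2 k f z + C * K2 k g z :=
  Kx_add_mul h C (f := fun p => f (z.1, p)) (g := fun p => g (z.1, p)) (hf.comp (by fun_prop)) (hg.comp (by fun_prop)) z.2

theorem Kx_zero' {n : ℕ} (k : ℝ → ℝ) (p : HV n) : Kx n k (fun _ => 0) p = 0 := by simp [Kx]

/-- `s • K1 k` as a linear operator on continuous functions -/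
noncomputable def K1L {k : ℝ → ℝ} {r : ℝ} (h : KC k r) (s : ℝ) : Module.End ℝ C(HV n₁ × HV n₂, ℝ) where
  toFun f := ⟨fun z => s * K1 k f z, continuous_const.mul (K1_continuous h f.continuous)⟩
  map_add' f g := by
    ext z
    have := K1_add_mul h 1 f.continuous g.continuous z
    simp only [one_mul] at this
    change s * K1 k (fun z => f z + g z) z = s * K1 k f z + s * K1 k g z
    rw [this]; ring
  map_smul' c f := by
    ext z
    have := K1_add_mul h c (f := fun _ => 0) continuous_const f.continuous z
    simp only [zero_add] at this
    change s * K1 k (fun z => c * f z) z = c * (s * K1 k f z)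
    rw [this]
    have : K1 k (fun _ => 0) z = 0 := Kx_zero' _ _
    rw [this]; ring

theorem K1L_apply {k : ℝ → ℝ} {r : ℝ} (h : KC k r) (s : ℝ) (f : C(HV n₁ × HV n₂, ℝ)) (z : HV n₁ × HV n₂) :
    K1L h s f z = s * K1 k f z := rfl

theorem avg_exists {Z : Type*} [TopologicalSpace Z] {A B : Module.End ℝ C(Z, ℝ)} (hAB : Commute A B)
    {u ψ : C(Z, ℝ)} {G : Set C(Z, ℝ)} (hG : Convex ℝ G) (hA : ∀ f ∈ G, A f ∈ G) (hB : ∀ f ∈ G, B f ∈ G)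
    (hGu : ∀ f ∈ G, ∀ z, 0 ≤ f z ∧ f z ≤ u z) (hψ : ψ ∈ G) (K : ℕ) :
    ∃ h ∈ G, ∀ z, |(A h - B h) z| ≤ (1 / ((K:ℝ) + 1)) * u z := by
  have hAi : ∀ i : ℕ, ∀ f ∈ G, (A ^ i) f ∈ G := by
    intro i
    induction i with
    | zero => intro f hf; simpa using hf
    | succ i ih => intro f hf; rw [pow_succ]; exact ih _ (hA f hf)
  have hBi : ∀ i : ℕ, ∀ f ∈ G, (B ^ i) f ∈ G := by
    intro i
    induction i with
    | zero => intro f hf; simpa using hf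
    | succ i ih => intro f hf; rw [pow_succ]; exact ih _ (hB f hf)
  set c : ℝ := 1 / ((K:ℝ) + 1) with hc
  have hc0 : 0 ≤ c := by positivity
  refine ⟨∑ i ∈ Finset.range (K + 1), c • (A ^ i * B ^ (K + 1 - 1 - i)) ψ, ?_, ?_⟩
  · apply hG.sum_mem (fun _ _ => hc0)
    · simp [hc]; field_simp
    · intro i _
      exact hAi _ _ (hBi _ _ hψ)
  · intro z
    have e := hAB.mul_geom_sum₂ (K + 1)
    have e2 := congrArg (fun L : Module.End ℝ C(Z, ℝ) => L (c • ψ)) e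
    have e3 : A (∑ i ∈ Finset.range (K + 1), c • (A ^ i * B ^ (K + 1 - 1 - i)) ψ)
       - B (∑ i ∈ Finset.range (K + 1), c • (A ^ i * B ^ (K + 1 - 1 - i)) ψ)
       = c • ((A ^ (K+1)) ψ - (B ^ (K+1)) ψ) := by
      simp only [Module.End.mul_apply, LinearMap.sub_apply, LinearMap.sum_apply, map_smul] at e2
      rw [← e2]
      simp only [Module.End.mul_apply, ← Finset.smul_sum, map_smul, smul_sub]
    rw [e3]
    have a1 := hGu _ (hAi (K+1) ψ hψ) z
    have a2 := hGu _ (hBi (K+1) ψ hψ) z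
    rw [ContinuousMap.smul_apply, ContinuousMap.sub_apply, smul_eq_mul, abs_mul, abs_of_nonneg hc0]
    apply mul_le_mul_of_nonneg_left _ hc0
    rw [abs_le]; constructor <;> linarith [a1.1, a1.2, a2.1, a2.2]
end lims

section rank
variable {n₁ n₂ : ℕ}

theorem K1L_comm {r : ℝ} (s s' : ℝ) :
    Commute (K1L (n₁ := n₁) (n₂ := n₂) (kk_kn r).kc s) (K1L (bb_kn n₁ r).kc s') := by
  ext f z
  have key : K1 (kk r) (K1 (bb n₁ r) f) z = K1 (bb n₁ r) (K1 (kk r) f) z :=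
    Kx_comm (kk_kn r) (b := bb n₁ r) (C := cb n₁ r) (fun t => rfl)
      (w := fun p => f (p, z.2)) (f.continuous.comp (by fun_prop)) z.1
  have e1 : ∀ {k : ℝ → ℝ} (h : KC k r) (g : HV n₁ × HV n₂ → ℝ) (hg : Continuous g) (c : ℝ),
      K1 k (fun z => c * g z) z = c * K1 k g z := by
    intro k h g hg c
    have := K1_add_mul h c (f := fun _ => 0) continuous_const hg z
    simp only [zero_add] at this
    rw [this]
    have : K1 k (fun _ => 0) z = 0 := Kx_zero' _ _
    rw [this]; ring
  change s * K1 (kk r) (fun z => s' * K1 (bb n₁ r) f z) z = s' * K1 (bb n₁ r) (fun z => s * K1 (kk r) f z) z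
  rw [e1 (kk_kn r).kc _ (K1_continuous (bb_kn n₁ r).kc f.continuous),
    e1 (bb_kn n₁ r).kc _ (K1_continuous (kk_kn r).kc f.continuous), key]
  ring

theorem K1_const_mul {k : ℝ → ℝ} (w : HV n₁ × HV n₂ → ℝ) (c : ℝ) (z : HV n₁ × HV n₂) :
    K1 k (fun z => c * w z) z = c * K1 k w z := by
  unfold K1 Kx
  rw [← integral_const_mul]
  congr 1; ext; ring

theorem K2_const_mul {k : ℝ → ℝ} (w : HV n₁ × HV n₂ → ℝ) (c : ℝ) (z : HV n₁ × HV n₂) :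
    K2 k (fun z => c * w z) z = c * K2 k w z := by
  unfold K2 Kx
  rw [← integral_const_mul]
  congr 1; ext; ring

theorem K1_zero' (k : ℝ → ℝ) (z : HV n₁ × HV n₂) : K1 k (fun _ => 0) z = 0 := Kx_zero' _ _

/-- the convex set of good functions -/
def GoodS (u : HV n₁ × HV n₂ → ℝ) (r c d : ℝ) (q0 q1 : HV n₂) : Set C(HV n₁ × HV n₂, ℝ) :=
  {h | (∀ z, 0 ≤ h z ∧ h z ≤ u z) ∧ (∀ z, K2 (kk r) h z = c * h z) ∧ (∀ z, K2 (bb n₂ r) h z = d * h z) ∧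
    ∀ p, h (p, q0) + h (p, q1) = u (p, q0)}

theorem GoodS_convex (u : HV n₁ × HV n₂ → ℝ) (r c d : ℝ) (q0 q1 : HV n₂) :
    Convex ℝ (GoodS (n₁ := n₁) u r c d q0 q1) := by
  intro f hf g hg α β hα hβ hαβ
  have fE : ∀ {k : ℝ → ℝ} (h : KC k r) z, K2 k (α • f + β • g : C(HV n₁ × HV n₂, ℝ)) z = α * K2 k f z + β * K2 k g z := by
    intro k h z
    have := K2_add_mul h β (f := fun z => α * f z) (g := g) (by fun_prop) g.continuous z
    rw [K2_const_mul] at this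
    exact this
  have e : ∀ z, (α • f + β • g : C(HV n₁ × HV n₂, ℝ)) z = α * f z + β * g z := fun z => rfl
  refine ⟨fun z => ?_, fun z => ?_, fun z => ?_, fun p => ?_⟩
  · rw [e]
    have h1 := hf.1 z; have h2 := hg.1 z
    constructor
    · have := mul_nonneg hα h1.1; have := mul_nonneg hβ h2.1; linarith
    · have := mul_le_mul_of_nonneg_left h1.2 hα; have := mul_le_mul_of_nonneg_left h2.2 hβ
      have : u z = α * u z + β * u z := by rw [← add_mul, hαβ, one_mul]
      linarith
  · rw [fE (kk_kn r).kc, e, hf.2.1, hg.2.1]; ring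
  · rw [fE (bb_kn n₂ r).kc, e, hf.2.2.1, hg.2.2.1]; ring
  · rw [e, e]
    have h1 := hf.2.2.2 p; have h2 := hg.2.2.2 p
    calc _ = α * (f (p, q0) + f (p, q1)) + β * (g (p, q0) + g (p, q1)) := by ring
      _ = u (p, q0) := by rw [h1, h2, ← add_mul, hαβ, one_mul]

theorem GoodS_map {u : HV n₁ × HV n₂ → ℝ} (hu : Continuous u) {r c d : ℝ} {q0 q1 : HV n₂} {k : ℝ → ℝ} {r' : ℝ}
    (hk : KC k r') (hk0 : ∀ t, 0 ≤ t → 0 ≤ k t) {a : ℝ} (ha : 0 < a) (hau : ∀ z, K1 k u z = a * u z)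
    {f : C(HV n₁ × HV n₂, ℝ)} (hf : f ∈ GoodS (n₁ := n₁) u r c d q0 q1) :
    K1L hk a⁻¹ f ∈ GoodS (n₁ := n₁) u r c d q0 q1 := by
  have hai : 0 ≤ a⁻¹ := by positivity
  have comm : ∀ {k₂ : ℝ → ℝ} (h : KC k₂ r) (e : ℝ), (∀ z, K2 k₂ f z = e * f z) → ∀ z,
      K2 k₂ (K1L hk a⁻¹ f) z = e * K1L hk a⁻¹ f z := by
    intro k₂ h e he z
    have h1 : K2 k₂ (K1L hk a⁻¹ f) z = a⁻¹ * K2 k₂ (K1 k f) z := K2_const_mul _ _ _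
    rw [h1, ← K12_comm hk h f.continuous, funext he, K1_const_mul, K1L_apply]
    ring
  refine ⟨fun z => ⟨?_, ?_⟩, comm (kk_kn r).kc c hf.2.1, comm (bb_kn n₂ r).kc d hf.2.2.1, fun p => ?_⟩
  · rw [K1L_apply]
    apply mul_nonneg hai
    have := K1_mono hk hk0 (v := fun _ => 0) (w := f) continuous_const f.continuous (fun z => (hf.1 z).1) z
    rwa [K1_zero'] at this
  · rw [K1L_apply]
    have := K1_mono hk hk0 (v := f) (w := u) f.continuous hu (fun z => (hf.1 z).2) z
    rw [hau] at this
    calc _ ≤ a⁻¹ * (a * u z) := mul_le_mul_of_nonneg_left this hai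
      _ = u z := by field_simp
  · rw [K1L_apply, K1L_apply, ← mul_add]
    have : K1 k f (p, q0) + K1 k f (p, q1) = K1 k u (p, q0) := by
      have := Kx_add_mul hk 1 (f := fun p => f (p, q0)) (g := fun p => f (p, q1)) (by fun_prop) (by fun_prop) p
      simp only [one_mul, hf.2.2.2] at this
      exact this.symm
    rw [this, hau]; field_simp

theorem rank_one_pair {μ : ℝ} {u : HV n₁ × HV n₂ → ℝ} (hu : MinU μ u) {r a b c d : ℝ} (hr : 0 < r) (hr1 : r ≤ 1)
    (ha : 0 < a) (hb : 0 < b) (hc : 0 < c) (hua : ∀ z, K1 (kk r) u z = a * u z)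
    (hub : ∀ z, K1 (bb n₁ r) u z = b * u z)
    (huc : ∀ z, K2 (kk r) u z = c * u z) (hud : ∀ z, K2 (bb n₂ r) u z = d * u z) (q0 q1 : HV n₂) :
    ∃ C : ℝ, ∀ p, u (p, q0) = C * (u (p, q0) + u (p, q1)) := by
  have ucont := hu.c2.continuous
  have hφ : Continuous (fun p : HV n₁ => u (p, q0) / (u (p, q0) + u (p, q1))) := by
    apply Continuous.div (by fun_prop) (by fun_prop)
    intro p; exact (add_pos (hu.pos _) (hu.pos _)).ne'
  set φ := (fun p : HV n₁ => u (p, q0) / (u (p, q0) + u (p, q1))) with φdef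
  have φ0 : ∀ p, 0 ≤ φ p := fun p => div_nonneg (hu.pos _).le (add_pos (hu.pos _) (hu.pos _)).le
  have φ1 : ∀ p, φ p ≤ 1 := fun p => by
    rw [φdef]; rw [div_le_one (add_pos (hu.pos _) (hu.pos _))]; linarith [hu.pos (p, q1)]
  let ψ : C(HV n₁ × HV n₂, ℝ) := ⟨fun z => φ z.1 * u z, by fun_prop⟩
  have ψk : ∀ (k : ℝ → ℝ) (e : ℝ), (∀ z, K2 k u z = e * u z) → ∀ z, K2 k ψ z = e * ψ z := by
    intro k e he z
    have h1 : K2 k ψ z = φ z.1 * K2 k u z := by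
      change Kx n₂ k (fun q => φ z.1 * u (z.1, q)) z.2 = φ z.1 * Kx n₂ k (fun q => u (z.1, q)) z.2
      unfold Kx
      rw [← integral_const_mul]
      congr 1; ext; ring
    rw [h1, he]
    change φ z.1 * (e * u z) = e * (φ z.1 * u z)
    ring
  have hψ : ψ ∈ GoodS (n₁ := n₁) u r c d q0 q1 := by
    refine ⟨fun z => ⟨mul_nonneg (φ0 _) (hu.pos _).le, ?_⟩, ψk _ _ huc, ψk _ _ hud, fun p => ?_⟩
    · exact mul_le_of_le_one_left (hu.pos _).le (φ1 _)
    · change φ p * u (p, q0) + φ p * u (p, q1) = u (p, q0)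
      rw [← mul_add]
      exact div_mul_cancel₀ _ (add_pos (hu.pos _) (hu.pos _)).ne'
  have hk0 : ∀ t : ℝ, 0 ≤ t → 0 ≤ kk r t := fun t _ => kk_nonneg _ _
  have hb0 := bb_nonneg n₁ hr hr1
  have hA : ∀ f ∈ GoodS (n₁ := n₁) u r c d q0 q1, K1L (kk_kn r).kc a⁻¹ f ∈ GoodS (n₁ := n₁) u r c d q0 q1 :=
    fun f hf => GoodS_map ucont (kk_kn r).kc hk0 ha hua hf
  have hB : ∀ f ∈ GoodS (n₁ := n₁) u r c d q0 q1, K1L (bb_kn n₁ r).kc b⁻¹ f ∈ GoodS (n₁ := n₁) u r c d q0 q1 :=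
    fun f hf => GoodS_map ucont (bb_kn n₁ r).kc hb0 hb hub hf
  have ex := avg_exists (K1L_comm (n₁ := n₁) (n₂ := n₂) (r := r) a⁻¹ b⁻¹) (u := ⟨u, ucont⟩) (GoodS_convex u r c d q0 q1) hA hB
    (fun f hf => hf.1) hψ
  choose h hG hdiff using ex
  set v : ℕ → C(HV n₁ × HV n₂, ℝ) := fun K => K1L (kk_kn r).kc a⁻¹ (h K) with vdef
  have vG : ∀ K, v K ∈ GoodS (n₁ := n₁) u r c d q0 q1 := fun K => hA _ (hG K)
  have veq : ∀ K z, v K z = (a⁻¹ * c⁻¹) * K1 (kk r) (K2 (kk r) (h K)) z := by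
    intro K z
    rw [funext (hG K).2.1, K1_const_mul, vdef, K1L_apply]
    field_simp
  have vequi : Equicontinuous (fun K z => v K z) := by
    have := K12_equicont (n₁ := n₁) (n₂ := n₂) (kk_kn r).kc (kk_kn r).kc (ucont.const_mul (a⁻¹ * c⁻¹)) 
      (h := fun K z => (a⁻¹ * c⁻¹) * h K z) (fun K => by fun_prop)
      (fun K z => mul_nonneg (by positivity) ((hG K).1 z).1)
      (fun K z => mul_le_mul_of_nonneg_left ((hG K).1 z).2 (by positivity))
    convert this using 3 with K z
    have e : K2 (kk r) (fun z => (a⁻¹ * c⁻¹) * h K z) = fun z => (a⁻¹ * c⁻¹) * K2 (kk r) (h K) z :=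
      funext (K2_const_mul _ _)
    rw [veq, e, K1_const_mul]
  obtain ⟨F, hF, hFat, w, wc, wt', wu⟩ := ultra_limit (v := fun K z => v K z) (u := u) (fun K z => ((vG K).1 z).1)
    (fun K z => ((vG K).1 z).2) vequi
  have vc : ∀ K, Continuous (fun z => v K z) := fun K => (v K).continuous
  have w0 : ∀ z, 0 ≤ w z := fun z => ge_of_tendsto' (wt' z) fun K => ((vG K).1 z).1
  have w1 : ∀ z, w z ≤ u z := fun z => le_of_tendsto' (wt' z) fun K => ((vG K).1 z).2
  have wk : ∀ z, K2 (kk r) w z = c * w z := fun z =>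
    tendsto_nhds_unique (K2_tendsto (kk_kn r).kc vc wc wu z)
      (((wt' z).const_mul c).congr fun K => ((vG K).2.1 z).symm)
  have wb : ∀ z, K2 (bb n₂ r) w z = d * w z := fun z =>
    tendsto_nhds_unique (K2_tendsto (bb_kn n₂ r).kc vc wc wu z)
      (((wt' z).const_mul d).congr fun K => ((vG K).2.2.1 z).symm)
  have ws : ∀ p, w (p, q0) + w (p, q1) = u (p, q0) := fun p =>
    tendsto_nhds_unique ((wt' (p, q0)).add (wt' (p, q1)))
      (tendsto_const_nhds.congr fun K => ((vG K).2.2.2 p).symm)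
  have wAB : ∀ z, a⁻¹ * K1 (kk r) w z = b⁻¹ * K1 (bb n₁ r) w z := by
    intro z
    have t1 := (K1_tendsto (kk_kn r).kc vc wc wu z).const_mul a⁻¹
    have t2 := (K1_tendsto (bb_kn n₁ r).kc vc wc wu z).const_mul b⁻¹
    have t3 : Tendsto (fun K : ℕ => a⁻¹ * K1 (kk r) (fun z => v K z) z - b⁻¹ * K1 (bb n₁ r) (fun z => v K z) z) F (𝓝 0) := by
      have lim0 : Tendsto (fun K : ℕ => (1 / ((K:ℝ) + 1)) * u z) F (𝓝 0) := by
        have := (tendsto_one_div_add_atTop_nhds_zero_nat (𝕜 := ℝ)).mul_const (u z)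
        rw [zero_mul] at this
        exact this.mono_left hFat
      refine squeeze_zero_norm (fun K => ?_) lim0
      have cm := congrArg (fun L : Module.End ℝ C(HV n₁ × HV n₂, ℝ) => L (h K) z) (K1L_comm (n₁ := n₁) (n₂ := n₂) (r := r) a⁻¹ b⁻¹).eq
      have e : a⁻¹ * K1 (kk r) (fun z => v K z) z - b⁻¹ * K1 (bb n₁ r) (fun z => v K z) z
          = K1L (kk_kn r).kc a⁻¹ (K1L (kk_kn r).kc a⁻¹ (h K) - K1L (bb_kn n₁ r).kc b⁻¹ (h K)) z := by
        rw [map_sub, ContinuousMap.sub_apply]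
        exact congrArg₂ (· - ·) rfl cm.symm
      rw [e, K1L_apply, Real.norm_eq_abs, abs_le]
      set D : C(HV n₁ × HV n₂, ℝ) := K1L (kk_kn r).kc a⁻¹ (h K) - K1L (bb_kn n₁ r).kc b⁻¹ (h K) with hD
      have m1 := K1_mono (kk_kn r).kc hk0 (v := D)
        (w := fun z => (1 / ((K:ℝ) + 1)) * u z) (ContinuousMap.continuous D) (by fun_prop)
        (fun z => (abs_le.1 (hdiff K z)).2) z
      have m2 := K1_mono (kk_kn r).kc hk0 (w := D)
        (v := fun z => (-(1 / ((K:ℝ) + 1))) * u z) (by fun_prop) (ContinuousMap.continuous D)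
        (fun z => by rw [neg_mul]; exact (abs_le.1 (hdiff K z)).1) z
      rw [K1_const_mul, hua] at m1 m2
      have hai : 0 ≤ a⁻¹ := by positivity
      have m1' := mul_le_mul_of_nonneg_left m1 hai
      have m2' := mul_le_mul_of_nonneg_left m2 hai
      have e1 : a⁻¹ * (1 / ((K:ℝ) + 1) * (a * u z)) = 1 / ((K:ℝ) + 1) * u z := by field_simp
      have e2 : a⁻¹ * (-(1 / ((K:ℝ) + 1)) * (a * u z)) = -(1 / ((K:ℝ) + 1) * u z) := by field_simp
      rw [e1] at m1'; rw [e2] at m2'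
      exact ⟨m2', m1'⟩
    have := tendsto_nhds_unique (t1.sub t2) t3
    linarith
  -- the solution
  set V : HV n₁ × HV n₂ → ℝ := fun z => K1 (kk r) w z * a⁻¹ with Vdef
  have VG : (⟨V, by have := K1_continuous (n₁ := n₁) (n₂ := n₂) (kk_kn r).kc wc; fun_prop⟩ : C(HV n₁ × HV n₂, ℝ))
      ∈ GoodS (n₁ := n₁) u r c d q0 q1 := by
    have := hA ⟨w, wc⟩ ⟨fun z => ⟨w0 z, w1 z⟩, wk, wb, ws⟩
    convert this using 1
    ext z
    rw [K1L_apply]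
    exact mul_comm _ _
  have Vc2 : ContDiff ℝ 2 V := by
    have e : V = fun z => K1 (kk r) (K2 (kk r) w) z * (a⁻¹ * c⁻¹) := by
      ext z
      rw [funext wk, K1_const_mul, Vdef]; field_simp
    rw [e]
    exact (K12_contDiff (kk_kn r) (kk_kn r) wc).mul contDiff_const
  have Vl1 : ∀ z, lap1 V z = (b / a - cb n₁ r) * V z := by
    intro z
    rw [Vdef, lap1_smul, lap1_K1 (kk_kn r) wc]
    have e2 : K1 (bb n₁ r) w z = K1 (Dop n₁ (kk r)) w z + cb n₁ r * K1 (kk r) w z :=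
      Kx_bb (by fun_prop) _
    have e3 : K1 (bb n₁ r) w z = b / a * K1 (kk r) w z := by
      have := wAB z
      field_simp at this
      rw [div_mul_eq_mul_div, eq_div_iff ha.ne']; linarith
    rw [e3] at e2
    have : K1 (Dop n₁ (kk r)) w z = (b / a - cb n₁ r) * K1 (kk r) w z := by linarith
    rw [this]; ring
  have Vl2 : ∀ z, lap2 V z = (d / c - cb n₂ r) * V z := lap2_of_eigen hc Vc2.continuous VG.2.1 VG.2.2.1
  have ul1 := lap1_of_eigen ha ucont hua hub
  have ul2 := lap2_of_eigen hc ucont huc hud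
  have hμ : (b / a - cb n₁ r) + (d / c - cb n₂ r) = -μ := by
    have := hu.eq 0
    rw [ul1, ul2, ← add_mul] at this
    exact mul_right_cancel₀ (hu.pos 0).ne' this
  obtain ⟨C, hC⟩ := hu.min V Vc2 (fun z => by rw [Vl1, Vl2, ← add_mul, hμ]) VG.1
  refine ⟨C, fun p => ?_⟩
  have := VG.2.2.2 p
  change V (p, q0) + V (p, q1) = _ at this
  rw [hC, hC] at this
  linarith

/-- splitting in logarithmic coordinates -/
theorem split_log (hn₁ : 1 ≤ n₁) {μ : ℝ} {u : HV n₁ × HV n₂ → ℝ} (hu : MinU μ u) :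
    ∃ μ₁ μ₂ : ℝ, μ₁ + μ₂ = μ ∧ (∀ z, lap1 u z = -μ₁ * u z) ∧ (∀ z, lap2 u z = -μ₂ * u z) ∧
      ∀ p q, u (p, q) * u (0, 0) = u (p, 0) * u (0, q) := by
  obtain ⟨r, hr, hr1, a, b, c, d, ha, hb, hc, hd, hua, hub, huc, hud⟩ := eigen_data hn₁ μ hu
  have ucont := hu.c2.continuous
  have ul1 := lap1_of_eigen ha ucont hua hub
  have ul2 := lap2_of_eigen hc ucont huc hud
  refine ⟨-(b / a - cb n₁ r), -(d / c - cb n₂ r), ?_, fun z => by rw [neg_neg]; exact ul1 z,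
    fun z => by rw [neg_neg]; exact ul2 z, fun p q => ?_⟩
  · have := hu.eq 0
    rw [ul1, ul2, ← add_mul] at this
    have := mul_right_cancel₀ (hu.pos 0).ne' this
    linarith
  · obtain ⟨C, hC⟩ := rank_one_pair hu hr hr1 ha hb hc hua hub huc hud 0 q
    have h1 := hC p
    have h2 := hC 0
    have hC0 : C ≠ 0 := by
      rintro rfl
      have := hu.pos (0, 0)
      rw [h2] at this; simp at this
    apply mul_left_cancel₀ hC0
    linear_combination u (p, 0) * h2 - u (0, 0) * h1
end rank

theorem line_hasDerivAt {n : ℕ} {m : WithTop ℕ∞} {w : HV n → ℝ} (hw : ContDiff ℝ m w) (hm : m ≠ 0) (p v : HV n) (t : ℝ) :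
    HasDerivAt (fun t : ℝ => w (p + t • v)) (lineDeriv ℝ w (p + t • v) v) t := by
  have h : HasDerivAt (fun s : ℝ => w (p + t • v + s • v)) (lineDeriv ℝ w (p + t • v) v) (t - t) := by
    rw [sub_self]; exact hasLineDerivAt_of_contDiff hw hm (p + t • v) v
  have h2 := h.comp_sub_const t t
  refine h2.congr_of_eventuallyEq (Eventually.of_forall fun s => ?_)
  simp only
  congr 1
  rw [add_assoc, ← add_smul]; congr 2; ring

theorem line_hasDerivAt2 {n : ℕ} {w : HV n → ℝ} (hw : ContDiff ℝ 2 w) (p v : HV n) :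
    HasDerivAt (fun t : ℝ => lineDeriv ℝ w (p + t • v) v) (dd w v p) 0 := by
  have := line_hasDerivAt (lineDeriv_contDiff (m := 2) (m' := 1) hw (by norm_num) v) (by norm_num) p v 0
  simpa [dd] using this

theorem local_min_second {H H1 : ℝ → ℝ} {h2 : ℝ} (a1 : ∀ t, HasDerivAt H (H1 t) t) (a2 : HasDerivAt H1 h2 0)
    (hm : IsLocalMin H 0) : H1 0 = 0 ∧ 0 ≤ h2 := by
  have e1 : deriv H = H1 := funext fun t => (a1 t).deriv
  have z : H1 0 = 0 := by rw [← e1]; exact hm.deriv_eq_zero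
  refine ⟨z, ?_⟩
  by_contra hneg
  push Not at hneg
  have hM : IsLocalMax H 0 := isLocalMax_of_deriv_deriv_neg (by rw [e1, a2.deriv]; exact hneg) (by rw [e1, z])
    (a1 0).continuousAt
  have hE : H =ᶠ[𝓝 0] fun _ => H 0 := by
    filter_upwards [hm, hM] with t h1 h2
    exact le_antisymm h2 h1
  have h1E : H1 =ᶠ[𝓝 0] fun _ => 0 := by
    have := hE.deriv
    rw [e1] at this
    refine this.trans (Eventually.of_forall fun t => by simp)
  have := (a2.congr_of_eventuallyEq h1E.symm).unique (hasDerivAt_const (0:ℝ) (0:ℝ))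
  linarith

theorem test_line {n : ℕ} {w : HV n → ℝ} (hw : ContDiff ℝ 2 w) {φ : HV n → ℝ} {M : ℝ} {p : HV n} 
    (hle : ∀ᶠ q in 𝓝 p, φ q ≤ M * w q) (heq : φ p = M * w p) (v : HV n) {P P1 : ℝ → ℝ} {p2 : ℝ}
    (hP : ∀ t, P t = φ (p + t • v)) (a1 : ∀ t, HasDerivAt P (P1 t) t) (a2 : HasDerivAt P1 p2 0) :
    P1 0 = M * lineDeriv ℝ w p v ∧ p2 ≤ M * dd w v p := by
  have b1 := fun t => ((line_hasDerivAt hw two_ne_zero p v t).const_mul M).fun_sub (a1 t)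
  have b2 := ((line_hasDerivAt2 hw p v).const_mul M).fun_sub a2
  have hmin : IsLocalMin (fun t : ℝ => M * w (p + t • v) - P t) 0 := by
    have ht : Tendsto (fun t : ℝ => p + t • v) (𝓝 0) (𝓝 p) := by
      have : Continuous (fun t : ℝ => p + t • v) := by fun_prop
      simpa using this.tendsto 0
    have := ht.eventually hle
    filter_upwards [this] with t ht
    simp only [zero_smul, add_zero, hP]
    linarith
  obtain ⟨c1, c2⟩ := local_min_second b1 b2 hmin
  simp only [zero_smul, add_zero] at c1
  exact ⟨by linarith, by linarith⟩

theorem eig_bound_aux {n : ℕ} {μ : ℝ} {w : HV n → ℝ} (hw : ContDiff ℝ 2 w) (hpos : ∀ p, 0 < w p)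
    (heq : ∀ p, lap n w p = -μ * w p) {ε R : ℝ} (hε : 0 < ε) (hR : 0 < R) :
    μ ≤ (n:ℝ) ^ 2 / 4 + ε ^ 2 + exp (π / ε) * ((8 + 4 * n) ^ 2 / (32 * R ^ 2)) := by
  set f : ℝ → ℝ := fun s => exp (n / 2 * s) * cos (ε * s) with fdef
  set φ : HV n → ℝ := fun p => f p.2 * (R ^ 2 - ‖p.1‖ ^ 2) ^ 2 with φdef
  have φc : Continuous φ := by fun_prop
  set b := π / (2 * ε) with bdef
  have bpos : 0 < b := by positivity
  have hεb : ε * b = π / 2 := by rw [bdef]; field_simp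
  set S : Set (HV n) := Metric.closedBall 0 R ×ˢ Icc (-b) b with Sdef
  have hS : IsCompact S := (isCompact_closedBall _ _).prod isCompact_Icc
  have h0S : (0 : HV n) ∈ S := by
    refine ⟨by simp [hR.le], by simp [bpos.le]⟩
  obtain ⟨p, hpS, hmax⟩ := hS.exists_isMaxOn ⟨0, h0S⟩ (f := fun p => φ p / w p)
    ((φc.div hw.continuous (fun p => (hpos p).ne')).continuousOn)
  set M := φ p / w p with Mdef
  have φ0 : 0 < φ 0 := by simp [φdef, fdef]; positivity
  have hM : 0 < M := lt_of_lt_of_le (div_pos φ0 (hpos 0)) (hmax h0S)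
  have hpe : φ p = M * w p := by rw [Mdef, div_mul_cancel₀ _ (hpos p).ne']
  have hle : ∀ q ∈ S, φ q ≤ M * w q := fun q hq => by
    have := hmax hq
    exact (div_le_iff₀ (hpos q)).1 this
  have φp : 0 < φ p := by rw [hpe]; exact mul_pos hM (hpos p)
  obtain ⟨hx, hs1, hs2⟩ := hpS
  have hx' : ‖p.1‖ ≤ R := by simpa using hx
  set m := R ^ 2 - ‖p.1‖ ^ 2 with mdef
  have hm0 : m ≠ 0 := by intro h; simp [φdef, ← mdef, h] at φp
  have hxlt : ‖p.1‖ < R := by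
    refine lt_of_le_of_ne hx' fun h => hm0 ?_
    rw [mdef, h]; ring
  have hcos : cos (ε * p.2) ≠ 0 := by
    intro h; simp [φdef, fdef, h] at φp
  have hs1' : -b < p.2 := by
    refine lt_of_le_of_ne hs1 fun h => hcos ?_
    rw [← h, mul_neg, hεb, cos_neg, cos_pi_div_two]
  have hs2' : p.2 < b := by
    refine lt_of_le_of_ne hs2 fun h => hcos ?_
    rw [h, hεb, cos_pi_div_two]
  have hnhds : S ∈ 𝓝 p := by
    apply prod_mem_nhds
    · exact Metric.closedBall_mem_nhds_of_mem (by simpa using hxlt)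
    · exact Icc_mem_nhds hs1' hs2'
  have hev : ∀ᶠ q in 𝓝 p, φ q ≤ M * w q := by
    filter_upwards [hnhds] with q hq using hle q hq
  have fpos : 0 < f p.2 := by
    have : 0 < m ^ 2 := by positivity
    exact (pos_iff_pos_of_mul_pos φp).2 this
  -- x directions
  have dx : ∀ i, f p.2 * (8 * (p.1 i) ^ 2 - 4 * m) ≤ M * dd w (exv i) p := by
    intro i
    refine (test_line hw hev hpe (exv i) (P := fun t => f p.2 * (m - 2 * t * p.1 i - t ^ 2) ^ 2)
      (P1 := fun t => f p.2 * (2 * (m - 2 * t * p.1 i - t ^ 2) * (- 2 * p.1 i - 2 * t))) ?_ ?_ ?_).2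
    · intro t
      have : ‖p.1 + t • EuclideanSpace.single i (1:ℝ)‖ ^ 2 = ‖p.1‖ ^ 2 + 2 * t * p.1 i + t ^ 2 := by
        rw [norm_add_sq_real, norm_smul, inner_smul_right, EuclideanSpace.inner_single_right]
        simp
        ring
      simp only [φdef, exv, Prod.snd_add, Prod.smul_snd, smul_zero, add_zero, Prod.fst_add, Prod.smul_fst, this, mdef]
      ring
    · intro t
      have h : HasDerivAt (fun t : ℝ => m - 2 * t * p.1 i - t ^ 2) (- 2 * p.1 i - 2 * t) t := by
        have := (((hasDerivAt_id t).const_mul 2).mul_const (p.1 i)).const_sub m |>.fun_sub ((hasDerivAt_id t).fun_pow 2)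
        refine this.congr_deriv ?_
        simp
      refine ((h.fun_pow 2).const_mul (f p.2)).congr_deriv ?_
      simp
    · have h : HasDerivAt (fun t : ℝ => m - 2 * t * p.1 i - t ^ 2) (- 2 * p.1 i - 2 * 0) 0 := by
        have := (((hasDerivAt_id (0:ℝ)).const_mul 2).mul_const (p.1 i)).const_sub m |>.fun_sub ((hasDerivAt_id (0:ℝ)).fun_pow 2)
        refine this.congr_deriv ?_
        simp
      have h' : HasDerivAt (fun t : ℝ => - 2 * p.1 i - 2 * t) (-2) 0 := by
        refine (((hasDerivAt_id (0:ℝ)).const_mul 2).const_sub (-2 * p.1 i)).congr_deriv (by simp)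
      refine (((h.const_mul 2).fun_mul h').const_mul (f p.2)).congr_deriv ?_
      simp only [Nat.cast_ofNat]; ring
  -- s direction
  have ef : ∀ t, HasDerivAt f (n / 2 * f t - ε * (exp (n / 2 * t) * sin (ε * t))) t := by
    intro t
    have h1 := ((hasDerivAt_id t).const_mul ((n:ℝ) / 2)).exp
    have h2 := ((hasDerivAt_id t).const_mul ε).cos
    refine (h1.fun_mul h2).congr_deriv ?_
    simp [fdef]; ring
  have eg : ∀ t, HasDerivAt (fun t => exp (n / 2 * t) * sin (ε * t)) (n / 2 * (exp (n / 2 * t) * sin (ε * t)) + ε * f t) t := by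
    intro t
    have h1 := ((hasDerivAt_id t).const_mul ((n:ℝ) / 2)).exp
    have h2 := ((hasDerivAt_id t).const_mul ε).sin
    refine (h1.fun_mul h2).congr_deriv ?_
    simp [fdef]; ring
  set g : ℝ → ℝ := fun t => exp (n / 2 * t) * sin (ε * t) with gdef
  obtain ⟨ds1, ds2⟩ := test_line hw hev hpe eyv (P := fun t => f (p.2 + t) * m ^ 2)
    (P1 := fun t => (n / 2 * f (p.2 + t) - ε * g (p.2 + t)) * m ^ 2)
    (p2 := (n / 2 * (n / 2 * f p.2 - ε * g p.2) - ε * (n / 2 * g p.2 + ε * f p.2)) * m ^ 2)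
    (by
      intro t
      simp [φdef, eyv, mdef])
    (by
      intro t
      exact ((ef (p.2 + t)).comp_const_add p.2 t).mul_const _)
    (by
      have h1 := (ef (p.2 + 0)).comp_const_add p.2 0
      have h2 := (eg (p.2 + 0)).comp_const_add p.2 0
      refine (((h1.const_mul ((n:ℝ) / 2)).fun_sub (h2.const_mul ε)).mul_const (m ^ 2)).congr_deriv ?_
      simp only [add_zero, gdef])
  simp only [add_zero] at ds1
  have hl := heq p
  have hsum : f p.2 * (8 * ‖p.1‖ ^ 2 - 4 * n * m) ≤ M * ∑ i, dd w (exv i) p := by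
    have : f p.2 * (8 * ‖p.1‖ ^ 2 - 4 * n * m) = ∑ i, f p.2 * (8 * (p.1 i) ^ 2 - 4 * m) := by
      rw [← Finset.mul_sum, Finset.sum_sub_distrib, ← Finset.mul_sum, EuclideanSpace.real_norm_sq_eq]
      simp only [Finset.sum_const, Finset.card_univ, Fintype.card_fin, nsmul_eq_mul]; ring
    rw [this, Finset.mul_sum]
    exact Finset.sum_le_sum fun i _ => dx i
  unfold lap at hl
  have hφe : φ p = f p.2 * m ^ 2 := rfl
  generalize ∑ i, dd w (exv i) p = Sx at *
  generalize dd w eyv p = Dy at *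
  generalize lineDeriv ℝ w p eyv = dy at *
  generalize f p.2 = fp at *
  generalize g p.2 = gp at *
  have hE := exp_pos (2 * p.2)
  have hE2 : exp (2 * p.2) ≤ exp (π / ε) := by
    apply exp_le_exp.2
    have : π / ε = 2 * b := by rw [bdef]; field_simp
    rw [this]; linarith
  generalize exp (2 * p.2) = E at *
  -- assemble
  have hnorm : ‖p.1‖ ^ 2 = R ^ 2 - m := by rw [mdef]; ring
  rw [hnorm] at hsum
  set lam : ℝ := (8 + 4 * n) ^ 2 / (32 * R ^ 2) with lamdef
  have hlam0 : 0 ≤ lam := by positivity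
  have hquad : -(lam * m ^ 2) ≤ 8 * (R ^ 2 - m) - 4 * n * m := by
    have hsq : 8 * (R ^ 2 - m) - 4 * n * m + lam * m ^ 2 = 8 * (R - (8 + 4 * n) * m / (16 * R)) ^ 2 := by
      rw [lamdef]; field_simp; ring
    have := mul_nonneg (by norm_num : (0:ℝ) ≤ 8) (sq_nonneg (R - (8 + 4 * n) * m / (16 * R)))
    linarith
  have k1 : -(E * fp * lam * m ^ 2) ≤ M * (E * Sx) := by
    have t1 := mul_le_mul_of_nonneg_left hquad fpos.le
    have t2 := mul_le_mul_of_nonneg_left (t1.trans hsum) hE.le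
    calc _ = E * (fp * -(lam * m ^ 2)) := by ring
      _ ≤ _ := t2
      _ = _ := by ring
  have k2 : M * (E * Sx) + M * Dy - n * (M * dy) = -μ * (fp * m ^ 2) := by
    rw [← hφe, hpe]; linear_combination M * hl
  rw [← ds1] at k2
  have hfm : 0 < fp * m ^ 2 := by rw [← hφe]; exact φp
  have k3 : μ * (fp * m ^ 2) ≤ ((n:ℝ) ^ 2 / 4 + ε ^ 2 + E * lam) * (fp * m ^ 2) := by
    linarith
  have k4 := le_of_mul_le_mul_right k3 hfm
  have k5 := mul_le_mul_of_nonneg_right hE2 hlam0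
  linarith

theorem eig_bound {n : ℕ} {μ : ℝ} {w : HV n → ℝ} (hw : ContDiff ℝ 2 w) (hpos : ∀ p, 0 < w p)
    (heq : ∀ p, lap n w p = -μ * w p) : μ ≤ (n:ℝ) ^ 2 / 4 := by
  by_contra hcon
  push Not at hcon
  set η := μ - (n:ℝ) ^ 2 / 4 with hη
  have η0 : 0 < η := by rw [hη]; linarith
  set ε := sqrt (η / 2) with hε
  have ε0 : 0 < ε := sqrt_pos.2 (by positivity)
  have ε2 : ε ^ 2 = η / 2 := sq_sqrt (by positivity)
  set Y := exp (π / ε) * (8 + 4 * (n:ℝ)) ^ 2 / 32 with hY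
  have Y0 : 0 ≤ Y := by positivity
  set X := 2 * Y / η with hX
  have X0 : 0 ≤ X := by positivity
  have h := eig_bound_aux hw hpos heq ε0 (R := X + 1) (by positivity)
  have e : exp (π / ε) * ((8 + 4 * (n:ℝ)) ^ 2 / (32 * (X + 1) ^ 2)) = Y / (X + 1) ^ 2 := by
    rw [hY]; field_simp
  rw [e, ε2] at h
  have : Y / (X + 1) ^ 2 < η / 2 := by
    rw [div_lt_iff₀ (by positivity)]
    have e2 : Y = η / 2 * X := by rw [hX]; field_simp
    rw [e2]
    apply mul_lt_mul_of_pos_left _ (by positivity)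
    nlinarith
  linarith

theorem hypLap_eq {n : ℕ} {w : EuclideanSpace ℝ (Fin n) → ℝ → ℝ} {W : HV n → ℝ} (hW : ContDiff ℝ 2 W)
    (h : ∀ x y, 0 < y → w x y = W (x, log y)) (x : EuclideanSpace ℝ (Fin n)) {y : ℝ} (hy : 0 < y) :
    hypLap n w x y = lap n W (x, log y) := by
  have hx : lapX w x y = ∑ i, dd W (exv i) (x, log y) := by
    unfold lapX
    refine Finset.sum_congr rfl fun i _ => ?_
    have e : (fun t : ℝ => w (x + t • EuclideanSpace.single i (1:ℝ)) y) = fun t : ℝ => W ((x, log y) + t • exv i) := by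
      ext t
      rw [h _ _ hy]
      congr 1
      simp [exv]
    rw [e, iteratedDeriv_succ, iteratedDeriv_one,
      (funext fun t => (line_hasDerivAt hW two_ne_zero (x, log y) (exv i) t).deriv : deriv _ = _)]
    exact (line_hasDerivAt2 hW _ _).deriv
  have h1 : ∀ s : ℝ, HasDerivAt (fun s : ℝ => W (x, s)) (lineDeriv ℝ W (x, s) eyv) s := by
    intro s
    have := line_hasDerivAt hW two_ne_zero (x, (0:ℝ)) eyv s
    simpa [eyv] using this
  have h2 : ∀ s : ℝ, HasDerivAt (fun s : ℝ => lineDeriv ℝ W (x, s) eyv) (dd W eyv (x, s)) s := by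
    intro s
    have := line_hasDerivAt (lineDeriv_contDiff (m := 2) (m' := 1) hW (by norm_num) eyv) (by norm_num) (x, (0:ℝ)) eyv s
    simpa [eyv, dd] using this
  have d1 : ∀ y : ℝ, 0 < y → HasDerivAt (w x) (lineDeriv ℝ W (x, log y) eyv * y⁻¹) y := by
    intro y hy
    have := (h1 (log y)).comp y (hasDerivAt_log hy.ne')
    refine this.congr_of_eventuallyEq ?_
    filter_upwards [lt_mem_nhds hy] with z hz
    exact h x z hz
  have d2 : HasDerivAt (deriv (w x)) (dd W eyv (x, log y) * y⁻¹ * y⁻¹ + lineDeriv ℝ W (x, log y) eyv * (-(y ^ 2)⁻¹)) y := by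
    have := ((h2 (log y)).comp y (hasDerivAt_log hy.ne')).fun_mul (hasDerivAt_inv hy.ne')
    refine this.congr_of_eventuallyEq ?_
    filter_upwards [lt_mem_nhds hy] with z hz
    exact (d1 z hz).deriv
  unfold hypLap lap
  rw [hx, iteratedDeriv_succ, iteratedDeriv_one, d2.deriv, (d1 y hy).deriv]
  have e2 : exp (2 * (x, log y).2) = y ^ 2 := by
    change exp (2 * log y) = _
    rw [two_mul, exp_add, exp_log hy]; ring
  rw [e2]
  generalize (∑ i, dd W (exv i) (x, log y)) = A
  generalize dd W eyv (x, log y) = B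
  generalize lineDeriv ℝ W (x, log y) eyv = D
  field_simp
  ring

theorem toLog_contDiff {n : ℕ} {w : EuclideanSpace ℝ (Fin n) → ℝ → ℝ}
    (hw : ContDiffOn ℝ 2 (fun p : EuclideanSpace ℝ (Fin n) × ℝ => w p.1 p.2)
      {p : EuclideanSpace ℝ (Fin n) × ℝ | 0 < p.2}) : ContDiff ℝ 2 (fun p : HV n => w p.1 (exp p.2)) :=
  hw.comp_contDiff (f := fun p : HV n => (p.1, exp p.2))
    (contDiff_fst.prodMk contDiff_snd.exp) (fun p => exp_pos p.2)

theorem logmap_contDiffOn {n : ℕ} : ContDiffOn ℝ 2 (fun p : EuclideanSpace ℝ (Fin n) × ℝ => ((p.1, log p.2) : HV n))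
      {p : EuclideanSpace ℝ (Fin n) × ℝ | 0 < p.2} :=
  contDiff_fst.contDiffOn.prodMk (contDiff_snd.contDiffOn.log fun p hp => (ne_of_gt hp))

theorem minimalHarmonic_of_log {n : ℕ} {μ : ℝ} {U : HV n → ℝ} (hU : ContDiff ℝ 2 U) (hpos : ∀ p, 0 < U p)
    (heq : ∀ p, lap n U p = -μ * U p)
    (hmin : ∀ W : HV n → ℝ, ContDiff ℝ 2 W → (∀ p, lap n W p = -μ * W p) → (∀ p, 0 ≤ W p ∧ W p ≤ U p) →
      ∃ C : ℝ, ∀ p, W p = C * U p) :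
    MinimalHarmonic n μ (fun x y => U (x, log y)) := by
  refine ⟨fun x y _ => hpos _, hU.comp_contDiffOn logmap_contDiffOn, fun x y hy => ?_, fun v hv hve hvb => ?_⟩
  · rw [hypLap_eq hU (fun _ _ _ => rfl) x hy, heq]; ring
  · have hW := toLog_contDiff hv
    have hvW : ∀ x y, 0 < y → v x y = (fun p : HV n => v p.1 (exp p.2)) (x, log y) := by
      intro x y hy
      simp only [exp_log hy]
    obtain ⟨C, hC⟩ := hmin (fun p => v p.1 (exp p.2)) hW
      (fun p => by
        have := hve p.1 (exp p.2) (exp_pos _)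
        rw [hypLap_eq hW hvW p.1 (exp_pos _), log_exp] at this
        linarith)
      (fun p => by
        have := hvb p.1 (exp p.2) (exp_pos _)
        simp only [log_exp] at this
        exact this)
    refine ⟨C, ?_, fun x y hy => ?_⟩
    · have h1 := hC 0
      have h2 := hvb 0 1 one_pos
      have h3 := hpos 0
      simp only [Prod.fst_zero, Prod.snd_zero, exp_zero] at h1
      simp only [h1, log_one] at h2
      change 0 ≤ C * U 0 ∧ C * U 0 ≤ U 0 at h2
      constructor
      · exact nonneg_of_mul_nonneg_left h2.1 h3
      · by_contra hc
        push Not at hc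
        have := (mul_lt_mul_iff_left₀ h3).2 hc
        linarith [h2.2]
    · rw [hvW x y hy]
      exact hC (x, log y)

/-- splitting theorem. A positive minimal C² solution of
`-(Δ₁+Δ₂)u = μ u` on `ℍ^{n₁+1} × ℍ^{n₂+1}` splits as a product `u₁(x₁,y₁)·u₂(x₂,y₂)`
of positive minimal solutions with `μ₁ + μ₂ = μ`, `μᵢ ≤ nᵢ²/4`. -/
theorem minimal_harmonic_splits
    (n₁ n₂ : ℕ) (hn₁ : 1 ≤ n₁) (hn₂ : 1 ≤ n₂) (μ : ℝ)
    (u : EuclideanSpace ℝ (Fin n₁) → ℝ → EuclideanSpace ℝ (Fin n₂) → ℝ → ℝ)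
    (hupos : ∀ x₁, ∀ y₁ : ℝ, 0 < y₁ → ∀ x₂, ∀ y₂ : ℝ, 0 < y₂ → 0 < u x₁ y₁ x₂ y₂)
    (huC2 : ContDiffOn ℝ 2
      (fun p : (EuclideanSpace ℝ (Fin n₁) × ℝ) × (EuclideanSpace ℝ (Fin n₂) × ℝ) =>
        u p.1.1 p.1.2 p.2.1 p.2.2)
      {p : (EuclideanSpace ℝ (Fin n₁) × ℝ) × (EuclideanSpace ℝ (Fin n₂) × ℝ) |
        0 < p.1.2 ∧ 0 < p.2.2})
    (hueq : ∀ x₁, ∀ y₁ : ℝ, 0 < y₁ → ∀ x₂, ∀ y₂ : ℝ, 0 < y₂ →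
      -(hypLap1 n₁ n₂ u x₁ y₁ x₂ y₂ + hypLap2 n₁ n₂ u x₁ y₁ x₂ y₂) = μ * u x₁ y₁ x₂ y₂)
    (humin : ∀ v : EuclideanSpace ℝ (Fin n₁) → ℝ → EuclideanSpace ℝ (Fin n₂) → ℝ → ℝ,
      ContDiffOn ℝ 2
        (fun p : (EuclideanSpace ℝ (Fin n₁) × ℝ) × (EuclideanSpace ℝ (Fin n₂) × ℝ) =>
          v p.1.1 p.1.2 p.2.1 p.2.2)
        {p : (EuclideanSpace ℝ (Fin n₁) × ℝ) × (EuclideanSpace ℝ (Fin n₂) × ℝ) |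
          0 < p.1.2 ∧ 0 < p.2.2} →
      (∀ x₁, ∀ y₁ : ℝ, 0 < y₁ → ∀ x₂, ∀ y₂ : ℝ, 0 < y₂ →
        -(hypLap1 n₁ n₂ v x₁ y₁ x₂ y₂ + hypLap2 n₁ n₂ v x₁ y₁ x₂ y₂) = μ * v x₁ y₁ x₂ y₂) →
      (∀ x₁, ∀ y₁ : ℝ, 0 < y₁ → ∀ x₂, ∀ y₂ : ℝ, 0 < y₂ →
        0 ≤ v x₁ y₁ x₂ y₂ ∧ v x₁ y₁ x₂ y₂ ≤ u x₁ y₁ x₂ y₂) →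
      ∃ C : ℝ, C ∈ Set.Icc (0:ℝ) 1 ∧
        ∀ x₁, ∀ y₁ : ℝ, 0 < y₁ → ∀ x₂, ∀ y₂ : ℝ, 0 < y₂ →
          v x₁ y₁ x₂ y₂ = C * u x₁ y₁ x₂ y₂) :
    ∃ (μ₁ μ₂ : ℝ) (u₁ : EuclideanSpace ℝ (Fin n₁) → ℝ → ℝ)
      (u₂ : EuclideanSpace ℝ (Fin n₂) → ℝ → ℝ),
      μ₁ + μ₂ = μ ∧ μ₁ ≤ (n₁ : ℝ)^2/4 ∧ μ₂ ≤ (n₂ : ℝ)^2/4 ∧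
      MinimalHarmonic n₁ μ₁ u₁ ∧ MinimalHarmonic n₂ μ₂ u₂ ∧
      ∀ x₁, ∀ y₁ : ℝ, 0 < y₁ → ∀ x₂, ∀ y₂ : ℝ, 0 < y₂ →
        u x₁ y₁ x₂ y₂ = u₁ x₁ y₁ * u₂ x₂ y₂ := by
  set U : HV n₁ × HV n₂ → ℝ := fun z => u z.1.1 (exp z.1.2) z.2.1 (exp z.2.2) with Udef
  have Uc : ContDiff ℝ 2 U :=
    huC2.comp_contDiff (f := fun z : HV n₁ × HV n₂ => (((z.1.1, exp z.1.2) : HV n₁), ((z.2.1, exp z.2.2) : HV n₂)))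
      ((contDiff_fst.fst.prodMk contDiff_fst.snd.exp).prodMk (contDiff_snd.fst.prodMk contDiff_snd.snd.exp))
      (fun z => ⟨exp_pos _, exp_pos _⟩)
  have Up : ∀ z, 0 < U z := fun z => hupos _ _ (exp_pos _) _ _ (exp_pos _)
  have slice1 : ∀ {V : HV n₁ × HV n₂ → ℝ}, ContDiff ℝ 2 V → ∀ q, ContDiff ℝ 2 (fun p => V (p, q)) :=
    fun hV q => hV.comp (contDiff_id.prodMk contDiff_const)
  have slice2 : ∀ {V : HV n₁ × HV n₂ → ℝ}, ContDiff ℝ 2 V → ∀ p, ContDiff ℝ 2 (fun q => V (p, q)) :=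
    fun hV q => hV.comp (contDiff_const.prodMk contDiff_id)
  have hlap : ∀ (v : EuclideanSpace ℝ (Fin n₁) → ℝ → EuclideanSpace ℝ (Fin n₂) → ℝ → ℝ) (V : HV n₁ × HV n₂ → ℝ),
      ContDiff ℝ 2 V → (∀ x₁, ∀ y₁ : ℝ, 0 < y₁ → ∀ x₂, ∀ y₂ : ℝ, 0 < y₂ → v x₁ y₁ x₂ y₂ = V ((x₁, log y₁), (x₂, log y₂))) →
      ∀ x₁, ∀ y₁ : ℝ, 0 < y₁ → ∀ x₂, ∀ y₂ : ℝ, 0 < y₂ →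
        hypLap1 n₁ n₂ v x₁ y₁ x₂ y₂ + hypLap2 n₁ n₂ v x₁ y₁ x₂ y₂ =
          lap1 V ((x₁, log y₁), (x₂, log y₂)) + lap2 V ((x₁, log y₁), (x₂, log y₂)) := by
    intro v V hV hvV x₁ y₁ h₁ x₂ y₂ h₂
    unfold hypLap1 hypLap2 lap1 lap2
    rw [hypLap_eq (slice1 hV (x₂, log y₂)) (fun x y hy => hvV x y hy x₂ y₂ h₂) x₁ h₁,
      hypLap_eq (slice2 hV (x₁, log y₁)) (fun x y hy => hvV x₁ y₁ h₁ x y hy) x₂ h₂]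
  have uU : ∀ x₁, ∀ y₁ : ℝ, 0 < y₁ → ∀ x₂, ∀ y₂ : ℝ, 0 < y₂ → u x₁ y₁ x₂ y₂ = U ((x₁, log y₁), (x₂, log y₂)) := by
    intro x₁ y₁ h₁ x₂ y₂ h₂
    simp only [Udef, exp_log h₁, exp_log h₂]
  have hmin : MinU μ U := by
    refine ⟨Uc, Up, fun z => ?_, fun V hV hVe hVb => ?_⟩
    · have := hueq z.1.1 (exp z.1.2) (exp_pos _) z.2.1 (exp z.2.2) (exp_pos _)
      rw [hlap u U Uc uU _ _ (exp_pos _) _ _ (exp_pos _)] at this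
      simp only [log_exp] at this
      change -(lap1 U z + lap2 U z) = μ * U z at this
      linarith
    · obtain ⟨C, -, hC⟩ := humin (fun x₁ y₁ x₂ y₂ => V ((x₁, log y₁), (x₂, log y₂)))
        (by
          refine hV.comp_contDiffOn (f := fun p : (EuclideanSpace ℝ (Fin n₁) × ℝ) × (EuclideanSpace ℝ (Fin n₂) × ℝ) =>
            (((p.1.1, log p.1.2) : HV n₁), ((p.2.1, log p.2.2) : HV n₂))) ?_
          exact (contDiff_fst.fst.contDiffOn.prodMk (contDiff_fst.snd.contDiffOn.log fun p hp => ne_of_gt hp.1)).prodMk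
            (contDiff_snd.fst.contDiffOn.prodMk (contDiff_snd.snd.contDiffOn.log fun p hp => ne_of_gt hp.2)))
        (fun x₁ y₁ h₁ x₂ y₂ h₂ => by
          rw [hlap _ V hV (fun _ _ _ _ _ _ => rfl) x₁ y₁ h₁ x₂ y₂ h₂, hVe]; ring)
        (fun x₁ y₁ h₁ x₂ y₂ h₂ => by
          rw [uU x₁ y₁ h₁ x₂ y₂ h₂]; exact hVb _)
      refine ⟨C, fun z => ?_⟩
      have := hC z.1.1 (exp z.1.2) (exp_pos _) z.2.1 (exp z.2.2) (exp_pos _)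
      simp only [log_exp] at this
      exact this
  obtain ⟨μ₁, μ₂, hμ, hl1, hl2, hsplit⟩ := split_log hn₁ hmin
  have U00 := Up (0, 0)
  set κ : ℝ := (U (0, 0))⁻¹ with κdef
  have κpos : 0 < κ := inv_pos.2 U00
  have hsp : ∀ p q, U (p, q) = U (p, 0) * (U (0, q) * κ) := by
    intro p q
    rw [← mul_assoc, ← hsplit, κdef, mul_assoc, mul_inv_cancel₀ U00.ne', mul_one]
  have e1 : ∀ p, lap n₁ (fun p => U (p, 0)) p = -μ₁ * U (p, 0) := fun p => hl1 (p, 0)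
  have e2 : ∀ q, lap n₂ (fun q => U (0, q) * κ) q = -μ₂ * (U (0, q) * κ) := fun q => by
    rw [lap_mul_const (fun q => U (0, q))]
    have : lap n₂ (fun q => U (0, q)) q = -μ₂ * U (0, q) := hl2 (0, q)
    rw [this]; ring
  have c1 := slice1 Uc 0
  have c2 : ContDiff ℝ 2 (fun q => U (0, q) * κ) := (slice2 Uc 0).mul contDiff_const
  have p2 : ∀ q, 0 < U (0, q) * κ := fun q => mul_pos (Up _) κpos
  -- products of solutions are solutions
  have prodmin : ∀ (W₁ : HV n₁ → ℝ) (W₂ : HV n₂ → ℝ), ContDiff ℝ 2 W₁ → ContDiff ℝ 2 W₂ →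
      (∀ p, lap n₁ W₁ p = -μ₁ * W₁ p) → (∀ q, lap n₂ W₂ q = -μ₂ * W₂ q) →
      (∀ p q, 0 ≤ W₁ p * W₂ q ∧ W₁ p * W₂ q ≤ U (p, 0) * (U (0, q) * κ)) →
      ∃ C : ℝ, ∀ p q, W₁ p * W₂ q = C * (U (p, 0) * (U (0, q) * κ)) := by
    intro W₁ W₂ hW₁ hW₂ hE₁ hE₂ hb
    obtain ⟨C, hC⟩ := hmin.min (fun z => W₁ z.1 * W₂ z.2)
      ((hW₁.comp contDiff_fst).mul (hW₂.comp contDiff_snd))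
      (fun z => by
        unfold lap1 lap2
        simp only
        rw [lap_mul_const W₁]
        have : (fun q => W₁ z.1 * W₂ q) = fun q => W₂ q * W₁ z.1 := by ext; ring
        rw [this, lap_mul_const W₂, hE₁, hE₂, ← hμ]; ring)
      (fun z => by
        have := hb z.1 z.2
        rw [← hsp] at this
        exact this)
    refine ⟨C, fun p q => ?_⟩
    rw [← hsp]
    exact hC (p, q)
  refine ⟨μ₁, μ₂, fun x y => U ((x, log y), 0), fun x y => U (0, (x, log y)) * κ, hμ,
    eig_bound c1 (fun p => Up _) e1, eig_bound c2 p2 e2, ?_, ?_, ?_⟩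
  · refine minimalHarmonic_of_log (U := fun p => U (p, 0)) c1 (fun p => Up _) e1 fun W hW hWe hWb => ?_
    obtain ⟨C, hC⟩ := prodmin W (fun q => U (0, q) * κ) hW c2 hWe e2 (fun p q =>
      ⟨mul_nonneg (hWb p).1 (p2 q).le, mul_le_mul_of_nonneg_right (hWb p).2 (p2 q).le⟩)
    refine ⟨C, fun p => ?_⟩
    have := hC p 0
    apply mul_right_cancel₀ (p2 0).ne'
    linear_combination this
  · refine minimalHarmonic_of_log (U := fun q => U (0, q) * κ) c2 p2 e2 fun W hW hWe hWb => ?_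
    obtain ⟨C, hC⟩ := prodmin (fun p => U (p, 0)) W c1 hW e1 hWe (fun p q =>
      ⟨mul_nonneg (Up _).le (hWb q).1, mul_le_mul_of_nonneg_left (hWb q).2 (Up _).le⟩)
    refine ⟨C, fun q => ?_⟩
    have := hC 0 q
    apply mul_left_cancel₀ (Up (0, 0)).ne'
    linear_combination this
  · intro x₁ y₁ h₁ x₂ y₂ h₂
    rw [uU x₁ y₁ h₁ x₂ y₂ h₂]
    exact hsp _ _
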